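/- Assume the stated hypotheses on Ω and u, and let a ∈ ∂Ω be a GBU point. Then the normal derivative blows up in the strong sense: for every K > 0 there exists η > 0 such that u_ν(x,t) = ∇u(x,t)·ν(x) ≥ K for every x ∈ Ω_{δ₀} with |x − a| < η and every t ∈ (T − η, T). -/

import Mathlib

/-! Rescale a time slice `v = u(·, t)` at a boundary point `b` to `l ^ (β - 1) * v (b + l • x)`.
As `l → 0` these functions almost solve `Δw + ‖∇w‖ ^ p = 0` on almost a half space, vanish on its
boundary and have gradient at most `C * dist ^ (-β)`, so comparison on slabs makes them nearly
functions of the distance to the boundary. For a small slope `q` this leaves, at each scale `l`,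
few possibilities on the normal at `b`: if `v ≤ q * l ^ (1 - β)` at distance `l`, the gradient
nearer to `b` is at most `K * l ^ (-β)`; in the case of equality the normal derivative there is at
least `(3 / 4) * q * l ^ (-β)`; and if `v` is above the profile at distance `R * l`, the normal
derivative at distance `l` is at least `l ^ (-β) / R`. Gradient blow-up at `a` excludes the first
case for `u(·, T)` on the normal at `a` at every fixed scale. By continuity the profile at nearby
points and times is above `q * l ^ (1 - β)` at a fixed small scale `L`; so either it still is near
the distance considered, or it crosses at some `l ≤ L`; both make the normal derivative large. -/

open Set Metric Filter RealInnerProductSpace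

noncomputable section

/-- A set `Ω ⊆ ℝⁿ` has boundary of class `C²`: near each boundary point, `Ω` is the strict
sublevel set of a `C²` function with nonvanishing gradient (equivalently, after a rigid motion,
the boundary is locally the graph of a `C²` function with `Ω` strictly on one side). -/
def IsC2Boundary {n : ℕ} (Ω : Set (EuclideanSpace ℝ (Fin n))) : Prop :=
  ∀ x ∈ frontier Ω, ∃ f : EuclideanSpace ℝ (Fin n) → ℝ, ∃ U ∈ nhds x,
    ContDiffOn ℝ 2 f U ∧ (∀ y ∈ U, fderiv ℝ f y ≠ 0) ∧
    U ∩ Ω = U ∩ {y | f y < 0} ∧ U ∩ frontier Ω = U ∩ {y | f y = 0}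

open scoped Topology

section RealAnalysis

lemma deriv_nonpos_of_eventually_le_right {f : ℝ → ℝ} {f' a : ℝ} (hf : HasDerivAt f f' a)
    (h : ∀ᶠ s in 𝓝[>] 0, f (a + s) ≤ f a) : f' ≤ 0 := by
  refine le_of_tendsto hf.tendsto_slope_zero_right ?_
  filter_upwards [h, self_mem_nhdsWithin] with s hs hs0
  exact mul_nonpos_of_nonneg_of_nonpos (inv_nonneg.2 (mem_Ioi.1 hs0).le) (sub_nonpos.2 hs)

lemma abs_rpow_sub_rpow_le {p Γ a b : ℝ} (hp : 1 ≤ p) (ha : a ∈ Icc 0 Γ) (hb : b ∈ Icc 0 Γ) :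
    |a ^ p - b ^ p| ≤ p * Γ ^ (p - 1) * |a - b| := by
  have hderiv : ∀ s ∈ Icc 0 Γ,
      HasDerivWithinAt (fun s : ℝ => s ^ p) (p * s ^ (p - 1)) (Icc 0 Γ) s :=
    fun s _ => (Real.hasDerivAt_rpow_const (Or.inr hp)).hasDerivWithinAt
  refine (convex_Icc 0 Γ).norm_image_sub_le_of_norm_hasDerivWithin_le hderiv (fun s hs => ?_) hb ha
  have hs0 : 0 ≤ s ^ (p - 1) := Real.rpow_nonneg hs.1 _
  rw [Real.norm_of_nonneg (by positivity)]
  have := Real.rpow_le_rpow hs.1 hs.2 (by linarith : 0 ≤ p - 1)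
  gcongr

lemma second_deriv_nonpos_of_isLocalMax {φ φ' : ℝ → ℝ} {c a : ℝ}
    (hφ : ∀ᶠ s in 𝓝 a, HasDerivAt φ (φ' s) s) (hφ' : HasDerivAt φ' c a) (hmax : IsLocalMax φ a) :
    c ≤ 0 := by
  by_contra! hc
  have hderiv : deriv φ =ᶠ[𝓝 a] φ' := hφ.mono fun s h => h.deriv
  have hderiv₂ : deriv (deriv φ) a = c := hderiv.deriv_eq.trans hφ'.deriv
  have hmin : IsLocalMin φ a := isLocalMin_of_deriv_deriv_pos (hderiv₂ ▸ hc) hmax.deriv_eq_zero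
    hφ.self_of_nhds.continuousAt
  have hconst : φ =ᶠ[𝓝 a] fun _ => φ a := by
    filter_upwards [hmax, hmin] with s h₁ h₂ using le_antisymm h₁ h₂
  have hzero : deriv φ =ᶠ[𝓝 a] fun _ => 0 := by simpa using hconst.deriv
  have : c = 0 := by simpa [hderiv₂] using hzero.deriv_eq
  exact hc.ne' this

end RealAnalysis

section Trace

variable {E : Type*} [NormedAddCommGroup E] [InnerProductSpace ℝ E]

lemma abs_real_inner_le_norm_of_norm_eq_one {e : E} (he : ‖e‖ = 1) (x : E) : |⟪e, x⟫| ≤ ‖x‖ := by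
  simpa [he] using abs_real_inner_le_norm e x

lemma real_inner_self_of_norm_eq_one {e : E} (he : ‖e‖ = 1) : ⟪e, e⟫ = 1 := by
  simp [he]

lemma norm_smul_add_two_smul_le {e x : E} (he : ‖e‖ = 1) {a A L : ℝ} (hA : 0 ≤ A) (hx : ‖x‖ ≤ L) :
    ‖a • e + (2 * A) • x‖ ≤ |a| + 2 * A * L := by
  refine (norm_add_le _ _).trans ?_
  rw [norm_smul, norm_smul, he, mul_one, Real.norm_eq_abs, Real.norm_of_nonneg (by positivity)]
  gcongr

/-- The trace of a continuous endomorphism, as a linear functional; on the Hessian of a function it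
gives the Laplacian. -/
def clmTrace : (E →L[ℝ] E) →ₗ[ℝ] ℝ :=
  LinearMap.trace ℝ E ∘ₗ ContinuousLinearMap.coeLM ℝ

lemma clmTrace_eq_sum_inner {ι : Type*} [Fintype ι] (b : OrthonormalBasis ι ℝ E) (A : E →L[ℝ] E) :
    clmTrace A = ∑ i, ⟪A (b i), b i⟫ := by
  simp only [real_inner_comm]
  exact LinearMap.trace_eq_sum_inner A.toLinearMap b

lemma clmTrace_conj (U : E ≃ₗᵢ[ℝ] E) (A : E →L[ℝ] E) :
    clmTrace ((U.symm : E →L[ℝ] E) ∘L A ∘L (U : E →L[ℝ] E)) = clmTrace A :=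
  LinearMap.trace_conj' A.toLinearMap U.symm.toLinearEquiv

variable [FiniteDimensional ℝ E]

lemma clmTrace_id : clmTrace (ContinuousLinearMap.id ℝ E) = Module.finrank ℝ E :=
  LinearMap.trace_id ℝ E

lemma clmTrace_rankOne (x y : E) : clmTrace (InnerProductSpace.rankOne ℝ x y) = ⟪y, x⟫ :=
  InnerProductSpace.trace_rankOne x y

lemma clmTrace_nonpos {A : E →L[ℝ] E} (hA : ∀ v, ⟪A v, v⟫ ≤ 0) : clmTrace A ≤ 0 := by
  rw [clmTrace_eq_sum_inner (stdOrthonormalBasis ℝ E)]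
  exact Finset.sum_nonpos fun i _ => hA _

lemma clmTrace_barrier {e : E} (he : ‖e‖ = 1) (m A : ℝ) :
    clmTrace ((-(2 * m)) • InnerProductSpace.rankOne ℝ e e + (2 * A) • ContinuousLinearMap.id ℝ E) =
      2 * A * Module.finrank ℝ E - 2 * m := by
  simp only [map_add, map_smul, clmTrace_rankOne, clmTrace_id, real_inner_self_eq_norm_sq, he,
    smul_eq_mul]
  ring

end Trace

section Hessian

variable {E : Type*} [NormedAddCommGroup E] [InnerProductSpace ℝ E] [CompleteSpace E]

/-- `w` has gradient `g` near `x`, and `g` has derivative `A` at `x`: the pointwise meaning of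
`w` being twice differentiable at `x` with Hessian `A`. -/
structure HasHessianAt (w : E → ℝ) (g : E → E) (A : E →L[ℝ] E) (x : E) : Prop where
  gradient : ∀ᶠ y in 𝓝 x, HasGradientAt w (g y) y
  hessian : HasFDerivAt g A x

namespace HasHessianAt

variable {w w₁ w₂ : E → ℝ} {g g₁ g₂ : E → E} {A A₁ A₂ : E →L[ℝ] E} {x : E}

lemma hasGradientAt (h : HasHessianAt w g A x) : HasGradientAt w (g x) x :=
  h.gradient.self_of_nhds

lemma continuousAt (h : HasHessianAt w g A x) : ContinuousAt w x :=
  h.hasGradientAt.continuousAt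

lemma sub (h₁ : HasHessianAt w₁ g₁ A₁ x) (h₂ : HasHessianAt w₂ g₂ A₂ x) :
    HasHessianAt (fun y => w₁ y - w₂ y) (fun y => g₁ y - g₂ y) (A₁ - A₂) x where
  gradient := by
    filter_upwards [h₁.gradient, h₂.gradient] with y h₁ h₂
    rw [hasGradientAt_iff_hasFDerivAt] at *
    exact (h₁.fun_sub h₂).congr_fderiv (map_sub _ _ _).symm
  hessian := h₁.hessian.fun_sub h₂.hessian

lemma const_mul (h : HasHessianAt w g A x) (c : ℝ) :
    HasHessianAt (fun y => c * w y) (fun y => c • g y) (c • A) x where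
  gradient := by
    filter_upwards [h.gradient] with y h
    rw [hasGradientAt_iff_hasFDerivAt] at *
    exact (h.const_mul c).congr_fderiv (map_smul _ _ _).symm
  hessian := h.hessian.const_smul c

lemma comp_add_clm {c : E} {L : E →L[ℝ] E} (h : HasHessianAt w g A (c + L x)) :
    HasHessianAt (fun y => w (c + L y)) (fun y => L.adjoint (g (c + L y)))
      (L.adjoint ∘L A ∘L L) x where
  gradient := by
    have hL : ContinuousAt (fun y => c + L y) x := by fun_prop
    filter_upwards [hL.eventually h.gradient] with y hy
    rw [hasGradientAt_iff_hasFDerivAt] at *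
    refine (hy.comp y (L.hasFDerivAt.const_add c)).congr_fderiv ?_
    ext v
    simp [ContinuousLinearMap.adjoint_inner_left]
  hessian := L.adjoint.hasFDerivAt.comp x (h.hessian.comp x (L.hasFDerivAt.const_add c))

lemma comp_add (c : E) (h : HasHessianAt w g A (c + x)) :
    HasHessianAt (fun y => w (c + y)) (fun y => g (c + y)) A x := by
  simpa [ContinuousLinearMap.adjoint_id] using
    comp_add_clm (L := ContinuousLinearMap.id ℝ E) h

lemma comp_add_isometry {c : E} {U : E ≃ₗᵢ[ℝ] E} (h : HasHessianAt w g A (c + U x)) :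
    HasHessianAt (fun y => w (c + U y)) (fun y => U.symm (g (c + U y)))
      ((U.symm : E →L[ℝ] E) ∘L A ∘L (U : E →L[ℝ] E)) x := by
  have := comp_add_clm (L := (U : E →L[ℝ] E)) h
  rw [LinearIsometryEquiv.adjoint_eq_symm] at this
  exact this

lemma comp_add_smul {c : E} {l : ℝ} (h : HasHessianAt w g A (c + l • x)) :
    HasHessianAt (fun y => w (c + l • y)) (fun y => l • g (c + l • y)) ((l * l) • A) x := by
  have := comp_add_clm (L := l • ContinuousLinearMap.id ℝ E) h
  simpa [ContinuousLinearMap.adjoint_id, smul_smul] using this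

lemma ridge {e : E} {α α' : ℝ → ℝ} {α'' : ℝ} (hα : ∀ s, HasDerivAt α (α' s) s)
    (hα' : HasDerivAt α' α'' ⟪e, x⟫) :
    HasHessianAt (fun y => α ⟪e, y⟫) (fun y => α' ⟪e, y⟫ • e)
      (α'' • InnerProductSpace.rankOne ℝ e e) x where
  gradient := .of_forall fun y => by
    rw [hasGradientAt_iff_hasFDerivAt]
    refine ((hα ⟪e, y⟫).comp_hasFDerivAt y (innerSL ℝ e).hasFDerivAt).congr_fderiv ?_
    ext v
    simp
  hessian := by
    refine ((hα'.comp_hasFDerivAt x (innerSL ℝ e).hasFDerivAt).smul_const e).congr_fderiv ?_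
    ext v
    simp [smul_smul]

lemma const_mul_norm_sq (a : ℝ) (x : E) :
    HasHessianAt (fun y : E => a * ‖y‖ ^ 2) (fun y => (2 * a) • y)
      ((2 * a) • ContinuousLinearMap.id ℝ E) x where
  gradient := .of_forall fun y => by
    rw [hasGradientAt_iff_hasFDerivAt]
    refine ((hasStrictFDerivAt_norm_sq y).hasFDerivAt.const_mul a).congr_fderiv ?_
    ext v
    simp
    ring
  hessian := (hasFDerivAt_id x).const_smul (2 * a)

lemma add (h₁ : HasHessianAt w₁ g₁ A₁ x) (h₂ : HasHessianAt w₂ g₂ A₂ x) :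
    HasHessianAt (fun y => w₁ y + w₂ y) (fun y => g₁ y + g₂ y) (A₁ + A₂) x := by
  simpa using h₁.sub (h₂.const_mul (-1))

lemma hasDerivAt_line (h : HasHessianAt w g A x) (v : E) :
    ∀ᶠ s : ℝ in 𝓝 0, HasDerivAt (fun s => w (x + s • v)) ⟪g (x + s • v), v⟫ s := by
  have hline : Tendsto (fun s : ℝ => x + s • v) (𝓝 0) (𝓝 x) := by
    simpa using (by fun_prop : Continuous fun s : ℝ => x + s • v).tendsto 0
  filter_upwards [hline.eventually h.gradient] with s hs
  have hs' := hs.hasFDerivAt.comp_hasDerivAt s (((hasDerivAt_id s).smul_const v).const_add x)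
  simpa [Function.comp_def] using hs'

lemma hasDerivAt_gradient_line (h : HasHessianAt w g A x) (v : E) :
    HasDerivAt (fun s : ℝ => ⟪g (x + s • v), v⟫) ⟪A v, v⟫ 0 := by
  have hA : HasFDerivAt g A (x + (0 : ℝ) • v) := by simpa using h.hessian
  have hg := hA.comp_hasDerivAt (0 : ℝ) (((hasDerivAt_id (0 : ℝ)).smul_const v).const_add x)
  simpa [Function.comp_def] using hg.inner ℝ (hasDerivAt_const (0 : ℝ) v)

lemma gradient_eq_zero_of_isLocalMax (h : HasHessianAt w g A x) (hmax : IsLocalMax w x) :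
    g x = 0 :=
  (InnerProductSpace.toDual ℝ E).map_eq_zero_iff.1
    (hmax.hasFDerivAt_eq_zero h.hasGradientAt.hasFDerivAt)

end HasHessianAt

lemma hasHessianAt_barrier (e x : E) (N m A : ℝ) :
    HasHessianAt (fun y => N * ⟪e, y⟫ - m * ⟪e, y⟫ ^ 2 + A * ‖y‖ ^ 2)
      (fun y => (N - 2 * m * ⟪e, y⟫) • e + (2 * A) • y)
      ((-(2 * m)) • InnerProductSpace.rankOne ℝ e e + (2 * A) • ContinuousLinearMap.id ℝ E) x := by
  have hα (s : ℝ) : HasDerivAt (fun s => N * s - m * s ^ 2) (N - 2 * m * s) s := by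
    refine (((hasDerivAt_id s).const_mul N).fun_sub
      ((hasDerivAt_pow 2 s).const_mul m)).congr_deriv ?_
    simp
    ring
  have hα' (s : ℝ) : HasDerivAt (fun s => N - 2 * m * s) (-(2 * m)) s := by
    simpa using ((hasDerivAt_id s).const_mul (2 * m)).const_sub N
  exact (HasHessianAt.ridge hα (hα' _)).add (HasHessianAt.const_mul_norm_sq A x)

variable [FiniteDimensional ℝ E]

lemma HasHessianAt.clmTrace_nonpos_of_isLocalMax {w : E → ℝ} {g : E → E} {A : E →L[ℝ] E} {x : E}
    (h : HasHessianAt w g A x) (hmax : IsLocalMax w x) :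
    clmTrace A ≤ 0 := by
  refine clmTrace_nonpos fun v => ?_
  refine second_deriv_nonpos_of_isLocalMax (h.hasDerivAt_line v) (h.hasDerivAt_gradient_line v) ?_
  have hline : ContinuousAt (fun s : ℝ => x + s • v) 0 := by fun_prop
  exact IsLocalMax.comp_continuous (g := fun s : ℝ => x + s • v) (b := 0)
    (by simpa using hmax) hline

lemma le_of_clmTrace_lt {K : Set E} (hK : IsCompact K) {w φ : E → ℝ} (hw : ContinuousOn w K)
    (hφ : ContinuousOn φ K)
    (h : ∀ x ∈ K, w x ≤ φ x ∨ K ∈ 𝓝 x ∧ ∃ g γ A B, HasHessianAt w g A x ∧ HasHessianAt φ γ B x ∧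
      (g x = γ x → clmTrace B < clmTrace A)) {x : E} (hx : x ∈ K) : w x ≤ φ x := by
  obtain ⟨y, hy, hmax⟩ := hK.exists_isMaxOn ⟨x, hx⟩ (hw.sub hφ)
  suffices hwy : w y ≤ φ y by
    have hle : w x - φ x ≤ w y - φ y := hmax hx
    linarith
  rcases h y hy with hle | ⟨hnhds, g, γ, A, B, hwy, hφy, hlt⟩
  · exact hle
  have hsub := hwy.sub hφy
  have hlocal : IsLocalMax (fun y => w y - φ y) y := hmax.isLocalMax hnhds
  have hgrad := hsub.gradient_eq_zero_of_isLocalMax hlocal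
  have htrace := hsub.clmTrace_nonpos_of_isLocalMax hlocal
  rw [map_sub] at htrace
  linarith [hlt (sub_eq_zero.1 hgrad)]

end Hessian

section GradientEstimate

variable {E : Type*} [NormedAddCommGroup E] [InnerProductSpace ℝ E]

lemma norm_barrier_gradient_le {e y : E} (he : ‖e‖ = 1) {m A r : ℝ} (hm : 0 ≤ m) (hA : 0 ≤ A)
    (hy : ‖y‖ ≤ r) (hs : 0 ≤ ⟪e, y⟫) :
    ‖(m * r - 2 * m * ⟪e, y⟫) • e + (2 * A) • y‖ ≤ m * r + 2 * A * r := by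
  have hsr : ⟪e, y⟫ ≤ r :=
    (le_abs_self _).trans ((abs_real_inner_le_norm_of_norm_eq_one he y).trans hy)
  have hslope : |m * r - 2 * m * ⟪e, y⟫| ≤ m * r := by
    rw [abs_le]; constructor <;> nlinarith
  exact (norm_smul_add_two_smul_le he hA hy).trans (by gcongr)

lemma mem_nhds_halfBall {e y : E} {r : ℝ} (hy : ‖y‖ < r) (hs : 0 < ⟪e, y⟫) :
    {y : E | ‖y‖ ≤ r ∧ 0 ≤ ⟪e, y⟫} ∈ 𝓝 y := by
  filter_upwards [continuous_norm.continuousAt.eventually_lt continuousAt_const hy,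
    continuousAt_const.eventually_lt (f := fun _ => (0 : ℝ))
      (continuous_const.inner continuous_id).continuousAt hs] with x h₁ h₂ using ⟨h₁.le, h₂.le⟩

lemma neg_le_clmTrace_sub_conj {p Γ μ : ℝ} (hp : 1 ≤ p) {A B : E →L[ℝ] E} {a b v : E}
    (hA : |clmTrace A + ‖a‖ ^ p| ≤ μ) (hB : |clmTrace B + ‖b‖ ^ p| ≤ μ) (ha : ‖a‖ ≤ Γ)
    (hb : ‖b‖ ≤ Γ) (U : E ≃ₗᵢ[ℝ] E) :
    -(p * Γ ^ (p - 1) * ‖a - U.symm b - v‖ + (2 * μ + p * Γ ^ (p - 1) * ‖v‖)) ≤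
      clmTrace (A - (U.symm : E →L[ℝ] E) ∘L B ∘L (U : E →L[ℝ] E)) := by
  have hΓ : 0 ≤ Γ := (norm_nonneg a).trans ha
  have hnorm : |‖a‖ - ‖b‖| ≤ ‖a - U.symm b - v‖ + ‖v‖ := by
    calc |‖a‖ - ‖b‖| = |‖a‖ - ‖U.symm b‖| := by rw [U.symm.norm_map]
      _ ≤ ‖a - U.symm b‖ := abs_norm_sub_norm_le _ _
      _ ≤ _ := norm_le_norm_sub_add _ _
  have hpow : |‖a‖ ^ p - ‖b‖ ^ p| ≤ p * Γ ^ (p - 1) * (‖a - U.symm b - v‖ + ‖v‖) :=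
    (abs_rpow_sub_rpow_le hp ⟨norm_nonneg a, ha⟩ ⟨norm_nonneg b, hb⟩).trans (by gcongr)
  rw [map_sub, clmTrace_conj]
  linarith [abs_le.1 hA, abs_le.1 hB, abs_le.1 hpow]

lemma reflection_orthogonal_apply_of_norm_eq_one {e : E} (he : ‖e‖ = 1) (y : E) :
    (ℝ ∙ e)ᗮ.reflection y = y - (2 * ⟪e, y⟫) • e := by
  rw [Submodule.reflection_orthogonal_apply, Submodule.reflection_apply,
    Submodule.starProjection_unit_singleton ℝ he, neg_sub, mul_smul, two_smul, two_smul]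

variable [FiniteDimensional ℝ E]

lemma isCompact_halfBall (e : E) (r : ℝ) : IsCompact {y : E | ‖y‖ ≤ r ∧ 0 ≤ ⟪e, y⟫} := by
  refine (isCompact_closedBall (0 : E) r).of_isClosed_subset ?_ fun y hy => by simpa using hy.1
  have hclosed : IsClosed {y : E | 0 ≤ ⟪e, y⟫} := isClosed_le continuous_const (by fun_prop)
  exact (isClosed_le continuous_norm continuous_const).inter hclosed

lemma le_barrier_of_halfBall {e : E} (he : ‖e‖ = 1) {r W b k : ℝ} (hr : 0 < r) (hW : 0 < W)
    (hb : 0 ≤ b) (hbr : b * r ≤ 1) (hk : k * r ^ 2 ≤ 2 * W) {z : E → ℝ} {γ : E → E}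
    {Z : E → E →L[ℝ] E}
    (hz : ∀ y, ‖y‖ ≤ r → 0 ≤ ⟪e, y⟫ → HasHessianAt z γ (Z y) y)
    (hZ : ∀ y, ‖y‖ ≤ r → 0 ≤ ⟪e, y⟫ → -(b * ‖γ y‖ + k) ≤ clmTrace (Z y))
    (hzW : ∀ y, ‖y‖ ≤ r → 0 ≤ ⟪e, y⟫ → z y ≤ W)
    (hz₀ : ∀ y, ‖y‖ ≤ r → ⟪e, y⟫ = 0 → z y ≤ 0) {m : ℝ}
    (hm : m = (2 * Module.finrank ℝ E + 5) * (W / r ^ 2)) {y : E} (hy : ‖y‖ ≤ r)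
    (hs : 0 ≤ ⟪e, y⟫) :
    z y ≤ m * r * ⟪e, y⟫ - m * ⟪e, y⟫ ^ 2 + W / r ^ 2 * ‖y‖ ^ 2 := by
  set A := W / r ^ 2 with hA
  have hA₀ : 0 < A := by positivity
  have hAr : A * r ^ 2 = W := by rw [hA]; field_simp
  have hm₀ : 0 ≤ m := by rw [hm]; positivity
  refine le_of_clmTrace_lt (isCompact_halfBall e r)
    (fun y hy => (hz y hy.1 hy.2).continuousAt.continuousWithinAt)
    (fun y _ => (hasHessianAt_barrier e y _ m A).continuousAt.continuousWithinAt)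
    (fun y hy => ?_) ⟨hy, hs⟩
  obtain ⟨hy, hs⟩ := hy
  have hsr : ⟪e, y⟫ ≤ r :=
    (le_abs_self _).trans ((abs_real_inner_le_norm_of_norm_eq_one he y).trans hy)
  rcases hs.eq_or_lt with hs₀ | hs₀
  · left
    rw [← hs₀]
    exact (hz₀ y hy hs₀.symm).trans (by ring_nf; positivity)
  rcases hy.eq_or_lt with hyr | hyr
  · left
    rw [hyr, hAr]
    nlinarith [hzW y hy hs, mul_nonneg hm₀ (mul_nonneg hs (sub_nonneg.2 hsr))]
  refine .inr ⟨mem_nhds_halfBall hyr hs₀, _, _, _, _, hz y hy hs,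
    hasHessianAt_barrier e y _ m A, fun hγ => ?_⟩
  rw [clmTrace_barrier he]
  have hγ' : ‖γ y‖ ≤ m * r + 2 * A * r := hγ ▸ norm_barrier_gradient_le he hm₀ hA₀.le hy hs
  have hbγ : b * ‖γ y‖ ≤ m + 2 * A := by
    calc b * ‖γ y‖ ≤ b * (m * r + 2 * A * r) := by gcongr
      _ = b * r * (m + 2 * A) := by ring
      _ ≤ m + 2 * A := mul_le_of_le_one_left (by positivity) hbr
  have hkA : k ≤ 2 * A := by
    rw [hA, ← mul_div_assoc, le_div_iff₀ (by positivity)]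
    exact hk
  have : m = 2 * A * Module.finrank ℝ E + 5 * A := by rw [hm]; ring
  linarith [hZ y hy hs]

lemma inner_gradient_le_of_halfBall {e : E} (he : ‖e‖ = 1) {r W b k : ℝ} (hr : 0 < r) (hW : 0 < W)
    (hb : 0 ≤ b) (hbr : b * r ≤ 1) (hk : k * r ^ 2 ≤ 2 * W) {z : E → ℝ} {γ : E → E}
    {Z : E → E →L[ℝ] E}
    (hz : ∀ y, ‖y‖ ≤ r → 0 ≤ ⟪e, y⟫ → HasHessianAt z γ (Z y) y)
    (hZ : ∀ y, ‖y‖ ≤ r → 0 ≤ ⟪e, y⟫ → -(b * ‖γ y‖ + k) ≤ clmTrace (Z y))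
    (hzW : ∀ y, ‖y‖ ≤ r → 0 ≤ ⟪e, y⟫ → z y ≤ W)
    (hz₀ : ∀ y, ‖y‖ ≤ r → ⟪e, y⟫ = 0 → z y = 0) :
    ⟪γ 0, e⟫ ≤ (2 * Module.finrank ℝ E + 5) * W / r := by
  set m := (2 * Module.finrank ℝ E + 5) * (W / r ^ 2) with hm
  set A := W / r ^ 2
  have hray : HasDerivAt (fun s : ℝ => z (s • e) - (m * r * s - m * s ^ 2 + A * s ^ 2))
      (⟪γ 0, e⟫ - m * r) 0 := by
    have hline : HasDerivAt (fun s : ℝ => z (s • e)) ⟪γ 0, e⟫ 0 := by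
      simpa using ((hz 0 (by simpa using hr.le) (by simp)).hasDerivAt_line e).self_of_nhds
    have hpoly : HasDerivAt (fun s : ℝ => m * r * s - m * s ^ 2 + A * s ^ 2) (m * r) 0 := by
      simpa using (((hasDerivAt_id (0 : ℝ)).const_mul (m * r)).fun_sub
        ((hasDerivAt_pow 2 0).const_mul m)).fun_add ((hasDerivAt_pow 2 0).const_mul A)
    exact hline.fun_sub hpoly
  have hz00 : z 0 = 0 := hz₀ 0 (by simpa using hr.le) (by simp)
  have hle : ⟪γ 0, e⟫ - m * r ≤ 0 := by
    refine deriv_nonpos_of_eventually_le_right hray ?_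
    filter_upwards [Ioc_mem_nhdsGT hr] with s hs
    have hinner : ⟪e, s • e⟫ = s := by simp [real_inner_smul_right, he]
    have hnorm : ‖s • e‖ = s := by simp [norm_smul, he, abs_of_pos hs.1]
    have := le_barrier_of_halfBall he hr hW hb hbr hk hz hZ hzW (fun y hy h => (hz₀ y hy h).le) hm
      (hnorm.le.trans hs.2) (hinner.symm ▸ hs.1.le)
    rw [hinner, hnorm] at this
    simp only [zero_add, zero_smul, hz00]
    linarith
  calc ⟪γ 0, e⟫ ≤ m * r := by linarith
    _ = _ := by simp only [hm, A]; field_simp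

lemma HasHessianAt.sub_reflection {w : E → ℝ} {g : E → E} {A B : E →L[ℝ] E} {x₀ y : E}
    (U : E ≃ₗᵢ[ℝ] E) (v : E) (hA : HasHessianAt w g A (x₀ + y))
    (hB : HasHessianAt w g B (x₀ + U y)) :
    HasHessianAt (fun y => w (x₀ + y) - w (x₀ + U y) - ⟪v, y⟫)
      (fun y => g (x₀ + y) - U.symm (g (x₀ + U y)) - v)
      (A - (U.symm : E →L[ℝ] E) ∘L B ∘L (U : E →L[ℝ] E)) y := by
  have hlin : HasHessianAt (fun y => ⟪v, y⟫) (fun _ => v) 0 y := by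
    simpa using HasHessianAt.ridge (e := v) (x := y) (fun s => hasDerivAt_id s)
      (hasDerivAt_const _ _)
  simpa using ((hA.comp_add x₀).sub hB.comp_add_isometry).sub hlin

/-- Compare the difference of `w` and its reflection in the hyperplane orthogonal to `e` with a
barrier on a half ball. -/
lemma inner_gradient_sub_le {p Γ r μ W c : ℝ} {w : E → ℝ} {g : E → E} {H : E → E →L[ℝ] E}
    {x₀ ζ e : E} (hp : 1 ≤ p) (hr : 0 < r) (hW : 0 < W) (he : ‖e‖ = 1)
    (hw : ∀ x ∈ closedBall x₀ r, HasHessianAt w g (H x) x)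
    (hpde : ∀ x ∈ closedBall x₀ r, |clmTrace (H x) + ‖g x‖ ^ p| ≤ μ)
    (hg : ∀ x ∈ closedBall x₀ r, ‖g x‖ ≤ Γ)
    (haff : ∀ x ∈ closedBall x₀ r, |w x - (c + ⟪ζ, x - x₀⟫)| ≤ W)
    (hΓ : p * Γ ^ (p - 1) * r ≤ 1) (hμ : μ * r ^ 2 ≤ W)
    (hζ : p * Γ ^ (p - 1) * ‖ζ‖ * r ^ 2 ≤ W) :
    ⟪g x₀ - ζ, e⟫ ≤ (2 * Module.finrank ℝ E + 5) * W / r := by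
  have hΓ₀ : 0 ≤ Γ := (norm_nonneg _).trans (hg x₀ (mem_closedBall_self hr.le))
  have he_self := real_inner_self_of_norm_eq_one he
  set U : E ≃ₗᵢ[ℝ] E := (ℝ ∙ e)ᗮ.reflection
  have hU (y : E) : U y = y - (2 * ⟪e, y⟫) • e := reflection_orthogonal_apply_of_norm_eq_one he y
  set v : E := (2 * ⟪ζ, e⟫) • e with hv
  have hv_norm : ‖v‖ ≤ 2 * ‖ζ‖ := by
    rw [hv, norm_smul, he, mul_one, Real.norm_eq_abs, abs_mul, abs_two, real_inner_comm]
    gcongr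
    exact abs_real_inner_le_norm_of_norm_eq_one he ζ
  have hk : (2 * μ + p * Γ ^ (p - 1) * ‖v‖) * r ^ 2 ≤ 2 * (2 * W) := by
    have : p * Γ ^ (p - 1) * ‖v‖ * r ^ 2 ≤ p * Γ ^ (p - 1) * (2 * ‖ζ‖) * r ^ 2 := by gcongr
    linarith
  have hmem {y : E} (hy : ‖y‖ ≤ r) : x₀ + y ∈ closedBall x₀ r := by simpa using hy
  have hmemU {y : E} (hy : ‖y‖ ≤ r) : x₀ + U y ∈ closedBall x₀ r := by simpa using hy
  have key := inner_gradient_le_of_halfBall he hr (by positivity) (by positivity) hΓ hk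
    (fun y hy _ => (hw _ (hmem hy)).sub_reflection U v (hw _ (hmemU hy)))
    (fun y hy _ => neg_le_clmTrace_sub_conj hp (hpde _ (hmem hy)) (hpde _ (hmemU hy))
      (hg _ (hmem hy)) (hg _ (hmemU hy)) U)
    (fun y hy _ => ?_) (fun y _ hs => ?_)
  · have hsymm : U.symm = U := (ℝ ∙ e)ᗮ.reflection_symm
    have hgrad : g x₀ - U.symm (g x₀) - v = (2 * ⟪g x₀ - ζ, e⟫) • e := by
      rw [hsymm, hU, hv, sub_sub_cancel, ← sub_smul, inner_sub_left, mul_sub, real_inner_comm]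
    simp only [map_zero, add_zero, hgrad, real_inner_smul_left, he_self, mul_one] at key
    rw [mul_left_comm, mul_div_assoc] at key
    linarith
  · have h₁ := abs_le.1 (haff _ (hmem hy))
    have h₂ := abs_le.1 (haff _ (hmemU hy))
    have hUy : ⟪ζ, U y⟫ = ⟪ζ, y⟫ - ⟪v, y⟫ := by
      simp only [hU, hv, inner_sub_right, real_inner_smul_left, real_inner_smul_right]
      ring
    rw [add_sub_cancel_left] at h₁ h₂
    linarith
  · simp [hU, hv, hs, real_inner_smul_left]

lemma norm_gradient_sub_le {p Γ r μ W c : ℝ} {w : E → ℝ} {g : E → E} {H : E → E →L[ℝ] E}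
    {x₀ ζ : E} (hp : 1 ≤ p) (hr : 0 < r) (hW : 0 < W)
    (hw : ∀ x ∈ closedBall x₀ r, HasHessianAt w g (H x) x)
    (hpde : ∀ x ∈ closedBall x₀ r, |clmTrace (H x) + ‖g x‖ ^ p| ≤ μ)
    (hg : ∀ x ∈ closedBall x₀ r, ‖g x‖ ≤ Γ)
    (haff : ∀ x ∈ closedBall x₀ r, |w x - (c + ⟪ζ, x - x₀⟫)| ≤ W)
    (hΓ : p * Γ ^ (p - 1) * r ≤ 1) (hμ : μ * r ^ 2 ≤ W)
    (hζ : p * Γ ^ (p - 1) * ‖ζ‖ * r ^ 2 ≤ W) :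
    ‖g x₀ - ζ‖ ≤ (2 * Module.finrank ℝ E + 5) * W / r := by
  rcases eq_or_ne (g x₀ - ζ) 0 with heq | hne
  · rw [heq, norm_zero]
    positivity
  have hinner : ⟪g x₀ - ζ, ‖g x₀ - ζ‖⁻¹ • (g x₀ - ζ)⟫ = ‖g x₀ - ζ‖ := by
    rw [real_inner_smul_right, real_inner_self_eq_norm_sq, sq,
      inv_mul_cancel_left₀ (norm_ne_zero_iff.2 hne)]
  exact hinner ▸ inner_gradient_sub_le hp hr hW (norm_smul_inv_norm hne) hw hpde hg haff hΓ hμ hζ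

end GradientEstimate

section Slab

variable {E : Type*} [NormedAddCommGroup E] [InnerProductSpace ℝ E]

/-- The part of the slab `s₁ ≤ ⟪e, x⟫ ≤ s₂` in the ball of radius `L`. -/
def truncatedSlab (e : E) (s₁ s₂ L : ℝ) : Set E :=
  {x | ⟪e, x⟫ ∈ Icc s₁ s₂ ∧ ‖x‖ ≤ L}

lemma truncatedSlab_mem_nhds {e x : E} {s₁ s₂ L : ℝ} (hs : ⟪e, x⟫ ∈ Ioo s₁ s₂) (hx : ‖x‖ < L) :
    truncatedSlab e s₁ s₂ L ∈ 𝓝 x := by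
  have hinner : ContinuousAt (fun y => ⟪e, y⟫) x := by fun_prop
  filter_upwards [hinner.eventually_mem (Ioo_mem_nhds hs.1 hs.2),
    continuous_norm.continuousAt.eventually_lt continuousAt_const hx] with y hs hy
  exact ⟨Ioo_subset_Icc_self hs, hy.le⟩

variable [FiniteDimensional ℝ E]

lemma isCompact_truncatedSlab (e : E) (s₁ s₂ L : ℝ) : IsCompact (truncatedSlab e s₁ s₂ L) := by
  refine (isCompact_closedBall (0 : E) L).of_isClosed_subset ?_ fun y hy => by simpa using hy.2
  have hclosed : IsClosed ((fun y => ⟪e, y⟫) ⁻¹' Icc s₁ s₂) := isClosed_Icc.preimage (by fun_prop)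
  exact hclosed.inter (isClosed_le continuous_norm continuous_const)

lemma hasHessianAt_expBarrier (e x : E) (c κ k A : ℝ) :
    HasHessianAt (fun y => c - κ * Real.exp (k * ⟪e, y⟫) + A * ‖y‖ ^ 2)
      (fun y => (-(κ * k * Real.exp (k * ⟪e, y⟫))) • e + (2 * A) • y)
      ((-(κ * k ^ 2 * Real.exp (k * ⟪e, x⟫))) • InnerProductSpace.rankOne ℝ e e +
        (2 * A) • ContinuousLinearMap.id ℝ E) x := by
  have hexp (s : ℝ) : HasDerivAt (fun s => Real.exp (k * s)) (k * Real.exp (k * s)) s := by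
    simpa [mul_comm] using ((hasDerivAt_id s).const_mul k).exp
  have hα (s : ℝ) :
      HasDerivAt (fun s => c - κ * Real.exp (k * s)) (-(κ * k * Real.exp (k * s))) s :=
    (((hexp s).const_mul κ).const_sub c).congr_deriv (by ring)
  have hα' (s : ℝ) : HasDerivAt (fun s => -(κ * k * Real.exp (k * s)))
      (-(κ * k ^ 2 * Real.exp (k * s))) s :=
    ((hexp s).const_mul (κ * k)).fun_neg.congr_deriv (by ring)
  exact (HasHessianAt.ridge hα (hα' _)).add (HasHessianAt.const_mul_norm_sq A x)

variable {e : E} {B A κ μ m s₁ s₂ L : ℝ} {f : E → ℝ} {g : E → E} {H : E → E →L[ℝ] E}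

lemma le_expBarrier_of_truncatedSlab (he : ‖e‖ = 1) (hB : 0 ≤ B) (hA : 0 ≤ A) (hκ : 0 ≤ κ)
    (hμ : μ + 2 * A * (Module.finrank ℝ E + B * L) < κ * (B + 1) * Real.exp ((B + 1) * s₁))
    (hf : ∀ x ∈ truncatedSlab e s₁ s₂ L, HasHessianAt f g (H x) x)
    (hH : ∀ x ∈ truncatedSlab e s₁ s₂ L, -(B * ‖g x‖ + μ) ≤ clmTrace (H x))
    (hside : ∀ x ∈ truncatedSlab e s₁ s₂ L, f x ≤ m + A * L ^ 2)
    (hface : ∀ x ∈ truncatedSlab e s₁ s₂ L, ⟪e, x⟫ = s₁ ∨ ⟪e, x⟫ = s₂ → f x ≤ m) {x : E}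
    (hx : x ∈ truncatedSlab e s₁ s₂ L) :
    f x ≤ m + κ * Real.exp ((B + 1) * s₂) - κ * Real.exp ((B + 1) * ⟪e, x⟫) + A * ‖x‖ ^ 2 := by
  refine le_of_clmTrace_lt (isCompact_truncatedSlab e s₁ s₂ L)
    (fun y hy => (hf y hy).continuousAt.continuousWithinAt)
    (fun y _ => (hasHessianAt_expBarrier e y _ κ _ A).continuousAt.continuousWithinAt)
    (fun y hy => ?_) hx
  obtain ⟨⟨hs₁, hs₂⟩, hyL⟩ := id hy
  have hexp : κ * Real.exp ((B + 1) * ⟪e, y⟫) ≤ κ * Real.exp ((B + 1) * s₂) := by gcongr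
  by_cases hyface : ⟪e, y⟫ = s₁ ∨ ⟪e, y⟫ = s₂
  · left
    have : 0 ≤ A * ‖y‖ ^ 2 := by positivity
    linarith [hface y hy hyface]
  rcases hyL.eq_or_lt with hyL | hyL
  · left
    rw [hyL]
    linarith [hside y hy]
  rw [not_or] at hyface
  have hyIoo : ⟪e, y⟫ ∈ Ioo s₁ s₂ := ⟨hs₁.lt_of_ne' hyface.1, hs₂.lt_of_ne hyface.2⟩
  refine .inr ⟨truncatedSlab_mem_nhds hyIoo hyL, _, _, _, _, hf y hy,
    hasHessianAt_expBarrier e y _ κ _ A, fun hgrad => ?_⟩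
  set α' := κ * (B + 1) * Real.exp ((B + 1) * ⟪e, y⟫) with hα'
  have hα'₀ : 0 ≤ α' := by positivity
  have hslope : κ * (B + 1) * Real.exp ((B + 1) * s₁) ≤ α' := by rw [hα']; gcongr
  have hg : B * ‖g y‖ ≤ B * (α' + 2 * A * L) := by
    rw [hgrad]
    gcongr
    exact (norm_smul_add_two_smul_le he hA hyL.le).trans_eq (by rw [abs_neg, abs_of_nonneg hα'₀])
  have htrace : κ * (B + 1) ^ 2 * Real.exp ((B + 1) * ⟪e, y⟫) = (B + 1) * α' := by ring
  rw [map_add, map_smul, map_smul, clmTrace_rankOne, clmTrace_id,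
    real_inner_self_of_norm_eq_one he, htrace, smul_eq_mul, smul_eq_mul]
  linarith [hH y hy]

lemma exists_le_add_of_truncatedSlab (A₀ s₁ s₂ X : ℝ) (hB : 0 ≤ B) (hA₀ : 0 ≤ A₀) {ε : ℝ}
    (hε : 0 < ε) :
    ∃ L > 0, ∃ μ > 0, ∀ (e : E) (f : E → ℝ) (g : E → E) (H : E → E →L[ℝ] E) (m : ℝ), ‖e‖ = 1 →
      (∀ x ∈ truncatedSlab e s₁ s₂ L, HasHessianAt f g (H x) x ∧
        -(B * ‖g x‖ + μ) ≤ clmTrace (H x) ∧ f x ≤ m + A₀) →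
      (∀ x ∈ truncatedSlab e s₁ s₂ L, ⟪e, x⟫ = s₁ ∨ ⟪e, x⟫ = s₂ → f x ≤ m) →
      ∀ x, ⟪e, x⟫ ∈ Icc s₁ s₂ → ‖x‖ ≤ X → f x ≤ m + ε := by
  set κ := ε / 2 * Real.exp (-((B + 1) * s₂)) with hκ
  set c := κ * (B + 1) * Real.exp ((B + 1) * s₁)
  have hc : 0 < c := by positivity
  have hexp : κ * Real.exp ((B + 1) * s₂) = ε / 2 := by simp [hκ, mul_assoc, ← Real.exp_add]
  have hdecay (a b : ℝ) : Tendsto (fun L : ℝ => a * (L⁻¹ * L⁻¹) + b * L⁻¹) atTop (𝓝 0) := by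
    simpa using ((tendsto_inv_atTop_zero.mul tendsto_inv_atTop_zero).const_mul a).add
      (tendsto_inv_atTop_zero.const_mul b)
  obtain ⟨L, hX, hdrift, hLX, hL⟩ := (((hdecay (A₀ * X ^ 2) 0).eventually_lt_const
    (half_pos hε)).and
    (((hdecay (2 * A₀ * Module.finrank ℝ E) (2 * A₀ * B)).eventually_lt_const (half_pos hc)).and
    ((eventually_ge_atTop X).and (eventually_gt_atTop 0)))).exists
  have hAL : A₀ / L ^ 2 * L ^ 2 = A₀ := div_mul_cancel₀ _ (by positivity)
  refine ⟨L, hL, c / 2, half_pos hc, fun e f g H m he hf hface x hs hx => ?_⟩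
  have hle := le_expBarrier_of_truncatedSlab (A := A₀ / L ^ 2) (κ := κ) (L := L) he hB
    (by positivity) (by positivity) ?_ (fun x hx => (hf x hx).1) (fun x hx => (hf x hx).2.1)
    (fun x hx => hAL.symm ▸ (hf x hx).2.2) hface ⟨hs, hx.trans hLX⟩
  · have hquad : A₀ / L ^ 2 * ‖x‖ ^ 2 ≤ ε / 2 := by
      calc A₀ / L ^ 2 * ‖x‖ ^ 2 ≤ A₀ / L ^ 2 * X ^ 2 := by gcongr
        _ = A₀ * X ^ 2 * (L⁻¹ * L⁻¹) + 0 * L⁻¹ := by field_simp; ring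
        _ ≤ ε / 2 := hX.le
    have : 0 ≤ κ * Real.exp ((B + 1) * ⟪e, x⟫) := by positivity
    linarith
  · calc c / 2 + 2 * (A₀ / L ^ 2) * (Module.finrank ℝ E + B * L)
        = c / 2 + (2 * A₀ * Module.finrank ℝ E * (L⁻¹ * L⁻¹) + 2 * A₀ * B * L⁻¹) := by
          field_simp
      _ < c := by linarith

end Slab

section RescaledSolution

lemma eventually_mul_rpow_lt {k : ℝ} (hk : 0 < k) (c : ℝ) {ε : ℝ} (hε : 0 < ε) :
    ∀ᶠ t in 𝓝[>] (0 : ℝ), c * t ^ k < ε := by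
  have htendsto : Tendsto (fun t : ℝ => c * t ^ k) (𝓝 0) (𝓝 0) := by
    simpa [Real.zero_rpow hk.ne'] using
      (Real.continuousAt_rpow_const 0 k (Or.inr hk.le)).tendsto.const_mul c
  exact (htendsto.eventually_lt_const hε).filter_mono nhdsWithin_le_nhds

lemma eventually_mul_lt (c : ℝ) {ε : ℝ} (hε : 0 < ε) : ∀ᶠ t in 𝓝[>] (0 : ℝ), c * t < ε := by
  simpa using eventually_mul_rpow_lt one_pos c hε

lemma eventually_mul_rpow_neg_lt {k : ℝ} (hk : 0 < k) (c : ℝ) {ε : ℝ} (hε : 0 < ε) :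
    ∀ᶠ t in atTop, c * t ^ (-k) < ε := by
  have htendsto : Tendsto (fun t : ℝ => c * t ^ (-k)) atTop (𝓝 0) := by
    simpa using (tendsto_rpow_neg_atTop hk).const_mul c
  exact htendsto.eventually_lt_const hε

/-- A solution `w` of `|Δw + ‖∇w‖ ^ p| ≤ τ`, with gradient `g` and Hessian `H`, on a domain `D` that
is `τ`-close to the half space `0 < ⟪e, x⟫` in the ball of radius `1 / τ`, vanishing on the frontier
of `D` and obeying the bounds with exponents `-β` and `1 - β`. Magnifying a solution around a
boundary point of a smooth domain produces such data with `τ` as small as desired. -/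
structure RescaledSolution (E : Type*) [NormedAddCommGroup E] [InnerProductSpace ℝ E]
    [CompleteSpace E] (p β C τ : ℝ) where
  e : E
  D : Set E
  w : E → ℝ
  g : E → E
  H : E → E →L[ℝ] E
  norm_e : ‖e‖ = 1
  isOpen : IsOpen D
  continuousOn : ContinuousOn w (closure D)
  eq_zero : ∀ x ∈ frontier D, w x = 0
  hasHessianAt : ∀ x ∈ D, HasHessianAt w g (H x) x
  pde : ∀ x ∈ D, |clmTrace (H x) + ‖g x‖ ^ p| ≤ τ
  interior : ∀ x, τ * ‖x‖ ≤ 1 → τ * ‖x‖ ^ 2 < ⟪e, x⟫ → x ∈ D ∧ ‖g x‖ ≤ C * ⟪e, x⟫ ^ (-β)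
  bound : ∀ x ∈ closure D, τ * ‖x‖ ≤ 1 →
    -(τ * ‖x‖ ^ 2) ≤ ⟪e, x⟫ ∧ |w x| ≤ C * (|⟪e, x⟫| + τ * ‖x‖ ^ 2) ^ (1 - β)

lemma neg_le_clmTrace_sub {E : Type*} [NormedAddCommGroup E] [InnerProductSpace ℝ E] {p Γ μ : ℝ}
    (hp : 1 ≤ p) {A B : E →L[ℝ] E} {a b : E} (hA : |clmTrace A + ‖a‖ ^ p| ≤ μ)
    (hB : |clmTrace B + ‖b‖ ^ p| ≤ μ) (ha : ‖a‖ ≤ Γ) (hb : ‖b‖ ≤ Γ) :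
    -(p * Γ ^ (p - 1) * ‖a - b‖ + 2 * μ) ≤ clmTrace (A - B) := by
  have hle : -(p * Γ ^ (p - 1) * ‖a - b - 0‖ + (2 * μ + p * Γ ^ (p - 1) * ‖(0 : E)‖)) ≤
      clmTrace (A - B) :=
    neg_le_clmTrace_sub_conj hp hA hB ha hb (LinearIsometryEquiv.refl ℝ E)
  simpa using hle

namespace RescaledSolution

variable {E : Type*} [NormedAddCommGroup E] [InnerProductSpace ℝ E] [CompleteSpace E]
  {p β C τ : ℝ}

lemma inner_e_e (S : RescaledSolution E p β C τ) : ⟪S.e, S.e⟫ = 1 :=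
  real_inner_self_of_norm_eq_one S.norm_e

lemma inner_smul_e (S : RescaledSolution E p β C τ) (s : ℝ) : ⟪S.e, s • S.e⟫ = s := by
  rw [real_inner_smul_right, S.inner_e_e, mul_one]

lemma norm_smul_e (S : RescaledSolution E p β C τ) {s : ℝ} (hs : 0 ≤ s) : ‖s • S.e‖ = s := by
  rw [norm_smul, S.norm_e, mul_one, Real.norm_of_nonneg hs]

lemma eventually_interior (hβ₀ : 0 ≤ β) (hβ₁ : β ≤ 1) (hC : 0 ≤ C) {s : ℝ} (hs : 0 < s) (Λ : ℝ) :
    ∀ᶠ τ in 𝓝[>] (0 : ℝ), ∀ S : RescaledSolution E p β C τ, ∀ x, ‖x‖ ≤ Λ → s ≤ ⟪S.e, x⟫ →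
      x ∈ S.D ∧ ‖S.g x‖ ≤ C * s ^ (-β) ∧ |S.w x| ≤ C * (2 * ⟪S.e, x⟫) ^ (1 - β) := by
  filter_upwards [eventually_mul_lt Λ one_pos, eventually_mul_lt (Λ ^ 2) hs, self_mem_nhdsWithin]
    with τ hΛ hΛs hτ S x hx hsx
  have hτ : 0 < τ := hτ
  have hτx : τ * ‖x‖ ≤ 1 := by nlinarith
  have hτx' : τ * ‖x‖ ^ 2 < ⟪S.e, x⟫ := by
    calc τ * ‖x‖ ^ 2 ≤ τ * Λ ^ 2 := by gcongr
      _ < ⟪S.e, x⟫ := by linarith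
  obtain ⟨hxD, hgx⟩ := S.interior x hτx hτx'
  refine ⟨hxD, hgx.trans ?_, (S.bound x (subset_closure hxD) hτx).2.trans ?_⟩
  · exact mul_le_mul_of_nonneg_left
      (Real.rpow_le_rpow_of_nonpos hs hsx (neg_nonpos.2 hβ₀)) hC
  · have : |⟪S.e, x⟫| = ⟪S.e, x⟫ := abs_of_pos (hs.trans_le hsx)
    have : 0 ≤ 1 - β := sub_nonneg.2 hβ₁
    gcongr
    linarith

lemma eventually_abs_sub_le (hβ₀ : 0 ≤ β) (hβ₁ : β ≤ 1) (hC : 0 ≤ C) {s : ℝ} (hs : 0 < s)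
    (Λ : ℝ) :
    ∀ᶠ τ in 𝓝[>] (0 : ℝ), ∀ S : RescaledSolution E p β C τ, ∀ x y, ‖x‖ ≤ Λ → ‖y‖ ≤ Λ →
      s ≤ ⟪S.e, x⟫ → s ≤ ⟪S.e, y⟫ → |S.w x - S.w y| ≤ C * s ^ (-β) * ‖x - y‖ := by
  filter_upwards [eventually_interior (E := E) hβ₀ hβ₁ hC hs Λ] with τ hτ S x y hx hy hsx hsy
  have hconvex : Convex ℝ ({z : E | s ≤ ⟪S.e, z⟫} ∩ closedBall 0 Λ) :=
    (convex_halfSpace_ge (innerSL ℝ S.e).isLinear s).inter (convex_closedBall _ _)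
  refine hconvex.norm_image_sub_le_of_norm_hasFDerivWithin_le
    (f' := fun z => InnerProductSpace.toDual ℝ E (S.g z)) (fun z hz => ?_) (fun z hz => ?_)
    ⟨hsy, by simpa using hy⟩ ⟨hsx, by simpa using hx⟩
  · have hzD := (hτ S z (by simpa using hz.2) hz.1).1
    exact (S.hasHessianAt z hzD).hasGradientAt.hasFDerivAt.hasFDerivWithinAt
  · simpa using (hτ S z (by simpa using hz.2) hz.1).2.1

variable [FiniteDimensional ℝ E]

lemma exists_eventually_translate_sub_le (hp : 1 ≤ p) (hβ₀ : 0 ≤ β) (hβ₁ : β ≤ 1) (hC : 0 ≤ C)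
    {s₁ s₂ ε : ℝ} (hs₁ : 0 < s₁) (hs : s₁ ≤ s₂) (hε : 0 < ε) (L X : ℝ) :
    ∃ Λ, ∀ᶠ τ in 𝓝[>] (0 : ℝ), ∀ S : RescaledSolution E p β C τ, ∀ h₁ h₂ : E, ∀ m ≥ 0,
      ⟪S.e, h₁⟫ = 0 → ⟪S.e, h₂⟫ = 0 → ‖h₁‖ ≤ L → ‖h₂‖ ≤ L →
      (∀ x, ⟪S.e, x⟫ = s₁ ∨ ⟪S.e, x⟫ = s₂ → ‖x‖ ≤ Λ → S.w (h₁ + x) - S.w (h₂ + x) ≤ m) →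
      ∀ x, ⟪S.e, x⟫ ∈ Icc s₁ s₂ → ‖x‖ ≤ X → S.w (h₁ + x) - S.w (h₂ + x) ≤ m + ε := by
  set Γ := C * s₁ ^ (-β)
  set A₀ := C * (2 * s₂) ^ (1 - β)
  have hs₂ : 0 < s₂ := hs₁.trans_le hs
  obtain ⟨Λ, -, μ, hμ, hslab⟩ := exists_le_add_of_truncatedSlab (E := E)
    (B := p * Γ ^ (p - 1)) (2 * A₀) s₁ s₂ X (by positivity) (by positivity) hε
  refine ⟨Λ, ?_⟩
  filter_upwards [eventually_interior (E := E) (p := p) hβ₀ hβ₁ hC hs₁ (L + Λ),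
    eventually_mul_lt 2 hμ] with τ hτ hτμ S h₁ h₂ m hm he₁ he₂ hn₁ hn₂ hface x hs hx
  have htranslate {h y : E} (he : ⟪S.e, h⟫ = 0) (hn : ‖h‖ ≤ L)
      (hy : y ∈ truncatedSlab S.e s₁ s₂ Λ) :
      h + y ∈ S.D ∧ ‖S.g (h + y)‖ ≤ Γ ∧ |S.w (h + y)| ≤ A₀ := by
    have hinner : ⟪S.e, h + y⟫ = ⟪S.e, y⟫ := by rw [inner_add_right, he, zero_add]
    obtain ⟨hD, hg, hw⟩ := hτ S (h + y) ((norm_add_le _ _).trans (add_le_add hn hy.2))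
      (hinner ▸ hy.1.1)
    refine ⟨hD, hg, hw.trans ?_⟩
    rw [hinner]
    have hpos : 0 ≤ 2 * ⟪S.e, y⟫ := by linarith [hy.1.1]
    exact mul_le_mul_of_nonneg_left (Real.rpow_le_rpow hpos (by linarith [hy.1.2])
      (sub_nonneg.2 hβ₁)) hC
  refine hslab S.e (fun x => S.w (h₁ + x) - S.w (h₂ + x)) (fun x => S.g (h₁ + x) - S.g (h₂ + x))
    (fun x => S.H (h₁ + x) - S.H (h₂ + x)) m S.norm_e (fun y hy => ?_)
    (fun y hy hys => hface y hys hy.2) x hs hx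
  obtain ⟨hD₁, hg₁, hw₁⟩ := htranslate he₁ hn₁ hy
  obtain ⟨hD₂, hg₂, hw₂⟩ := htranslate he₂ hn₂ hy
  refine ⟨((S.hasHessianAt _ hD₁).comp_add h₁).sub ((S.hasHessianAt _ hD₂).comp_add h₂), ?_, ?_⟩
  · linarith [neg_le_clmTrace_sub hp (S.pde _ hD₁) (S.pde _ hD₂) hg₁ hg₂]
  · linarith [abs_le.1 hw₁, abs_le.1 hw₂]

lemma eventually_tangential_sub_le (hp : 1 ≤ p) (hβ₀ : 0 < β) (hβ₁ : β < 1) (hC : 0 ≤ C)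
    {s₁ ε : ℝ} (hs₁ : 0 < s₁) (s₂ : ℝ) (hε : 0 < ε) (L : ℝ) :
    ∀ᶠ τ in 𝓝[>] (0 : ℝ), ∀ S : RescaledSolution E p β C τ, ∀ s ∈ Icc s₁ s₂, ∀ h₁ h₂ : E,
      ⟪S.e, h₁⟫ = 0 → ⟪S.e, h₂⟫ = 0 → ‖h₁‖ ≤ L → ‖h₂‖ ≤ L →
      S.w (h₁ + s • S.e) - S.w (h₂ + s • S.e) ≤ ε := by
  obtain ⟨a, ha, ha₀, has⟩ := ((eventually_mul_rpow_lt (sub_pos.2 hβ₁) (2 * C * 2 ^ (1 - β))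
    (half_pos hε)).and (Ioc_mem_nhdsGT hs₁)).exists
  obtain ⟨R, hR, hRs⟩ := ((eventually_mul_rpow_neg_lt hβ₀ (C * (2 * L)) (half_pos hε)).and
    (eventually_ge_atTop (max s₁ s₂))).exists
  have hsR : s₁ ≤ R := (le_max_left _ _).trans hRs
  have hR₀ : 0 < R := hs₁.trans_le hsR
  obtain ⟨Λ, hΛ⟩ := exists_eventually_translate_sub_le (E := E) hp hβ₀.le hβ₁.le hC ha₀
    (has.trans hsR) (half_pos hε) L s₂
  filter_upwards [hΛ, eventually_interior (E := E) (p := p) hβ₀.le hβ₁.le hC ha₀ (L + Λ),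
    eventually_abs_sub_le (E := E) (p := p) hβ₀.le hβ₁.le hC hR₀ (L + Λ)]
    with τ htranslate hnear hfar S s hs h₁ h₂ he₁ he₂ hn₁ hn₂
  rw [← add_halves ε]
  refine htranslate S h₁ h₂ _ (half_pos hε).le he₁ he₂ hn₁ hn₂ (fun x hx hxΛ => ?_) _
    (by rw [S.inner_smul_e]; exact ⟨has.trans hs.1, hs.2.trans ((le_max_right _ _).trans hRs)⟩)
    ((S.norm_smul_e (hs₁.le.trans hs.1)).trans_le hs.2)
  have hinner {h : E} (he : ⟪S.e, h⟫ = 0) : ⟪S.e, h + x⟫ = ⟪S.e, x⟫ := by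
    rw [inner_add_right, he, zero_add]
  have hnorm {h : E} (hn : ‖h‖ ≤ L) : ‖h + x‖ ≤ L + Λ :=
    (norm_add_le _ _).trans (add_le_add hn hxΛ)
  rcases hx with hx | hx
  · have hw {h : E} (he : ⟪S.e, h⟫ = 0) (hn : ‖h‖ ≤ L) : |S.w (h + x)| ≤ C * (2 * a) ^ (1 - β) := by
      simpa only [hinner he, hx] using (hnear S _ (hnorm hn) (hinner he ▸ hx.ge)).2.2
    have hsmall : 2 * (C * (2 * a) ^ (1 - β)) ≤ ε / 2 := by
      rw [Real.mul_rpow zero_le_two ha₀.le]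
      linarith
    linarith [abs_le.1 (hw he₁ hn₁), abs_le.1 (hw he₂ hn₂)]
  · calc S.w (h₁ + x) - S.w (h₂ + x) ≤ C * R ^ (-β) * ‖h₁ + x - (h₂ + x)‖ :=
        (le_abs_self _).trans (hfar S _ _ (hnorm hn₁) (hnorm hn₂) (hinner he₁ ▸ hx.ge)
          (hinner he₂ ▸ hx.ge))
      _ ≤ C * R ^ (-β) * (2 * L) := by
        gcongr
        rw [add_sub_add_right_eq_sub]
        linarith [norm_sub_le h₁ h₂]
      _ ≤ ε / 2 := by linarith

lemma eventually_abs_tangential_sub_le (hp : 1 ≤ p) (hβ₀ : 0 < β) (hβ₁ : β < 1) (hC : 0 ≤ C)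
    {s₁ ε : ℝ} (hs₁ : 0 < s₁) (s₂ : ℝ) (hε : 0 < ε) (L : ℝ) :
    ∀ᶠ τ in 𝓝[>] (0 : ℝ), ∀ S : RescaledSolution E p β C τ, ∀ x, ⟪S.e, x⟫ ∈ Icc s₁ s₂ →
      ‖x‖ ≤ L → |S.w x - S.w (⟪S.e, x⟫ • S.e)| ≤ ε := by
  filter_upwards [eventually_tangential_sub_le (E := E) hp hβ₀ hβ₁ hC hs₁ s₂ hε (2 * L)]
    with τ hτ S x hs hx
  set h := x - ⟪S.e, x⟫ • S.e
  have he : ⟪S.e, h⟫ = 0 := by rw [inner_sub_right, S.inner_smul_e, sub_self]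
  have hn : ‖h‖ ≤ 2 * L := by
    have hs₀ : 0 ≤ ⟪S.e, x⟫ := hs₁.le.trans hs.1
    have hsx : ⟪S.e, x⟫ ≤ ‖x‖ :=
      (le_abs_self _).trans (abs_real_inner_le_norm_of_norm_eq_one S.norm_e x)
    linarith [norm_sub_le x (⟪S.e, x⟫ • S.e), S.norm_smul_e hs₀]
  have hL : ‖(0 : E)‖ ≤ 2 * L := norm_zero.trans_le ((norm_nonneg h).trans hn)
  have h₁ := hτ S _ hs h 0 he (inner_zero_right _) hn hL
  have h₂ := hτ S _ hs 0 h (inner_zero_right _) he hL hn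
  rw [zero_add, sub_add_cancel] at h₁ h₂
  exact abs_le.2 ⟨by linarith, h₁⟩

end RescaledSolution

end RescaledSolution

section BoundaryBarrier

lemma neg_abs_add_mul_abs_le {N m s : ℝ} (hm : 0 ≤ m) (hs : |s| ≤ 1) :
    -((|N| + m) * |s|) ≤ N * s - m * s ^ 2 := by
  have hN : -(|N| * |s|) ≤ N * s := abs_mul N s ▸ neg_abs_le _
  have hms : m * s ^ 2 ≤ m * |s| := by
    rw [← sq_abs]
    gcongr
    exact pow_le_of_le_one (abs_nonneg s) hs two_ne_zero
  linarith

lemma exists_barrier_parameters {C N m : ℝ} (hC : 0 ≤ C) (hm : 0 < m) (k : ℝ) :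
    ∃ L ≥ 1, ∃ A > 0, A ≤ m ∧ 2 * A * L ≤ m ∧ 2 * A * k < m ∧ 2 * C + |N| + m ≤ A * L ^ 2 := by
  set c := 2 * C + |N| + m
  have hc : 0 < c := by positivity
  obtain ⟨L, ⟨⟨hL, hL₁⟩, hL₂⟩, hLk⟩ := ((((eventually_ge_atTop (1 : ℝ)).and
    (eventually_mul_rpow_neg_lt one_pos (2 * c) hm)).and
    (eventually_mul_rpow_neg_lt two_pos c hm)).and
    (eventually_mul_rpow_neg_lt two_pos (2 * c * k) hm)).exists
  have hL₀ : 0 < L := one_pos.trans_le hL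
  rw [Real.rpow_neg_one, ← div_eq_mul_inv] at hL₁
  rw [Real.rpow_neg hL₀.le, Real.rpow_two, ← div_eq_mul_inv] at hL₂ hLk
  refine ⟨L, hL, c / L ^ 2, by positivity, hL₂.le, ?_, ?_, ?_⟩
  · calc 2 * (c / L ^ 2) * L = 2 * c / L := by field_simp
      _ ≤ m := hL₁.le
  · calc 2 * (c / L ^ 2) * k = 2 * c * k / L ^ 2 := by ring
      _ < m := hLk
  · exact (div_mul_cancel₀ c (by positivity)).ge

namespace RescaledSolution

variable {E : Type*} [NormedAddCommGroup E] [InnerProductSpace ℝ E] [CompleteSpace E]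
  {p β C τ : ℝ}

lemma abs_inner_le_of_mem_frontier (S : RescaledSolution E p β C τ) {x : E}
    (hx : x ∈ frontier S.D) (hτx : τ * ‖x‖ ≤ 1) : |⟪S.e, x⟫| ≤ τ * ‖x‖ ^ 2 := by
  refine abs_le.2 ⟨(S.bound x (frontier_subset_closure hx) hτx).1, not_lt.1 fun hlt => ?_⟩
  rw [S.isOpen.frontier_eq] at hx
  exact hx.2 (S.interior x hτx hlt).1

lemma abs_le_two_mul (S : RescaledSolution E p β C τ) (hβ₀ : 0 ≤ β) (hβ₁ : β ≤ 1) (hC : 0 ≤ C)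
    {x : E} (hx : x ∈ closure S.D) (hτx : τ * ‖x‖ ≤ 1) (hτx' : τ * ‖x‖ ^ 2 ≤ 1)
    (hex : |⟪S.e, x⟫| ≤ 1) : |S.w x| ≤ 2 * C := by
  obtain ⟨hinner, hw⟩ := S.bound x hx hτx
  have hpow : (|⟪S.e, x⟫| + τ * ‖x‖ ^ 2) ^ (1 - β) ≤ 2 := by
    calc (|⟪S.e, x⟫| + τ * ‖x‖ ^ 2) ^ (1 - β) ≤ 2 ^ (1 - β) :=
          Real.rpow_le_rpow (by linarith [le_abs_self ⟪S.e, x⟫]) (by linarith) (by linarith)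
      _ ≤ 2 ^ (1 : ℝ) := Real.rpow_le_rpow_of_exponent_le one_le_two (by linarith)
      _ = 2 := Real.rpow_one 2
  nlinarith

lemma abs_apply_e_le_two_mul (S : RescaledSolution E p β C τ) (hβ₀ : 0 ≤ β) (hβ₁ : β ≤ 1)
    (hC : 0 ≤ C) (hτ : τ < 1) : |S.w S.e| ≤ 2 * C := by
  have hmem : S.e ∈ S.D :=
    (S.interior S.e (by simpa [S.norm_e] using hτ.le) (by simpa [S.norm_e, S.inner_e_e] using hτ)).1
  exact S.abs_le_two_mul hβ₀ hβ₁ hC (subset_closure hmem) (by simpa [S.norm_e] using hτ.le)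
    (by simpa [S.norm_e] using hτ.le) (by rw [S.inner_e_e, abs_one])

lemma le_barrier_of_boundary (S : RescaledSolution E p β C τ) (hβ₀ : 0 ≤ β) (hβ₁ : β ≤ 1)
    (hC : 0 ≤ C) {N m A L σ : ℝ} (hm : 0 ≤ m) (hA : 0 ≤ A) (hσ : |σ| = 1)
    (hτA : (|N| + m) * τ ≤ A) (hAL : 2 * C + |N| + m ≤ A * L ^ 2)
    (htop : ∀ x, ⟪S.e, x⟫ = 1 → ‖x‖ ≤ L → σ * S.w x ≤ N - m) {x : E} (hx : x ∈ closure S.D)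
    (hτx : τ * ‖x‖ ≤ 1) (hτx' : τ * ‖x‖ ^ 2 ≤ 1) (hex : ⟪S.e, x⟫ ≤ 1) (hxL : ‖x‖ ≤ L)
    (hbdry : x ∈ frontier S.D ∨ ‖x‖ = L ∨ ⟪S.e, x⟫ = 1) :
    σ * S.w x ≤ N * ⟪S.e, x⟫ - m * ⟪S.e, x⟫ ^ 2 + A * ‖x‖ ^ 2 := by
  have habs : |⟪S.e, x⟫| ≤ 1 := abs_le.2 ⟨by linarith [(S.bound x hx hτx).1], hex⟩
  have hlower := neg_abs_add_mul_abs_le (N := N) hm habs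
  have hAx : 0 ≤ A * ‖x‖ ^ 2 := by positivity
  rcases hbdry with hfr | hnorm | htop'
  · rw [S.eq_zero x hfr, mul_zero]
    have : (|N| + m) * |⟪S.e, x⟫| ≤ A * ‖x‖ ^ 2 := by
      calc (|N| + m) * |⟪S.e, x⟫| ≤ (|N| + m) * (τ * ‖x‖ ^ 2) := by
            gcongr
            exact S.abs_inner_le_of_mem_frontier hfr hτx
        _ = (|N| + m) * τ * ‖x‖ ^ 2 := by ring
        _ ≤ A * ‖x‖ ^ 2 := by gcongr
    linarith
  · have hw : σ * S.w x ≤ 2 * C := by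
      calc σ * S.w x ≤ |σ * S.w x| := le_abs_self _
        _ = |S.w x| := by rw [abs_mul, hσ, one_mul]
        _ ≤ 2 * C := S.abs_le_two_mul hβ₀ hβ₁ hC hx hτx hτx' habs
    have hNm : (|N| + m) * |⟪S.e, x⟫| ≤ |N| + m := mul_le_of_le_one_right (by positivity) habs
    rw [hnorm]
    linarith
  · have := htop x htop' hxL
    rw [htop']
    linarith

variable [FiniteDimensional ℝ E]

lemma le_barrier (S : RescaledSolution E p β C τ) (hβ₀ : 0 ≤ β) (hβ₁ : β ≤ 1) (hC : 0 ≤ C)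
    {N m A L σ : ℝ} (hτ : 0 ≤ τ) (hm : 0 ≤ m) (hA : 0 ≤ A) (hσ : |σ| = 1) (hτL : τ * L ≤ 1)
    (hτL' : τ * L ^ 2 ≤ 1) (hτA : (|N| + m) * τ ≤ A) (hAL : 2 * C + |N| + m ≤ A * L ^ 2)
    (htop : ∀ x, ⟪S.e, x⟫ = 1 → ‖x‖ ≤ L → σ * S.w x ≤ N - m)
    (htrace : ∀ x ∈ S.D, ‖S.g x‖ ≤ |N| + 2 * m + 2 * A * L →
      2 * A * Module.finrank ℝ E - 2 * m < σ * clmTrace (S.H x))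
    {x : E} (hx : x ∈ closure S.D) (hex : ⟪S.e, x⟫ ≤ 1) (hxL : ‖x‖ ≤ L) :
    σ * S.w x ≤ N * ⟪S.e, x⟫ - m * ⟪S.e, x⟫ ^ 2 + A * ‖x‖ ^ 2 := by
  have hcont : Continuous fun x : E => ⟪S.e, x⟫ := by fun_prop
  set K := (closure S.D ∩ {x | ⟪S.e, x⟫ ≤ 1}) ∩ closedBall (0 : E) L
  have hK : IsCompact K := (isCompact_closedBall _ _).inter_left
    (isClosed_closure.inter (isClosed_le hcont continuous_const))
  refine le_of_clmTrace_lt hK (w := fun x => σ * S.w x)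
    ((S.continuousOn.mono fun y hy => hy.1.1).const_mul σ)
    (fun y _ => (hasHessianAt_barrier S.e y N m A).continuousAt.continuousWithinAt) ?_
    ⟨⟨hx, hex⟩, mem_closedBall_zero_iff.2 hxL⟩
  rintro y ⟨⟨hy, hey⟩, hyL⟩
  rw [mem_closedBall_zero_iff] at hyL
  have hτy : τ * ‖y‖ ≤ 1 := (by gcongr : τ * ‖y‖ ≤ τ * L).trans hτL
  have hτy' : τ * ‖y‖ ^ 2 ≤ 1 := (by gcongr : τ * ‖y‖ ^ 2 ≤ τ * L ^ 2).trans hτL'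
  by_cases hbdry : y ∈ frontier S.D ∨ ‖y‖ = L ∨ ⟪S.e, y⟫ = 1
  · exact .inl (S.le_barrier_of_boundary hβ₀ hβ₁ hC hm hA hσ hτA hAL htop hy hτy hτy' hey hyL hbdry)
  push Not at hbdry
  have hyD : y ∈ S.D := by
    by_contra hyD
    exact hbdry.1 (S.isOpen.frontier_eq ▸ ⟨hy, hyD⟩)
  refine .inr ⟨inter_mem (inter_mem ?_ ?_) ?_, _, _, _, _,
    (S.hasHessianAt y hyD).const_mul σ, hasHessianAt_barrier S.e y N m A, fun hg => ?_⟩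
  · exact mem_of_superset (S.isOpen.mem_nhds hyD) subset_closure
  · exact mem_of_superset ((isOpen_lt hcont continuous_const).mem_nhds (hey.lt_of_ne hbdry.2.2))
      fun z (hz : ⟪S.e, z⟫ < 1) => hz.le
  · exact closedBall_mem_nhds_of_mem (by simpa using hyL.lt_of_ne hbdry.2.1)
  · have hgnorm : ‖S.g y‖ ≤ |N| + 2 * m + 2 * A * L := by
      calc ‖S.g y‖ = ‖σ • S.g y‖ := by rw [norm_smul, Real.norm_eq_abs, hσ, one_mul]
        _ = ‖(N - 2 * m * ⟪S.e, y⟫) • S.e + (2 * A) • y‖ := by rw [hg]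
        _ ≤ |N - 2 * m * ⟪S.e, y⟫| + 2 * A * L := norm_smul_add_two_smul_le S.norm_e hA hyL
        _ ≤ |N| + 2 * m + 2 * A * L := by
          have habs : |⟪S.e, y⟫| ≤ 1 := abs_le.2 ⟨by linarith [(S.bound y hy hτy).1], hey⟩
          have : |2 * m * ⟪S.e, y⟫| ≤ 2 * m := by
            rw [abs_mul, abs_of_nonneg (by positivity : 0 ≤ 2 * m)]
            exact mul_le_of_le_one_right (by positivity) habs
          linarith [abs_sub N (2 * m * ⟪S.e, y⟫)]
    simpa only [clmTrace_barrier S.norm_e, map_smul, smul_eq_mul] using htrace y hyD hgnorm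

lemma eventually_le_linear_add (hp : 1 ≤ p) (hβ₀ : 0 < β) (hβ₁ : β < 1) (hC : 0 ≤ C) (N : ℝ) {m : ℝ}
    (hm : 0 < m) :
    ∀ᶠ τ in 𝓝[>] (0 : ℝ), ∀ S : RescaledSolution E p β C τ, ∀ σ : ℝ, |σ| = 1 →
      σ * S.w S.e ≤ N - 2 * m →
      (∀ x ∈ S.D, ‖S.g x‖ ≤ |N| + 3 * m → -m ≤ σ * clmTrace (S.H x)) →
      ∀ x ∈ closure S.D, ⟪S.e, x⟫ ≤ 1 → ‖x‖ ≤ 1 → σ * S.w x ≤ N * ⟪S.e, x⟫ + m * ‖x‖ ^ 2 := by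
  obtain ⟨L, hL, A, hA, hAm, hAL, hAn, hCA⟩ :=
    exists_barrier_parameters (N := N) hC hm (Module.finrank ℝ E)
  filter_upwards [eventually_abs_tangential_sub_le (E := E) hp hβ₀ hβ₁ hC one_pos 1 hm L,
    eventually_mul_lt L one_pos, eventually_mul_lt (L ^ 2) one_pos, eventually_mul_lt (|N| + m) hA,
    self_mem_nhdsWithin] with τ htangential hτL hτL' hτA hτ S σ hσ hσe htrace x hx hex hx₁
  have htop : ∀ y, ⟪S.e, y⟫ = 1 → ‖y‖ ≤ L → σ * S.w y ≤ N - m := fun y hy hyL => by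
    have hdiff : σ * (S.w y - S.w S.e) ≤ m := by
      calc σ * (S.w y - S.w S.e) ≤ |S.w y - S.w S.e| := by
            simpa [abs_mul, hσ] using le_abs_self (σ * (S.w y - S.w S.e))
        _ ≤ m := by simpa [hy] using htangential S y (by simp [hy]) hyL
    linarith
  have hbarrier := S.le_barrier hβ₀.le hβ₁.le hC hτ.le hm.le hA.le hσ (by linarith) (by linarith)
    hτA.le hCA htop
    (fun y hy hgy => by linarith [htrace y hy (hgy.trans (by linarith))]) hx hex (hx₁.trans hL)
  calc σ * S.w x ≤ N * ⟪S.e, x⟫ - m * ⟪S.e, x⟫ ^ 2 + A * ‖x‖ ^ 2 := hbarrier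
    _ ≤ N * ⟪S.e, x⟫ + m * ‖x‖ ^ 2 := by
      have : 0 ≤ m * ⟪S.e, x⟫ ^ 2 := by positivity
      have : A * ‖x‖ ^ 2 ≤ m * ‖x‖ ^ 2 := by gcongr
      linarith

lemma eventually_le_linear_of_le (hp : 1 ≤ p) (hβ₀ : 0 < β) (hβ₁ : β < 1) (hC : 0 ≤ C) {q η : ℝ}
    (hq : 0 < q) (hη : 0 < η) (hη₁ : η ≤ 1) (hqη : (4 * q) ^ p ≤ η * q / 4) :
    ∀ᶠ τ in 𝓝[>] (0 : ℝ), ∀ S : RescaledSolution E p β C τ, S.w S.e ≤ q →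
      ∀ x ∈ closure S.D, ⟪S.e, x⟫ ≤ 1 → ‖x‖ ≤ 1 →
        S.w x ≤ q * (1 + η) * ⟪S.e, x⟫ + η * q / 2 * ‖x‖ ^ 2 := by
  filter_upwards [eventually_le_linear_add (E := E) hp hβ₀ hβ₁ hC (q * (1 + η))
      (show 0 < η * q / 2 by positivity),
    eventually_mul_lt 1 (show 0 < η * q / 4 by positivity)] with τ hlinear hτ S hwe x hx hex hx₁
  have := hlinear S 1 abs_one (by linarith) (fun y hy hgy => ?_) x hx hex hx₁
  · linarith
  rw [abs_of_pos (by positivity)] at hgy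
  have hg : ‖S.g y‖ ≤ 4 * q := by nlinarith
  have hgp : ‖S.g y‖ ^ p ≤ (4 * q) ^ p := by gcongr
  linarith [abs_le.1 (S.pde y hy)]

lemma eventually_linear_le_of_le (hp : 1 ≤ p) (hβ₀ : 0 < β) (hβ₁ : β < 1) (hC : 0 ≤ C) (q : ℝ)
    {η : ℝ} (hη : 0 < η) :
    ∀ᶠ τ in 𝓝[>] (0 : ℝ), ∀ S : RescaledSolution E p β C τ, q ≤ S.w S.e →
      ∀ x ∈ closure S.D, ⟪S.e, x⟫ ≤ 1 → ‖x‖ ≤ 1 →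
        (q - η) * ⟪S.e, x⟫ - η / 2 * ‖x‖ ^ 2 ≤ S.w x := by
  filter_upwards [eventually_le_linear_add (E := E) hp hβ₀ hβ₁ hC (η - q) (half_pos hη),
    eventually_mul_lt 1 (half_pos hη)] with τ hlinear hτ S hwe x hx hex hx₁
  have := hlinear S (-1) (by simp) (by linarith) (fun y hy _ => ?_) x hx hex hx₁
  · linarith
  have hgp : 0 ≤ ‖S.g y‖ ^ p := by positivity
  linarith [abs_le.1 (S.pde y hy)]

end RescaledSolution

end BoundaryBarrier

section NormalSlope

namespace RescaledSolution

variable {E : Type*} [NormedAddCommGroup E] [InnerProductSpace ℝ E] [CompleteSpace E]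
  {p β C τ : ℝ}

lemma inner_mem_Icc_of_mem_closedBall (S : RescaledSolution E p β C τ) {d r : ℝ} {x : E}
    (hx : x ∈ closedBall (d • S.e) r) : ⟪S.e, x⟫ ∈ Icc (d - r) (d + r) := by
  have habs : |⟪S.e, x⟫ - d| ≤ r := by
    calc |⟪S.e, x⟫ - d| = |⟪S.e, x - d • S.e⟫| := by rw [inner_sub_right, S.inner_smul_e]
      _ ≤ ‖x - d • S.e‖ := abs_real_inner_le_norm_of_norm_eq_one S.norm_e _
      _ ≤ r := mem_closedBall_iff_norm.1 hx
  exact ⟨by linarith [(abs_le.1 habs).1], by linarith [(abs_le.1 habs).2]⟩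

lemma norm_le_of_mem_closedBall (S : RescaledSolution E p β C τ) {d r : ℝ} (hd : 0 ≤ d) {x : E}
    (hx : x ∈ closedBall (d • S.e) r) : ‖x‖ ≤ d + r := by
  have := norm_le_norm_add_norm_sub' x (d • S.e)
  rw [S.norm_smul_e hd] at this
  linarith [mem_closedBall_iff_norm.1 hx]

lemma mem_of_mem_closedBall_half (S : RescaledSolution E p β C τ) (hβ₀ : 0 ≤ β) (hC : 0 ≤ C)
    (hτ : 0 ≤ τ) {d : ℝ} (hd : 0 < d) (hτd : τ * d ≤ 1 / 8) {x : E}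
    (hx : x ∈ closedBall (d • S.e) (d / 2)) : x ∈ S.D ∧ ‖S.g x‖ ≤ C * (d / 2) ^ (-β) := by
  have hnorm : ‖x‖ ≤ 3 / 2 * d := by linarith [S.norm_le_of_mem_closedBall hd.le hx]
  have hinner : d / 2 ≤ ⟪S.e, x⟫ := by linarith [(S.inner_mem_Icc_of_mem_closedBall hx).1]
  have hlt : τ * ‖x‖ ^ 2 < ⟪S.e, x⟫ := by
    calc τ * ‖x‖ ^ 2 ≤ τ * (3 / 2 * d) ^ 2 := by gcongr
      _ = 9 / 4 * (τ * d) * d := by ring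
      _ ≤ 9 / 4 * (1 / 8) * d := by gcongr
      _ < d / 2 := by linarith
      _ ≤ ⟪S.e, x⟫ := hinner
  have hle : τ * ‖x‖ ≤ 1 := by
    calc τ * ‖x‖ ≤ τ * (3 / 2 * d) := by gcongr
      _ ≤ 1 := by linarith
  obtain ⟨hxD, hgx⟩ := S.interior x hle hlt
  exact ⟨hxD, hgx.trans (mul_le_mul_of_nonneg_left
    (Real.rpow_le_rpow_of_nonpos (half_pos hd) hinner (neg_nonpos.2 hβ₀)) hC)⟩

variable [FiniteDimensional ℝ E]

lemma norm_gradient_sub_smul_le (S : RescaledSolution E p β C τ) (hp : 1 ≤ p) (hβ₀ : 0 ≤ β)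
    (hβp : β * (p - 1) = 1) (hC : 0 ≤ C) (hτ : 0 ≤ τ) {d ε κ c q k : ℝ} (hd : 0 < d)
    (hτd : τ * d ≤ 1 / 8) (hε : ε ∈ Ioc 0 (1 / 2)) (hκ : 0 < κ) (hk : k = 2 * p * C ^ (p - 1))
    (hkε : k * ε ≤ 1) (hτκ : τ * d ≤ κ) (hq : k * |q| * ε ^ 2 ≤ κ)
    (hw : ∀ x ∈ closedBall (d • S.e) (ε * d), |S.w x - (c + q * ⟪S.e, x⟫)| ≤ κ * d) :
    ‖S.g (d • S.e) - q • S.e‖ ≤ (2 * Module.finrank ℝ E + 5) * (κ / ε) := by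
  obtain ⟨hε₀, hε₁⟩ := hε
  have hmem {x : E} (hx : x ∈ closedBall (d • S.e) (ε * d)) :=
    S.mem_of_mem_closedBall_half hβ₀ hC hτ hd hτd (closedBall_subset_closedBall (by nlinarith) hx)
  have hΓ : p * (C * (d / 2) ^ (-β)) ^ (p - 1) = k / d := by
    rw [Real.mul_rpow hC (by positivity), ← Real.rpow_mul (by positivity), neg_mul, hβp,
      Real.rpow_neg_one, hk]
    field_simp
  have haff (x : E) : c + q * d + ⟪q • S.e, x - d • S.e⟫ = c + q * ⟪S.e, x⟫ := by
    rw [real_inner_smul_left, inner_sub_right, S.inner_smul_e]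
    ring
  have hgrad := norm_gradient_sub_le hp (mul_pos hε₀ hd) (mul_pos hκ hd)
    (fun x hx => S.hasHessianAt x (hmem hx).1) (fun x hx => S.pde x (hmem hx).1)
    (fun x hx => (hmem hx).2) (c := c + q * d) (ζ := q • S.e)
    (fun x hx => (haff x).symm ▸ hw x hx)
    (by rw [hΓ]; field_simp; exact hkε)
    (by
      calc τ * (ε * d) ^ 2 = τ * d * ε ^ 2 * d := by ring
        _ ≤ κ * 1 * d := by
          gcongr
          exact pow_le_one₀ hε₀.le (by linarith)
        _ = κ * d := by ring)
    (by
      rw [hΓ, norm_smul, S.norm_e, mul_one, Real.norm_eq_abs]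
      calc k / d * |q| * (ε * d) ^ 2 = k * |q| * ε ^ 2 * d := by field_simp
        _ ≤ κ * d := by gcongr)
  calc ‖S.g (d • S.e) - q • S.e‖ ≤ (2 * Module.finrank ℝ E + 5) * (κ * d) / (ε * d) := hgrad
    _ = (2 * Module.finrank ℝ E + 5) * (κ / ε) := by field_simp

lemma eventually_apply_smul_le (hp : 1 ≤ p) (hβ₀ : 0 < β) (hβ₁ : β < 1) (hC : 0 ≤ C) {q η : ℝ}
    (hq : 0 < q) (hη : 0 < η) (hη₁ : η ≤ 1) (hqη : (4 * q) ^ p ≤ η * q / 4) :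
    ∀ᶠ τ in 𝓝[>] (0 : ℝ), ∀ S : RescaledSolution E p β C τ, S.w S.e ≤ q → ∀ s ∈ Ioc 0 (1 / 2 : ℝ),
      S.w (s • S.e) ≤ (1 + 2 * η) * (1 / 2) ^ β * (q * s ^ (1 - β)) := by
  filter_upwards [eventually_le_linear_of_le (E := E) hp hβ₀ hβ₁ hC hq hη hη₁ hqη,
    eventually_mul_lt 1 one_pos] with τ hlinear hτ S hwe s hs
  obtain ⟨hs₀, hs₁⟩ := hs
  have hnorm := S.norm_smul_e hs₀.le
  have hinner := S.inner_smul_e s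
  have hmem : s • S.e ∈ S.D := (S.interior _ (by rw [hnorm]; nlinarith)
    (by rw [hnorm, hinner]; nlinarith)).1
  have hle := hlinear S hwe _ (subset_closure hmem) (by linarith) (by linarith)
  rw [hnorm, hinner] at hle
  calc S.w (s • S.e) ≤ (1 + 2 * η) * q * s := by
        have : η * q * s ^ 2 ≤ η * q * s := by gcongr; nlinarith
        have : 0 ≤ η * q * s := by positivity
        linarith
    _ = (1 + 2 * η) * s ^ β * (q * s ^ (1 - β)) := by
        have hsplit : s ^ β * s ^ (1 - β) = s := by
          rw [← Real.rpow_add hs₀, add_sub_cancel, Real.rpow_one]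
        linear_combination (-(1 + 2 * η) * q) * hsplit
    _ ≤ (1 + 2 * η) * (1 / 2) ^ β * (q * s ^ (1 - β)) := by gcongr

lemma eventually_norm_gradient_sub_le (hp : 1 ≤ p) (hβ₀ : 0 < β) (hβ₁ : β < 1)
    (hβp : β * (p - 1) = 1) (hC : 0 ≤ C) {q η N : ℝ} (hq : 0 < q) (hη : 0 < η)
    (hqη : (4 * q) ^ p ≤ η * q / 4) (hN : N = 2 * Module.finrank ℝ E + 5) (hηN : 16 * N * η ≤ 1)
    (hηC : 64 * p * C ^ (p - 1) * N ^ 2 * η ≤ 1) :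
    ∀ᶠ τ in 𝓝[>] (0 : ℝ), ∀ S : RescaledSolution E p β C τ, S.w S.e = q →
      ∀ d ∈ Ioc 0 (1 / 4 : ℝ), ‖S.g (d • S.e) - q • S.e‖ ≤ q / 4 := by
  have hN₁ : 1 ≤ N := by rw [hN]; linarith [(Module.finrank ℝ E).cast_nonneg (α := ℝ)]
  have hηq : 0 < η * q := mul_pos hη hq
  have hη₁ : η ≤ 1 := by nlinarith
  filter_upwards [eventually_le_linear_of_le (E := E) hp hβ₀ hβ₁ hC hq hη hη₁ hqη,
    eventually_linear_le_of_le (E := E) hp hβ₀ hβ₁ hC q hηq, eventually_mul_lt 2 one_pos,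
    eventually_mul_lt 1 hηq, self_mem_nhdsWithin] with τ hupper hlower hτ₁ hτη hτ S hwe d hd
  have hτ : 0 < τ := hτ
  have hτd : τ * d ≤ 1 / 8 := by nlinarith [hd.1, hd.2]
  set k := 2 * p * C ^ (p - 1) with hk
  have hk₀ : 0 ≤ k := by positivity
  have hηk : 32 * k * N ^ 2 * η ≤ 1 := by rw [hk]; linarith
  have hε : 8 * N * η ∈ Ioc 0 (1 / 2) := ⟨by positivity, by linarith⟩
  have hgrad := S.norm_gradient_sub_smul_le hp hβ₀.le hβp hC hτ.le hd.1 hτd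
    (ε := 8 * N * η) (κ := 2 * (η * q)) (c := 0) (q := q) hε (by positivity) hk
    (by nlinarith [mul_nonneg hk₀ (mul_nonneg (sub_nonneg.2 hN₁) hη.le)])
    (by nlinarith [hd.1, hd.2])
    (by
      rw [abs_of_pos hq]
      nlinarith [mul_le_mul_of_nonneg_left hηk hηq.le])
    (fun x hx => ?_)
  · rw [← hN] at hgrad
    refine hgrad.trans_eq ?_
    field_simp
    norm_num
  · replace hx : x ∈ closedBall (d • S.e) (d / 2) :=
      closedBall_subset_closedBall (by nlinarith [hε.2, hd.1]) hx
    have hxD := subset_closure (S.mem_of_mem_closedBall_half hβ₀.le hC hτ.le hd.1 hτd hx).1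
    have hinner := S.inner_mem_Icc_of_mem_closedBall hx
    have hnorm := S.norm_le_of_mem_closedBall hd.1.le hx
    have hU := hupper S hwe.le x hxD (by linarith [hinner.2, hd.2]) (by linarith [hd.2])
    have hL := hlower S hwe.ge x hxD (by linarith [hinner.2, hd.2]) (by linarith [hd.2])
    have hlin : η * q * ⟪S.e, x⟫ ≤ η * q * (3 / 2 * d) := by gcongr; linarith [hinner.2]
    have hsq : η * q * ‖x‖ ^ 2 ≤ η * q * d := by
      gcongr
      nlinarith [norm_nonneg x, hd.1, hd.2]
    rw [zero_add]
    exact abs_le.2 ⟨by linarith, by linarith⟩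

lemma exists_eventually_norm_gradient_le (hp : 1 ≤ p) (hβ₀ : 0 < β) (hβ₁ : β < 1)
    (hβp : β * (p - 1) = 1) (hC : 0 ≤ C) {q η : ℝ} (hq : 0 < q) (hη : 0 < η) (hη₁ : η ≤ 1)
    (hqη : (4 * q) ^ p ≤ η * q / 4) :
    ∃ K, ∀ᶠ τ in 𝓝[>] (0 : ℝ), ∀ S : RescaledSolution E p β C τ, S.w S.e ≤ q →
      ∀ d ∈ Ioc 0 (1 / 4 : ℝ), ‖S.g (d • S.e)‖ ≤ K := by
  set k := 2 * p * C ^ (p - 1) with hk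
  set κ := 4 * q + 4 * C + 2
  set ε := min (1 / 2) (1 / (k + 1))
  have hk₀ : 0 ≤ k := by positivity
  have hε : 0 < ε := by positivity
  have hε₁ : ε ≤ 1 / 2 := min_le_left _ _
  have hkε : k * ε ≤ 1 := by
    calc k * ε ≤ (k + 1) * (1 / (k + 1)) := by gcongr; exacts [by linarith, min_le_right _ _]
      _ = 1 := by field_simp
  refine ⟨(2 * Module.finrank ℝ E + 5) * (κ / ε), ?_⟩
  filter_upwards [eventually_le_linear_of_le (E := E) hp hβ₀ hβ₁ hC hq hη hη₁ hqη,
    eventually_linear_le_of_le (E := E) hp hβ₀ hβ₁ hC (-(2 * C)) one_pos,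
    eventually_mul_lt 2 one_pos, self_mem_nhdsWithin] with τ hupper hlower hτ₁ hτ S hwe d hd
  have hτ : 0 < τ := hτ
  have hτd : τ * d ≤ 1 / 8 := by nlinarith [hd.1, hd.2]
  have hbelow := (abs_le.1 (S.abs_apply_e_le_two_mul hβ₀.le hβ₁.le hC (by linarith))).1
  have hgrad := S.norm_gradient_sub_smul_le hp hβ₀.le hβp hC hτ.le hd.1 hτd (c := 0) (q := 0)
    (κ := κ) ⟨hε, hε₁⟩ (by positivity) hk hkε (by simp only [κ]; linarith)
    (by simp only [abs_zero, mul_zero, zero_mul]; positivity) (fun x hx => ?_)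
  · simpa only [zero_smul, sub_zero] using hgrad
  · replace hx : x ∈ closedBall (d • S.e) (d / 2) :=
      closedBall_subset_closedBall (by nlinarith [hε₁, hd.1]) hx
    have hxD := subset_closure (S.mem_of_mem_closedBall_half hβ₀.le hC hτ.le hd.1 hτd hx).1
    have hinner := S.inner_mem_Icc_of_mem_closedBall hx
    have hnorm := S.norm_le_of_mem_closedBall hd.1.le hx
    have hU := hupper S hwe x hxD (by linarith [hinner.2, hd.2]) (by linarith [hd.2])
    have hL := hlower S hbelow x hxD (by linarith [hinner.2, hd.2]) (by linarith [hd.2])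
    have hs : ⟪S.e, x⟫ ≤ 3 / 2 * d := by linarith [hinner.2]
    have hs₀ : 0 ≤ ⟪S.e, x⟫ := by linarith [hinner.1, hd.1]
    have hsq : ‖x‖ ^ 2 ≤ d := by nlinarith [norm_nonneg x, hd.1, hd.2]
    have hlinU : q * (1 + η) * ⟪S.e, x⟫ ≤ q * (1 + 1) * (3 / 2 * d) := by gcongr
    have hsqU : η * q * ‖x‖ ^ 2 ≤ 1 * q * d := by gcongr
    have hlinL : (2 * C + 1) * ⟪S.e, x⟫ ≤ (2 * C + 1) * (3 / 2 * d) := by gcongr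
    have hd₀ := hd.1
    have hqd : 0 ≤ q * d := by positivity
    have hCd : 0 ≤ C * d := by positivity
    rw [zero_mul, add_zero, sub_zero]
    exact abs_le.2 ⟨by simp only [κ]; linarith, by simp only [κ]; linarith⟩

end RescaledSolution

end NormalSlope

section Chord

/-- The value at `x` of the chord of `f` over `[a, b]`: the affine function that agrees with `f` at
`a` and at `b`. -/
def chord (f : ℝ → ℝ) (a b x : ℝ) : ℝ :=
  f a + slope f a b * (x - a)

lemma chord_left (f : ℝ → ℝ) (a b : ℝ) : chord f a b a = f a := by
  simp [chord]

lemma slope_mul_sub (f : ℝ → ℝ) (a b : ℝ) : slope f a b * (b - a) = f b - f a := by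
  rw [mul_comm, ← smul_eq_mul, sub_smul_slope, vsub_eq_sub]

lemma chord_right (f : ℝ → ℝ) (a b : ℝ) : chord f a b b = f b := by
  rw [chord, slope_mul_sub, add_sub_cancel]

lemma abs_chord_le {f : ℝ → ℝ} {a b x A : ℝ} (hab : a < b) (ha : |f a| ≤ A) (hb : |f b| ≤ A)
    (hx : x ∈ Icc a b) : |chord f a b x| ≤ A := by
  have hba : 0 < b - a := sub_pos.2 hab
  have hconvex : chord f a b x = (b - x) / (b - a) * f a + (x - a) / (b - a) * f b := by
    rw [chord, slope_def_field]
    field_simp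
    ring
  rw [hconvex, ← Real.norm_eq_abs, ← mem_closedBall_zero_iff, ← smul_eq_mul, ← smul_eq_mul]
  exact convex_closedBall 0 A (mem_closedBall_zero_iff.2 ha) (mem_closedBall_zero_iff.2 hb)
    (div_nonneg (sub_nonneg.2 hx.2) hba.le) (div_nonneg (sub_nonneg.2 hx.1) hba.le)
    (by field_simp; ring)

lemma slope_sub_le_slope {f : ℝ → ℝ} {a b c ε : ℝ} (hab : a < b)
    (h : chord f a c b ≤ f b + ε * (b - a)) : slope f a c - ε ≤ slope f a b := by
  have := slope_mul_sub f a b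
  rw [chord] at h
  exact le_of_mul_le_mul_right (by linarith) (sub_pos.2 hab)

lemma HasHessianAt.mul_sub_chord {E : Type*} [NormedAddCommGroup E] [InnerProductSpace ℝ E]
    [CompleteSpace E] {w : E → ℝ} {g : E → E} {A : E →L[ℝ] E} {x : E} (h : HasHessianAt w g A x)
    (e : E) (σ F : ℝ) (f : ℝ → ℝ) (a b : ℝ) :
    HasHessianAt
      (fun y => σ * w y +
        (F * ((⟪e, y⟫ - a) * (⟪e, y⟫ - b)) - σ * chord f a b ⟪e, y⟫))
      (fun y => σ • g y + (F * (⟪e, y⟫ - a + (⟪e, y⟫ - b)) - σ * slope f a b) • e)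
      (σ • A + (2 * F) • InnerProductSpace.rankOne ℝ e e) x := by
  refine (h.const_mul σ).add (.ridge
    (α := fun s => F * ((s - a) * (s - b)) - σ * chord f a b s)
    (α' := fun s => F * (s - a + (s - b)) - σ * slope f a b) (fun s => ?_) ?_)
  · have ha := (hasDerivAt_id s).sub_const a
    have hb := (hasDerivAt_id s).sub_const b
    exact (((ha.mul hb).const_mul F).sub
      (((ha.const_mul (slope f a b)).const_add (f a)).const_mul σ)).congr_deriv
      (by dsimp only [id]; ring)
  · have ha := (hasDerivAt_id ⟪e, x⟫).sub_const a
    have hb := (hasDerivAt_id ⟪e, x⟫).sub_const b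
    exact (((ha.add hb).const_mul F).sub_const _).congr_deriv (by ring)

namespace RescaledSolution

variable {E : Type*} [NormedAddCommGroup E] [InnerProductSpace ℝ E] [CompleteSpace E]
  {p β C τ : ℝ}

/-- The restriction of a rescaled solution to the inward normal through the origin. -/
def profile (S : RescaledSolution E p β C τ) (s : ℝ) : ℝ :=
  S.w (s • S.e)

lemma eventually_abs_slope_profile_le (hβ₀ : 0 ≤ β) (hβ₁ : β ≤ 1) (hC : 0 ≤ C) {a b : ℝ}
    (ha : 0 < a) (hab : a < b) :
    ∀ᶠ τ in 𝓝[>] (0 : ℝ), ∀ S : RescaledSolution E p β C τ,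
      |slope S.profile a b| ≤ C * a ^ (-β) := by
  filter_upwards [eventually_abs_sub_le (E := E) (p := p) hβ₀ hβ₁ hC ha b] with τ hτ S
  have hb : 0 < b := ha.trans hab
  have hba : 0 < b - a := sub_pos.2 hab
  have hdiff := hτ S (b • S.e) (a • S.e) (S.norm_smul_e hb.le).le
    ((S.norm_smul_e ha.le).trans_le hab.le) (by rw [S.inner_smul_e]; exact hab.le)
    (S.inner_smul_e a).ge
  rw [← sub_smul, S.norm_smul_e hba.le] at hdiff
  refine le_of_mul_le_mul_right ?_ hba
  calc |slope S.profile a b| * (b - a) = |S.profile b - S.profile a| := by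
        rw [← slope_mul_sub, abs_mul, abs_of_pos hba]
    _ ≤ C * a ^ (-β) * (b - a) := hdiff

variable [FiniteDimensional ℝ E]

lemma eventually_mul_sub_chord_le (hp : 1 ≤ p) (hβ₀ : 0 < β) (hβ₁ : β < 1) (hC : 0 ≤ C)
    {a b F ε : ℝ} (ha : 0 < a) (hab : a < b) (hF : 0 ≤ F) (hε : 0 < ε) (X : ℝ) :
    ∀ᶠ τ in 𝓝[>] (0 : ℝ), ∀ S : RescaledSolution E p β C τ, ∀ σ : ℝ, |σ| = 1 →
      (∀ x ∈ S.D, ‖S.g x‖ ≤ C * a ^ (-β) → -(2 * F + τ) ≤ σ * clmTrace (S.H x)) →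
      ∀ x, ⟪S.e, x⟫ ∈ Icc a b → ‖x‖ ≤ X →
        σ * (S.w x - chord S.profile a b ⟪S.e, x⟫) ≤
          F * ((⟪S.e, x⟫ - a) * (b - ⟪S.e, x⟫)) + ε := by
  have hb : 0 < b := ha.trans hab
  set A := C * (2 * b) ^ (1 - β)
  obtain ⟨L, -, μ, hμ, hslab⟩ := exists_le_add_of_truncatedSlab (E := E) (2 * A) a b X le_rfl
    (by positivity) (half_pos hε)
  filter_upwards [eventually_interior (E := E) (p := p) hβ₀.le hβ₁.le hC ha (max L b),
    eventually_abs_tangential_sub_le (E := E) hp hβ₀ hβ₁ hC ha b (half_pos hε) L,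
    eventually_mul_lt 1 hμ] with τ hinterior htangential hτ S σ hσ htrace x hx hxX
  have hmul (t : ℝ) : σ * t ≤ |t| := by simpa [abs_mul, hσ] using le_abs_self (σ * t)
  have hbound {y : E} (hy : ⟪S.e, y⟫ ∈ Icc a b) (hyL : ‖y‖ ≤ max L b) :
      y ∈ S.D ∧ ‖S.g y‖ ≤ C * a ^ (-β) ∧ |S.w y| ≤ A := by
    obtain ⟨hD, hg, hw⟩ := hinterior S y hyL hy.1
    have : 0 ≤ 2 * ⟪S.e, y⟫ := by linarith [hy.1]
    have : 0 ≤ 1 - β := by linarith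
    exact ⟨hD, hg, hw.trans (by simp only [A]; gcongr; exact hy.2)⟩
  have hprofile {s : ℝ} (hs : s ∈ Icc a b) : |S.profile s| ≤ A :=
    (hbound (by rwa [S.inner_smul_e]) ((S.norm_smul_e (ha.le.trans hs.1)).trans_le
      (hs.2.trans (le_max_right _ _)))).2.2
  have hslab' := hslab S.e _ _ _ (ε / 2) S.norm_e (fun y hy => ⟨(S.hasHessianAt y (hbound hy.1
    (hy.2.trans (le_max_left _ _))).1).mul_sub_chord S.e σ F S.profile a b, ?_⟩)
    (fun y hy hface => ?_) x hx hxX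
  · linarith
  · obtain ⟨hD, hg, hw⟩ := hbound hy.1 (hy.2.trans (le_max_left _ _))
    constructor
    · rw [map_add, map_smul, map_smul, clmTrace_rankOne, S.inner_e_e, smul_eq_mul, smul_eq_mul]
      linarith [htrace y hD hg]
    · have hchord := abs_chord_le hab (hprofile (left_mem_Icc.2 hab.le))
        (hprofile (right_mem_Icc.2 hab.le)) hy.1
      have hF : 0 ≤ F * ((⟪S.e, y⟫ - a) * (b - ⟪S.e, y⟫)) :=
        mul_nonneg hF (mul_nonneg (sub_nonneg.2 hy.1.1) (sub_nonneg.2 hy.1.2))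
      linarith [hmul (S.w y - chord S.profile a b ⟪S.e, y⟫),
        abs_sub (S.w y) (chord S.profile a b ⟪S.e, y⟫)]
  · have hdiff := htangential S y hy.1 hy.2
    have hmul := hmul (S.w y - S.w (⟪S.e, y⟫ • S.e))
    rcases hface with hs | hs
    · rw [hs] at hdiff hmul ⊢
      rw [chord_left, profile]
      linarith
    · rw [hs] at hdiff hmul ⊢
      rw [chord_right, profile]
      linarith

lemma eventually_chord_sub_le (hp : 1 ≤ p) (hβ₀ : 0 < β) (hβ₁ : β < 1) (hC : 0 ≤ C)
    {a b F ε : ℝ} (ha : 0 < a) (hab : a < b) (hF : 0 ≤ F) (hε : 0 < ε) (X : ℝ) :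
    ∀ᶠ τ in 𝓝[>] (0 : ℝ), ∀ S : RescaledSolution E p β C τ, ∀ x, ⟪S.e, x⟫ ∈ Icc a b → ‖x‖ ≤ X →
      chord S.profile a b ⟪S.e, x⟫ - S.w x ≤ F * ((⟪S.e, x⟫ - a) * (b - ⟪S.e, x⟫)) + ε := by
  filter_upwards [eventually_mul_sub_chord_le (E := E) hp hβ₀ hβ₁ hC ha hab hF hε X]
    with τ hτ S x hx hxX
  have := hτ S (-1) (by simp) (fun y hy _ => ?_) x hx hxX
  · linarith
  have hgp : 0 ≤ ‖S.g y‖ ^ p := by positivity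
  linarith [abs_le.1 (S.pde y hy)]

lemma eventually_abs_sub_chord_le (hp : 1 ≤ p) (hβ₀ : 0 < β) (hβ₁ : β < 1) (hC : 0 ≤ C)
    {a b F ε : ℝ} (ha : 0 < a) (hab : a < b) (hF : (C * a ^ (-β)) ^ p ≤ 2 * F) (hε : 0 < ε)
    (X : ℝ) :
    ∀ᶠ τ in 𝓝[>] (0 : ℝ), ∀ S : RescaledSolution E p β C τ, ∀ x, ⟪S.e, x⟫ ∈ Icc a b → ‖x‖ ≤ X →
      |S.w x - chord S.profile a b ⟪S.e, x⟫| ≤ F * ((⟪S.e, x⟫ - a) * (b - ⟪S.e, x⟫)) + ε := by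
  have hF₀ : 0 ≤ F := by
    have : 0 ≤ (C * a ^ (-β)) ^ p := by positivity
    linarith
  filter_upwards [eventually_mul_sub_chord_le (E := E) hp hβ₀ hβ₁ hC ha hab hF₀ hε X,
    eventually_chord_sub_le (E := E) hp hβ₀ hβ₁ hC ha hab hF₀ hε X] with τ hupper hlower S x hx hxX
  have hle := hupper S 1 abs_one (fun y hy hgy => ?_) x hx hxX
  · exact abs_le.2 ⟨by linarith [hlower S x hx hxX], by linarith⟩
  have hgp : ‖S.g y‖ ^ p ≤ (C * a ^ (-β)) ^ p := by gcongr
  linarith [abs_le.1 (S.pde y hy)]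

lemma eventually_norm_gradient_sub_slope_le (hp : 1 ≤ p) (hβ₀ : 0 < β) (hβ₁ : β < 1)
    (hβp : β * (p - 1) = 1) (hC : 0 ≤ C) {F Γ k r : ℝ} (hF : 0 < F) (hΓ : Γ = C * (1 / 2) ^ (-β))
    (hΓF : Γ ^ p ≤ 2 * F) (hk : k = 2 * p * C ^ (p - 1)) (hkF : k * Γ ≤ 2 * F)
    (hr : r ∈ Ioc 0 (1 / 2)) (hkr : k * r ≤ 1) :
    ∀ᶠ τ in 𝓝[>] (0 : ℝ), ∀ S : RescaledSolution E p β C τ,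
      ‖S.g S.e - slope S.profile (1 - r) (1 + r) • S.e‖ ≤
        (2 * Module.finrank ℝ E + 5) * (2 * F * r) := by
  obtain ⟨hr₀, hr₁⟩ := hr
  have hΓr : C * (1 - r) ^ (-β) ≤ Γ := hΓ ▸ mul_le_mul_of_nonneg_left
    (Real.rpow_le_rpow_of_nonpos one_half_pos (by linarith) (neg_nonpos.2 hβ₀.le)) hC
  have hr' : 0 ≤ 1 - r := by linarith
  have hΓF' : (C * (1 - r) ^ (-β)) ^ p ≤ 2 * F :=
    (Real.rpow_le_rpow (by positivity) hΓr (by linarith)).trans hΓF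
  have hε : 0 < F * r ^ 2 := by positivity
  filter_upwards [eventually_abs_sub_chord_le (E := E) hp hβ₀ hβ₁ hC (show 0 < 1 - r by linarith)
      (show 1 - r < 1 + r by linarith) hΓF' hε 2,
    eventually_abs_slope_profile_le (E := E) (p := p) hβ₀.le hβ₁.le hC
      (show 0 < 1 - r by linarith) (show 1 - r < 1 + r by linarith),
    eventually_mul_lt 8 one_pos, eventually_mul_lt 1 hε, self_mem_nhdsWithin]
    with τ hchord hslope hτ₁ hτε hτ S
  have hτ : 0 < τ := hτ
  set z := slope S.profile (1 - r) (1 + r)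
  have hgrad := S.norm_gradient_sub_smul_le hp hβ₀.le hβp hC hτ.le one_pos (by linarith)
    (κ := 2 * F * r ^ 2) (c := S.profile (1 - r) - z * (1 - r)) (q := z) ⟨hr₀, hr₁⟩
    (by positivity) hk hkr (by linarith) ?_ (fun x hx => ?_)
  · rw [one_smul] at hgrad
    exact hgrad.trans_eq (by field_simp)
  · have hk₀ : 0 ≤ k := by rw [hk]; positivity
    have : k * |z| ≤ 2 * F :=
      (mul_le_mul_of_nonneg_left ((hslope S).trans hΓr) hk₀).trans hkF
    gcongr
  · rw [mul_one] at hx ⊢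
    have hinner := S.inner_mem_Icc_of_mem_closedBall hx
    have hle := hchord S x hinner
      ((S.norm_le_of_mem_closedBall zero_le_one hx).trans (by linarith))
    have hsq : F * ((⟪S.e, x⟫ - (1 - r)) * (1 + r - ⟪S.e, x⟫)) ≤ F * r ^ 2 := by
      gcongr
      nlinarith [sq_nonneg (⟪S.e, x⟫ - 1)]
    have hc : S.profile (1 - r) - z * (1 - r) + z * ⟪S.e, x⟫ =
        chord S.profile (1 - r) (1 + r) ⟪S.e, x⟫ := by rw [chord]; ring
    rw [hc]
    linarith

lemma eventually_div_sub_le_slope_profile (hp : 1 ≤ p) (hβ₀ : 0 < β) (hβ₁ : β < 1) (hC : 0 ≤ C)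
    {r R K ε : ℝ} (hr : r ∈ Ioc 0 (1 / 2)) (hR : 2 ≤ R) (hK : 0 ≤ K) (hε : 0 < ε) :
    ∀ᶠ τ in 𝓝[>] (0 : ℝ), ∀ S : RescaledSolution E p β C τ, K + 2 * C ≤ S.w (R • S.e) →
      K / R - ε ≤ slope S.profile (1 - r) (1 + r) := by
  obtain ⟨hr₀, hr₁⟩ := hr
  have hr' : 0 < 1 - r := by linarith
  filter_upwards [eventually_chord_sub_le (E := E) hp hβ₀ hβ₁ hC hr'
      (show 1 - r < R by linarith) le_rfl (show 0 < ε * (2 * r) by positivity) 2,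
    eventually_interior (E := E) (p := p) hβ₀.le hβ₁.le hC hr' 1, eventually_mul_lt 1 one_pos,
    self_mem_nhdsWithin] with τ hchord hinterior hτ₁ hτ S hwR
  have hτ : 0 < τ := hτ
  have hnorm : ‖(1 - r) • S.e‖ = 1 - r := S.norm_smul_e hr'.le
  have hstart : S.profile (1 - r) ≤ 2 * C := by
    refine (le_abs_self _).trans (S.abs_le_two_mul hβ₀.le hβ₁.le hC (subset_closure
      (hinterior S _ (by linarith) (S.inner_smul_e _).ge).1) ?_ ?_ ?_)
    · rw [hnorm]; nlinarith
    · rw [hnorm]; nlinarith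
    · rw [S.inner_smul_e, abs_of_pos hr']; linarith
  have hslope : K / R ≤ slope S.profile (1 - r) R := by
    rw [slope_def_field]
    have : K ≤ S.profile R - S.profile (1 - r) := by rw [profile]; linarith
    gcongr <;> linarith
  have hle := hchord S ((1 + r) • S.e) (by rw [S.inner_smul_e]; constructor <;> linarith)
    (by rw [S.norm_smul_e (by linarith)]; linarith)
  rw [S.inner_smul_e] at hle
  have := slope_sub_le_slope (f := S.profile) (a := 1 - r) (b := 1 + r) (c := R) (ε := ε)
    (by linarith) (by rw [profile]; linarith)
  linarith

lemma exists_eventually_le_inner_gradient (hp : 1 ≤ p) (hβ₀ : 0 < β) (hβ₁ : β < 1)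
    (hβp : β * (p - 1) = 1) (hC : 0 ≤ C) {q : ℝ} (hq : 0 < q) :
    ∃ R ≥ 8, ∀ᶠ τ in 𝓝[>] (0 : ℝ), ∀ S : RescaledSolution E p β C τ,
      q * R ^ (1 - β) ≤ S.w (R • S.e) → 1 / R ≤ ⟪S.g S.e, S.e⟫ := by
  obtain ⟨R, hRq, hR⟩ := ((eventually_mul_rpow_neg_lt (sub_pos.2 hβ₁) (4 + 2 * C) hq).and
    (eventually_ge_atTop 8)).exists
  have hR₀ : 0 < R := by linarith
  have hqR : 4 + 2 * C ≤ q * R ^ (1 - β) := by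
    rw [Real.rpow_neg hR₀.le, ← div_eq_mul_inv, div_lt_iff₀ (by positivity)] at hRq
    exact hRq.le
  set Γ := C * (1 / 2) ^ (-β) with hΓ
  set k := 2 * p * C ^ (p - 1) with hk
  set F := Γ ^ p + k * Γ + 1
  set N : ℝ := 4 * Module.finrank ℝ E + 11
  have hΓp : 0 ≤ Γ ^ p := by positivity
  have hkΓ : 0 ≤ k * Γ := by positivity
  have hF : 0 < F := by positivity
  obtain ⟨r, ⟨hkr, hNr⟩, hr⟩ := (((eventually_mul_lt k one_pos).and
    (eventually_mul_lt (N * F) (one_div_pos.2 hR₀))).and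
    (Ioc_mem_nhdsGT (one_half_pos (α := ℝ)))).exists
  refine ⟨R, hR, ?_⟩
  filter_upwards [eventually_norm_gradient_sub_slope_le (E := E) hp hβ₀ hβ₁ hβp hC hF hΓ
      (by linarith) hk (by linarith) hr hkr.le,
    eventually_div_sub_le_slope_profile (E := E) hp hβ₀ hβ₁ hC hr (R := R) (by linarith)
      zero_le_four (mul_pos hF hr.1)] with τ hgrad hslope S hwR
  set z := slope S.profile (1 - r) (1 + r)
  have hz : 4 / R - F * r ≤ z := hslope S (hqR.trans hwR)
  have hsplit : ⟪S.g S.e, S.e⟫ = z + ⟪S.g S.e - z • S.e, S.e⟫ := by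
    rw [inner_sub_left, real_inner_smul_left, S.inner_e_e]
    ring
  have herr := (real_inner_comm (S.g S.e - z • S.e) S.e ▸
    abs_real_inner_le_norm_of_norm_eq_one S.norm_e (S.g S.e - z • S.e)).trans (hgrad S)
  have : 4 / R = 4 * (1 / R) := by ring
  have : 0 < 1 / R := by positivity
  linarith [(abs_le.1 herr).1]

end RescaledSolution

end Chord

section Geometry

lemma exists_mem_frontier_of_isPreconnected {X : Type*} [TopologicalSpace X] {s Ω : Set X}
    (hs : IsPreconnected s) {x y : X} (hx : x ∈ s) (hxΩ : x ∈ Ω) (hy : y ∈ s) (hyΩ : y ∉ Ω) :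
    ∃ z ∈ s, z ∈ frontier Ω := by
  by_contra! hfrontier
  have hcover : s ⊆ interior Ω ∪ (closure Ω)ᶜ := fun z hz => by
    by_contra! hz'
    simp only [mem_union, mem_compl_iff, not_or, not_not] at hz'
    exact hfrontier z hz ⟨hz'.2, hz'.1⟩
  obtain ⟨z, -, hz, hz'⟩ := hs _ _ isOpen_interior isClosed_closure.isOpen_compl hcover
    ⟨x, hx, (hcover hx).resolve_right fun h => h (subset_closure hxΩ)⟩
    ⟨y, hy, (hcover hy).resolve_left fun h => hyΩ (interior_subset h)⟩
  exact hz' (subset_closure (interior_subset hz))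

lemma le_infDist_frontier_of_ball_subset {X : Type*} [PseudoMetricSpace X] {Ω : Set X}
    (hΩ : IsOpen Ω) (hne : (frontier Ω).Nonempty) {x : X} {s : ℝ} (h : ball x s ⊆ Ω) :
    s ≤ infDist x (frontier Ω) := by
  refine (le_infDist hne).2 fun y hy => not_lt.1 fun hlt => ?_
  exact (disjoint_frontier_iff_isOpen.2 hΩ).notMem_of_mem_left hy (h (mem_ball'.2 hlt))

variable {E : Type*} [NormedAddCommGroup E] [InnerProductSpace ℝ E] {Ω : Set E}

lemma ball_subset_of_le_infDist_frontier {x : E} {s : ℝ} (hx : x ∈ Ω)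
    (hs : s ≤ infDist x (frontier Ω)) : ball x s ⊆ Ω := by
  intro y hy
  by_contra hyΩ
  have hs₀ : 0 < s := pos_of_mem_ball hy
  obtain ⟨z, hz, hzΩ⟩ := exists_mem_frontier_of_isPreconnected (convex_ball x s).isPreconnected
    (mem_ball_self hs₀) hx hy hyΩ
  exact (hs.trans (infDist_le_dist_of_mem hzΩ)).not_gt (mem_ball'.1 hz)

/-- The unit vector `e` is an inward normal of `Ω` at `b`, in the sense that moving from `b` in the
direction `e` increases the distance to the frontier at unit speed, up to the depth `δ₀`. -/
structure IsInwardNormal (Ω : Set E) (δ₀ : ℝ) (b e : E) : Prop where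
  norm_eq_one : ‖e‖ = 1
  mem : ∀ s ∈ Ioo 0 δ₀, b + s • e ∈ Ω
  infDist_eq : ∀ s ∈ Ioo 0 δ₀, infDist (b + s • e) (frontier Ω) = s

/-- Near its point `b`, the frontier of `Ω` stays within quadratic distance, with constant `κ`, of
the hyperplane through `b` orthogonal to `e`, as seen from `Ω`. -/
def IsFlatAt (Ω : Set E) (b e : E) (ρ κ : ℝ) : Prop :=
  ∀ x ∈ closure Ω, ‖x - b‖ < ρ → -(κ * ‖x - b‖ ^ 2) ≤ ⟪e, x - b⟫ ∧
    infDist x (frontier Ω) ≤ |⟪e, x - b⟫| + κ * ‖x - b‖ ^ 2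

lemma infDist_frontier_le_of_neg_le_inner {b e : E} (hb : b ∈ frontier Ω) (he : ‖e‖ = 1)
    {ρ κ : ℝ} (hκ : 0 ≤ κ)
    (h : ∀ x ∈ closure Ω, ‖x - b‖ < ρ → -(κ * ‖x - b‖ ^ 2) ≤ ⟪e, x - b⟫) {x : E}
    (hx : x ∈ closure Ω) (hxρ : 3 * ‖x - b‖ < ρ) (hxκ : (10 * κ + 1) * ‖x - b‖ ≤ 1) :
    infDist x (frontier Ω) ≤ |⟪e, x - b⟫| + (10 * κ + 1) * ‖x - b‖ ^ 2 := by
  set y := ⟪e, x - b⟫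
  set r := |y| + (10 * κ + 1) * ‖x - b‖ ^ 2
  have hr₀ : 0 ≤ r := by positivity
  by_cases hxf : x ∈ frontier Ω
  · rwa [infDist_zero_of_mem hxf]
  have hxint : x ∈ interior Ω := by by_contra hint; exact hxf ⟨hx, hint⟩
  have hxb : 0 < ‖x - b‖ := norm_sub_pos_iff.2 fun h => hxf (h ▸ hb)
  have hr : r ≤ 2 * ‖x - b‖ := by
    have := abs_real_inner_le_norm_of_norm_eq_one he (x - b)
    nlinarith
  have hnorm : ‖r • e‖ = r := by rw [norm_smul, he, mul_one, Real.norm_of_nonneg hr₀]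
  have hout : x - r • e ∉ Ω := fun hmem => by
    have hxr : ‖x - r • e - b‖ ≤ 3 * ‖x - b‖ := by
      rw [sub_right_comm]
      exact (norm_sub_le _ _).trans (by linarith)
    have hle := h _ (subset_closure hmem) (hxr.trans_lt hxρ)
    rw [sub_right_comm, inner_sub_right, real_inner_smul_right, real_inner_self_of_norm_eq_one he,
      ← sub_right_comm] at hle
    have hsq : κ * ‖x - r • e - b‖ ^ 2 ≤ κ * (3 * ‖x - b‖) ^ 2 := by gcongr
    have := le_abs_self y
    have : 0 < ‖x - b‖ ^ 2 := by positivity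
    nlinarith
  obtain ⟨z, hz, hzΩ⟩ := exists_mem_frontier_of_isPreconnected
    (convex_segment x (x - r • e)).isPreconnected (left_mem_segment ℝ _ _) (interior_subset hxint)
    (right_mem_segment ℝ _ _) hout
  have hsub : segment ℝ x (x - r • e) ⊆ closedBall x r :=
    (convex_closedBall x r).segment_subset (mem_closedBall_self hr₀) (by simp [hnorm])
  exact (infDist_le_dist_of_mem hzΩ).trans (mem_closedBall'.1 (hsub hz))

lemma isFlatAt_of_neg_le_inner {b e : E} (hb : b ∈ frontier Ω) (he : ‖e‖ = 1) {ρ κ : ℝ}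
    (hκ : 0 ≤ κ) (h : ∀ x ∈ closure Ω, ‖x - b‖ < ρ → -(κ * ‖x - b‖ ^ 2) ≤ ⟪e, x - b⟫) :
    IsFlatAt Ω b e (min (ρ / 3) (1 / (10 * κ + 1))) (10 * κ + 1) := by
  intro x hx hxb
  obtain ⟨hxρ, hxκ⟩ := lt_min_iff.1 hxb
  rw [lt_div_iff₀ (by positivity)] at hxκ
  have hlow := h x hx (by linarith [norm_nonneg (x - b)])
  refine ⟨?_, infDist_frontier_le_of_neg_le_inner hb he hκ h hx (by linarith) (by linarith)⟩
  nlinarith [sq_nonneg ‖x - b‖]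

namespace IsInwardNormal

variable {δ₀ : ℝ} {b e x : E}

lemma mem_of_norm_sq_div_lt (h : IsInwardNormal Ω δ₀ b e) (hδ₀ : 0 < δ₀)
    (hx : ‖x - b‖ ^ 2 / δ₀ < ⟪e, x - b⟫) : x ∈ Ω := by
  have hδ : δ₀ / 2 ∈ Ioo 0 δ₀ := ⟨half_pos hδ₀, half_lt_self hδ₀⟩
  refine ball_subset_of_le_infDist_frontier (h.mem _ hδ) (h.infDist_eq _ hδ).ge ?_
  rw [mem_ball, dist_eq_norm, ← sub_sub]
  refine lt_of_pow_lt_pow_left₀ 2 hδ.1.le ?_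
  rw [norm_sub_sq_real, real_inner_smul_right, real_inner_comm, norm_smul, h.norm_eq_one,
    Real.norm_of_nonneg hδ.1.le]
  rw [div_lt_iff₀ hδ₀] at hx
  nlinarith

lemma half_inner_le_infDist (h : IsInwardNormal Ω δ₀ b e) (hδ₀ : 0 < δ₀) (hΩ : IsOpen Ω)
    (hb : b ∈ frontier Ω) (hx₀ : 0 < ⟪e, x - b⟫) (hx : 5 * ‖x - b‖ ^ 2 / δ₀ ≤ ⟪e, x - b⟫) :
    x ∈ Ω ∧ ⟪e, x - b⟫ / 2 ≤ infDist x (frontier Ω) := by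
  have hsub : ball x (⟪e, x - b⟫ / 2) ⊆ Ω := fun z hz => by
    rw [mem_ball, dist_eq_norm] at hz
    have hxb := le_of_abs_le (abs_real_inner_le_norm_of_norm_eq_one h.norm_eq_one (x - b))
    have hzx := neg_le_of_abs_le (abs_real_inner_le_norm_of_norm_eq_one h.norm_eq_one (z - x))
    have hnorm : ‖z - b‖ ≤ 3 / 2 * ‖x - b‖ := by
      rw [← sub_add_sub_cancel z x b]
      exact (norm_add_le _ _).trans (by linarith)
    have hinner : ⟪e, x - b⟫ / 2 < ⟪e, z - b⟫ := by
      rw [← sub_add_sub_cancel z x b, inner_add_right]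
      linarith
    refine h.mem_of_norm_sq_div_lt hδ₀ (lt_of_le_of_lt ?_ hinner)
    rw [div_le_iff₀ hδ₀] at hx ⊢
    nlinarith [pow_le_pow_left₀ (norm_nonneg _) hnorm 2, sq_nonneg ‖x - b‖]
  exact ⟨hsub (mem_ball_self (half_pos hx₀)),
    le_infDist_frontier_of_ball_subset hΩ ⟨b, hb⟩ hsub⟩

lemma add_smul_mem_closure (h : IsInwardNormal Ω δ₀ b e) (hb : b ∈ frontier Ω) {s : ℝ}
    (hs : s ∈ Ico 0 δ₀) : b + s • e ∈ closure Ω := by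
  rcases hs.1.eq_or_lt with rfl | hs₀
  · simpa using frontier_subset_closure hb
  · exact subset_closure (h.mem s ⟨hs₀, hs.2⟩)

end IsInwardNormal

lemma eq_neg_norm_smul_of_inner_nonpos {m e : E} (he : ‖e‖ = 1)
    (h : ∀ v, 0 < ⟪e, v⟫ → ⟪m, v⟫ ≤ 0) : m = -(‖m‖ • e) := by
  set v := m + ‖m‖ • e
  have hev : 0 ≤ ⟪e, v⟫ := by
    have := neg_le_of_abs_le (abs_real_inner_le_norm_of_norm_eq_one he m)
    rw [inner_add_right, real_inner_smul_right, real_inner_self_of_norm_eq_one he]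
    linarith
  have hmv : ⟪m, v⟫ ≤ 0 := by
    have hlim : Tendsto (fun ε : ℝ => ⟪m, v + ε • e⟫) (𝓝[>] 0) (𝓝 ⟪m, v⟫) := by
      have hcont : Continuous fun ε : ℝ => ⟪m, v + ε • e⟫ := by fun_prop
      simpa using (hcont.tendsto 0).mono_left nhdsWithin_le_nhds
    refine le_of_tendsto hlim ?_
    filter_upwards [self_mem_nhdsWithin] with ε hε
    refine h _ ?_
    rw [inner_add_right, real_inner_smul_right, real_inner_self_of_norm_eq_one he]
    linarith [mem_Ioi.1 hε]
  have hnorm : ‖v‖ ^ 2 = 2 * ⟪m, v⟫ := by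
    rw [norm_add_sq_real, norm_smul, norm_norm, he, inner_add_right, real_inner_self_eq_norm_sq]
    ring
  have hzero : ‖v‖ ^ 2 = 0 := le_antisymm (by linarith) (sq_nonneg _)
  exact eq_neg_of_add_eq_zero_left (norm_eq_zero.1 (pow_eq_zero_iff two_ne_zero |>.1 hzero))

lemma norm_mul_norm_sub_le_of_eq_neg_smul {x y e f : E} (hf : ‖f‖ = 1) (hx : x = -(‖x‖ • e))
    (hy : y = -(‖y‖ • f)) : ‖x‖ * ‖f - e‖ ≤ 2 * ‖x - y‖ := by
  have heq : ‖x‖ • (f - e) = (‖x‖ - ‖y‖) • f + (x - y) := by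
    have hx' : ‖x‖ • e = -x := neg_eq_iff_eq_neg.1 hx.symm
    have hy' : ‖y‖ • f = -y := neg_eq_iff_eq_neg.1 hy.symm
    rw [smul_sub, sub_smul, hx', hy']
    abel
  calc ‖x‖ * ‖f - e‖ = ‖(‖x‖ - ‖y‖) • f + (x - y)‖ := by rw [← heq, norm_smul, norm_norm]
    _ ≤ |‖x‖ - ‖y‖| + ‖x - y‖ := by
      refine (norm_add_le _ _).trans_eq ?_
      rw [norm_smul, hf, mul_one, Real.norm_eq_abs]
    _ ≤ 2 * ‖x - y‖ := by linarith [abs_norm_sub_norm_le x y]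

variable [CompleteSpace E]

lemma abs_sub_sub_inner_le_of_norm_gradient_sub_le {s : Set E} (hs : Convex ℝ s) {f : E → ℝ}
    {m : E → E} {K : ℝ} {b x : E} (hK : 0 ≤ K) (hm : ∀ z ∈ s, HasGradientAt f (m z) z)
    (hlip : ∀ z ∈ s, ‖m z - m b‖ ≤ K * ‖z - b‖) (hb : b ∈ s) (hx : x ∈ s) :
    |f x - f b - ⟪m b, x - b⟫| ≤ K * ‖x - b‖ ^ 2 := by
  have hle := (hs.inter (convex_closedBall b ‖x - b‖)).norm_image_sub_le_of_norm_hasFDerivWithin_le'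
    (φ := InnerProductSpace.toDual ℝ E (m b)) (C := K * ‖x - b‖)
    (fun z hz => (hm z hz.1).hasFDerivAt.hasFDerivWithinAt) (fun z hz => ?_)
    ⟨hb, by simp⟩ ⟨hx, by simp [dist_eq_norm]⟩
  · rw [InnerProductSpace.toDual_apply_apply, mul_assoc, ← sq] at hle
    exact hle
  · rw [← map_sub, LinearIsometryEquiv.norm_map]
    refine (hlip z hz.1).trans ?_
    gcongr
    exact mem_closedBall_iff_norm.1 hz.2

namespace IsInwardNormal

variable {δ₀ : ℝ} {b e x : E}

lemma gradient_eq_neg_norm_smul (h : IsInwardNormal Ω δ₀ b e) (hδ₀ : 0 < δ₀) {f : E → ℝ} {m : E}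
    (hf : HasGradientAt f m b) (hle : ∀ᶠ x in 𝓝 b, x ∈ Ω → f x ≤ f b) : m = -(‖m‖ • e) := by
  refine eq_neg_norm_smul_of_inner_nonpos h.norm_eq_one fun v hv => ?_
  have hline : HasDerivAt (fun s : ℝ => f (b + s • v)) ⟪m, v⟫ 0 := by
    have hf' : HasFDerivAt f (InnerProductSpace.toDual ℝ E m) (b + (0 : ℝ) • v) := by
      simpa using hf.hasFDerivAt
    have := hf'.comp_hasDerivAt 0 (((hasDerivAt_id (0 : ℝ)).smul_const v).const_add b)
    simpa [Function.comp_def] using this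
  have htendsto : Tendsto (fun s : ℝ => b + s • v) (𝓝[>] 0) (𝓝 b) := by
    have hcont : Continuous fun s : ℝ => b + s • v := by fun_prop
    simpa using (hcont.tendsto 0).mono_left nhdsWithin_le_nhds
  refine deriv_nonpos_of_eventually_le_right hline ?_
  filter_upwards [htendsto.eventually hle, eventually_mul_lt (‖v‖ ^ 2 / δ₀) hv,
    self_mem_nhdsWithin] with s hs hsv hs₀
  have hs₀ : 0 < s := hs₀
  simp only [zero_add, zero_smul, add_zero]
  refine hs (h.mem_of_norm_sq_div_lt hδ₀ ?_)
  rw [add_sub_cancel_left, norm_smul, real_inner_smul_right, Real.norm_of_nonneg hs₀.le]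
  calc (s * ‖v‖) ^ 2 / δ₀ = s * (‖v‖ ^ 2 / δ₀ * s) := by ring
    _ < s * ⟪e, v⟫ := by gcongr

lemma neg_le_inner_of_gradient {U : Set E} (h : IsInwardNormal Ω δ₀ b e) (hδ₀ : 0 < δ₀)
    (hU : Convex ℝ U) (hbU : U ∈ 𝓝 b) {f : E → ℝ} {m : E → E} {K c : ℝ} (hK : 0 ≤ K) (hc : 0 < c)
    (hm : ∀ z ∈ U, HasGradientAt f (m z) z) (hlip : ∀ z ∈ U, ‖m z - m b‖ ≤ K * ‖z - b‖)
    (hcm : c ≤ ‖m b‖) (hle : ∀ z ∈ U, z ∈ closure Ω → f z ≤ f b) (hx : x ∈ U)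
    (hxΩ : x ∈ closure Ω) : -(K / c * ‖x - b‖ ^ 2) ≤ ⟪e, x - b⟫ := by
  have hmb : m b = -(‖m b‖ • e) := h.gradient_eq_neg_norm_smul hδ₀ (hm b (mem_of_mem_nhds hbU))
    (by filter_upwards [hbU] with z hz hzΩ using hle z hz (subset_closure hzΩ))
  have htaylor := (abs_le.1 (abs_sub_sub_inner_le_of_norm_gradient_sub_le hU hK hm hlip
    (mem_of_mem_nhds hbU) hx)).1
  have hinner : ⟪m b, x - b⟫ = -(‖m b‖ * ⟪e, x - b⟫) := by
    conv_lhs => rw [hmb]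
    rw [inner_neg_left, real_inner_smul_left]
  have hle' : -(K * ‖x - b‖ ^ 2) ≤ ‖m b‖ * ⟪e, x - b⟫ := by
    linarith [hle x hx hxΩ]
  rw [div_mul_eq_mul_div, ← neg_div, div_le_iff₀ hc]
  rcases le_total 0 ⟪e, x - b⟫ with hpos | hneg
  · have : 0 ≤ K * ‖x - b‖ ^ 2 := by positivity
    nlinarith
  · nlinarith

end IsInwardNormal

lemma exists_lipschitz_gradient_of_contDiffAt {f : E → ℝ} {a : E} (hf : ContDiffAt ℝ 2 f a)
    (hf₀ : fderiv ℝ f a ≠ 0) :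
    ∃ K ≥ (0 : ℝ), ∃ c > 0, ∃ V ∈ 𝓝 a, ∀ z ∈ V, HasGradientAt f (gradient f z) z ∧
      c ≤ ‖gradient f z‖ ∧ ∀ y ∈ V, ‖gradient f z - gradient f y‖ ≤ K * ‖z - y‖ := by
  have hf' : ContDiffAt ℝ 1 (fderiv ℝ f) a := hf.fderiv_right (by norm_num)
  obtain ⟨K, V, hV, hlip⟩ := hf'.exists_lipschitzOnWith
  have hc : 0 < ‖fderiv ℝ f a‖ := norm_pos_iff.2 hf₀
  have hnorm : ∀ᶠ z in 𝓝 a, ‖fderiv ℝ f a‖ / 2 < ‖fderiv ℝ f z‖ :=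
    hf'.continuousAt.norm.eventually (lt_mem_nhds (half_lt_self hc))
  refine ⟨K, K.2, ‖fderiv ℝ f a‖ / 2, half_pos hc, _,
    (hf.eventually (by simp)).and (hnorm.and hV), fun z ⟨hfz, hnz, hzV⟩ => ?_⟩
  refine ⟨(hfz.differentiableAt (by norm_num)).hasGradientAt, ?_, fun y ⟨_, _, hyV⟩ => ?_⟩
  · simpa [gradient] using hnz.le
  · simp only [gradient]
    rw [← map_sub, LinearIsometryEquiv.norm_map]
    simpa [dist_eq_norm] using hlip.dist_le_mul z hzV y hyV

lemma exists_isFlatAt {δ₀ : ℝ} (hδ₀ : 0 < δ₀) {ν : E → E} {a : E} (ha : a ∈ frontier Ω)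
    (hν : ∀ b ∈ frontier Ω, IsInwardNormal Ω δ₀ b (ν b)) {f : E → ℝ} (hf : ContDiffAt ℝ 2 f a)
    (hf₀ : fderiv ℝ f a ≠ 0) (hneg : ∀ᶠ x in 𝓝 a, x ∈ closure Ω → f x ≤ 0)
    (hzero : ∀ᶠ x in 𝓝 a, x ∈ frontier Ω → f x = 0) :
    ∃ ρ > 0, ∃ κ > 0, ∀ b ∈ frontier Ω, dist b a < ρ →
      ‖ν b - ν a‖ ≤ κ * ‖b - a‖ ∧ IsFlatAt Ω b (ν b) ρ κ := by
  obtain ⟨K, hK, c, hc, V, hV, hgrad⟩ := exists_lipschitz_gradient_of_contDiffAt hf hf₀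
  obtain ⟨ρ, hρ, hball⟩ := eventually_nhds_iff_ball.1 ((eventually_mem_set.2 hV).and
    (hneg.and hzero))
  set m := gradient f
  have hle {b} (hb : b ∈ frontier Ω) (hba : b ∈ ball a ρ) :
      ∀ x ∈ ball a ρ, x ∈ closure Ω → f x ≤ f b := fun x hx hxΩ => by
    rw [(hball b hba).2.2 hb]
    exact (hball x hx).2.1 hxΩ
  have hdir {b} (hb : b ∈ frontier Ω) (hba : b ∈ ball a ρ) : m b = -(‖m b‖ • ν b) := by
    refine (hν b hb).gradient_eq_neg_norm_smul hδ₀ (hgrad b (hball b hba).1).1 ?_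
    filter_upwards [isOpen_ball.mem_nhds hba] with x hx hxΩ
    exact hle hb hba x hx (subset_closure hxΩ)
  set κ := 10 * (K / c) + 1
  have hκ₀ : 0 ≤ K / c := by positivity
  have hsmall : min (ρ / 2 / 3) (1 / κ) ≤ ρ / 2 := (min_le_left _ _).trans (by linarith)
  refine ⟨min (ρ / 2 / 3) (1 / κ), by positivity, κ, by positivity, fun b hb hba => ?_⟩
  have hba' : b ∈ ball a ρ := mem_ball.2 (by linarith)
  have hbV := (hball b hba').1
  have haV := (hball a (mem_ball_self hρ)).1
  refine ⟨?_, isFlatAt_of_neg_le_inner hb (hν b hb).norm_eq_one hκ₀ fun x hx hxb => ?_⟩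
  · have hnormal := norm_mul_norm_sub_le_of_eq_neg_smul (hν b hb).norm_eq_one
      (hdir ha (mem_ball_self hρ)) (hdir hb hba')
    have hlip := (hgrad b hbV).2.2 a haV
    rw [norm_sub_rev (m b)] at hlip
    have hc_le : c * ‖ν b - ν a‖ ≤ ‖m a‖ * ‖ν b - ν a‖ := by
      gcongr
      exact (hgrad a haV).2.1
    calc ‖ν b - ν a‖ ≤ 2 * (K * ‖b - a‖) / c := by
          rw [le_div_iff₀ hc]
          linarith
      _ = 2 * (K / c) * ‖b - a‖ := by ring
      _ ≤ κ * ‖b - a‖ := by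
          gcongr
          linarith
  · have hxa : x ∈ ball a ρ := mem_ball.2
      ((dist_triangle x b a).trans_lt (by rw [dist_eq_norm]; linarith))
    exact (hν b hb).neg_le_inner_of_gradient hδ₀ (convex_ball a ρ) (isOpen_ball.mem_nhds hba') hK
      hc (fun z hz => (hgrad z (hball z hz).1).1)
      (fun z hz => (hgrad z (hball z hz).1).2.2 b hbV) (hgrad b hbV).2.1 (hle hb hba') hxa hx

end Geometry

section BoundaryLayer

lemma abs_sub_le_of_abs_deriv_le {f f' B B' : ℝ → ℝ} {a b : ℝ} (hab : a ≤ b)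
    (hf : ContinuousOn f (Icc a b)) (hB : ContinuousOn B (Icc a b))
    (hf' : ∀ s ∈ Ioo a b, HasDerivAt f (f' s) s) (hB' : ∀ s ∈ Ioo a b, HasDerivAt B (B' s) s)
    (h : ∀ s ∈ Ioo a b, |f' s| ≤ B' s) : |f b - f a| ≤ B b - B a := by
  rw [← interior_Icc] at hf' hB' h
  have hsub : MonotoneOn (fun s => B s - f s) (Icc a b) :=
    monotoneOn_of_hasDerivWithinAt_nonneg (convex_Icc a b) (hB.sub hf)
      (fun s hs => ((hB' s hs).sub (hf' s hs)).hasDerivWithinAt)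
      fun s hs => sub_nonneg.2 (le_of_abs_le (h s hs))
  have hadd : MonotoneOn (fun s => B s + f s) (Icc a b) :=
    monotoneOn_of_hasDerivWithinAt_nonneg (convex_Icc a b) (hB.add hf)
      (fun s hs => ((hB' s hs).add (hf' s hs)).hasDerivWithinAt)
      fun s hs => by linarith [neg_le_of_abs_le (h s hs)]
  have hsub_le := hsub (left_mem_Icc.2 hab) (right_mem_Icc.2 hab) hab
  have hadd_le := hadd (left_mem_Icc.2 hab) (right_mem_Icc.2 hab) hab
  exact abs_le.2 ⟨by linarith, by linarith⟩

variable {E : Type*} [NormedAddCommGroup E] [InnerProductSpace ℝ E] {Ω : Set E} {δ₀ : ℝ} {b e x : E}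

/-- The points of `Ω` at distance less than `δ₀` from the frontier lie on inward normals. -/
def HasNormalFoliation (Ω : Set E) (δ₀ : ℝ) : Prop :=
  ∀ x ∈ Ω, infDist x (frontier Ω) < δ₀ →
    ∃ b ∈ frontier Ω, ∃ e, IsInwardNormal Ω δ₀ b e ∧ x = b + infDist x (frontier Ω) • e

lemma infDist_add_smul_le {s : Set E} {l : ℝ} (hb : b ∈ s) (hl : 0 ≤ l) (x : E) :
    infDist (b + l • x) s ≤ l * ‖x‖ := by
  refine (infDist_le_dist_of_mem hb).trans_eq ?_
  rw [dist_eq_norm, add_sub_cancel_left, norm_smul, Real.norm_of_nonneg hl]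

variable [CompleteSpace E]

lemma eq_add_infDist_smul_of_hasGradientAt {s : Set E} (hg : HasGradientAt (infDist · s) e x)
    (hb : b ∈ s) (hdist : dist x b = infDist x s) (he : ‖e‖ = 1) : x = b + infDist x s • e := by
  have hline : HasDerivAt (fun t : ℝ => infDist (x + t • (b - x)) s + t * dist x b)
      (⟪e, b - x⟫ + dist x b) 0 := by
    have hg' : HasFDerivAt (infDist · s) (InnerProductSpace.toDual ℝ E e)
        (x + (0 : ℝ) • (b - x)) := by simpa using hg.hasFDerivAt
    have := (hg'.comp_hasDerivAt 0
      (((hasDerivAt_id (0 : ℝ)).smul_const (b - x)).const_add x)).fun_add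
      ((hasDerivAt_id (0 : ℝ)).mul_const (dist x b))
    simpa [Function.comp_def] using this
  have hle : ⟪e, b - x⟫ + dist x b ≤ 0 := by
    refine deriv_nonpos_of_eventually_le_right hline ?_
    filter_upwards [Ioo_mem_nhdsGT (zero_lt_one' ℝ)] with t ht
    have hnorm : dist (x + t • (b - x)) b = (1 - t) * dist x b := by
      rw [dist_eq_norm, dist_eq_norm, show x + t • (b - x) - b = (1 - t) • (x - b) by module,
        norm_smul, Real.norm_of_nonneg (sub_nonneg.2 ht.2.le)]
    simp only [zero_add, zero_smul, add_zero, zero_mul, ← hdist]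
    linarith [infDist_le_dist_of_mem (x := x + t • (b - x)) hb]
  have hinner : ⟪x - b, e⟫ = ‖x - b‖ * ‖e‖ := by
    refine le_antisymm (real_inner_le_norm _ _) ?_
    rw [← neg_sub x b, inner_neg_right, real_inner_comm, dist_eq_norm] at hle
    rw [he]
    linarith
  rw [inner_eq_norm_mul_iff_real, he, one_smul] at hinner
  rw [← hdist, dist_eq_norm, ← hinner, add_sub_cancel]

/-- Data for blowing up around the frontier point `b`: the domain `Ω` has inward normal `e` at `b`
and is quadratically flat there, and `v` is, up to a bounded error, a stationary solution
`Δv + ‖∇v‖ ^ p = 0` vanishing on the frontier, with gradient `g` controlled by the distance to the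
frontier. -/
structure IsBoundaryLayer (Ω : Set E) (p β C₀ M δ₀ ρ κ : ℝ) (b e : E) (v : E → ℝ) (g : E → E) :
    Prop where
  mem_frontier : b ∈ frontier Ω
  isInwardNormal : IsInwardNormal Ω δ₀ b e
  isFlatAt : IsFlatAt Ω b e ρ κ
  continuousOn : ContinuousOn v (closure Ω)
  eq_zero : ∀ x ∈ frontier Ω, v x = 0
  hasHessianAt : ∀ x ∈ Ω, ∃ A, HasHessianAt v g A x ∧ |clmTrace A + ‖g x‖ ^ p| ≤ M
  norm_gradient_le : ∀ x ∈ Ω, ‖g x‖ ≤ C₀ * (infDist x (frontier Ω) ^ (-β) + 1)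

lemma IsInwardNormal.abs_apply_le {β C₀ : ℝ} (hβ₀ : 0 ≤ β) (hβ₁ : β < 1) (hC₀ : 0 ≤ C₀)
    {v : E → ℝ} {g : E → E} (h : IsInwardNormal Ω δ₀ b e) (hb : b ∈ frontier Ω)
    (hv : ContinuousOn v (closure Ω)) (hvb : v b = 0) (hg : ∀ x ∈ Ω, HasGradientAt v (g x) x)
    (hgC : ∀ x ∈ Ω, ‖g x‖ ≤ C₀ * (infDist x (frontier Ω) ^ (-β) + 1)) {d : ℝ} (hd : 0 ≤ d)
    (hdδ : d < δ₀) (hd₁ : d ≤ 1) : |v (b + d • e)| ≤ 2 * C₀ / (1 - β) * d ^ (1 - β) := by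
  have hβ : 0 < 1 - β := sub_pos.2 hβ₁
  have hmem : ∀ s ∈ Ioo 0 d, s ∈ Ioo 0 δ₀ := fun s hs => ⟨hs.1, hs.2.trans hdδ⟩
  have hvline : ContinuousOn (fun s : ℝ => v (b + s • e)) (Icc 0 d) :=
    hv.comp (by fun_prop) fun s hs => h.add_smul_mem_closure hb ⟨hs.1, hs.2.trans_lt hdδ⟩
  have hpow : Continuous fun s : ℝ => 2 * C₀ / (1 - β) * s ^ (1 - β) :=
    continuous_const.mul (Real.continuous_rpow_const hβ.le)
  have hvderiv : ∀ s ∈ Ioo 0 d, HasDerivAt (fun s : ℝ => v (b + s • e)) ⟪g (b + s • e), e⟫ s :=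
    fun s hs => by
      have := (hg _ (h.mem s (hmem s hs))).hasFDerivAt.comp_hasDerivAt s
        (((hasDerivAt_id s).smul_const e).const_add b)
      simpa [Function.comp_def] using this
  have hpowderiv : ∀ s ∈ Ioo 0 d,
      HasDerivAt (fun s : ℝ => 2 * C₀ / (1 - β) * s ^ (1 - β)) (2 * C₀ * s ^ (-β)) s := by
    intro s hs
    refine ((Real.hasDerivAt_rpow_const (Or.inl hs.1.ne')).const_mul _).congr_deriv ?_
    rw [show 1 - β - 1 = -β by ring]
    field_simp
  have hle := abs_sub_le_of_abs_deriv_le hd hvline hpow.continuousOn hvderiv hpowderiv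
    fun s hs => by
      have hgs := hgC _ (h.mem s (hmem s hs))
      rw [h.infDist_eq s (hmem s hs)] at hgs
      have hone : 1 ≤ s ^ (-β) :=
        Real.one_le_rpow_of_pos_of_le_one_of_nonpos hs.1 (hs.2.le.trans hd₁) (neg_nonpos.2 hβ₀)
      rw [real_inner_comm]
      have := abs_real_inner_le_norm_of_norm_eq_one h.norm_eq_one (g (b + s • e))
      nlinarith
  simpa [hvb, Real.zero_rpow hβ.ne'] using hle

namespace IsBoundaryLayer

variable {p β C₀ M ρ κ τ l : ℝ} {v : E → ℝ} {g : E → E}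

lemma abs_apply_le (h : IsBoundaryLayer Ω p β C₀ M δ₀ ρ κ b e v g) (hβ₀ : 0 ≤ β) (hβ₁ : β < 1)
    (hC₀ : 0 ≤ C₀) (hΩ : HasNormalFoliation Ω δ₀) (hx : x ∈ closure Ω)
    (hxδ : infDist x (frontier Ω) < δ₀) (hx₁ : infDist x (frontier Ω) ≤ 1) :
    |v x| ≤ 2 * C₀ / (1 - β) * infDist x (frontier Ω) ^ (1 - β) := by
  have : 0 < 1 - β := sub_pos.2 hβ₁
  by_cases hxΩ : x ∈ Ω
  · obtain ⟨b', hb', e', he', hxe⟩ := hΩ x hxΩ hxδ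
    have hle := he'.abs_apply_le hβ₀ hβ₁ hC₀ hb' h.continuousOn (h.eq_zero b' hb')
      (fun y hy => (h.hasHessianAt y hy).choose_spec.1.hasGradientAt) h.norm_gradient_le
      infDist_nonneg hxδ hx₁
    rwa [← hxe] at hle
  · rw [h.eq_zero x ⟨hx, fun hint => hxΩ (interior_subset hint)⟩, abs_zero]
    have := infDist_nonneg (x := x) (s := frontier Ω)
    positivity

lemma norm_rescaled_gradient_le (h : IsBoundaryLayer Ω p β C₀ M δ₀ ρ κ b e v g) (hδ₀ : 0 < δ₀)
    (hΩ : IsOpen Ω) (hβ₀ : 0 ≤ β) (hβ₁ : β ≤ 1) (hC₀ : 0 ≤ C₀) (hl : 0 < l) (hlδ : 5 * l ≤ τ * δ₀)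
    (hx : τ * ‖x‖ ^ 2 < ⟪e, x⟫) (hx₁ : l * ‖x‖ ≤ 1) :
    b + l • x ∈ Ω ∧ ‖l ^ β • g (b + l • x)‖ ≤ 4 * C₀ * ⟪e, x⟫ ^ (-β) := by
  have hτ : 0 < τ := pos_of_mul_pos_left (by linarith) hδ₀.le
  have hex : 0 < ⟪e, x⟫ := (by positivity : 0 ≤ τ * ‖x‖ ^ 2).trans_lt hx
  have hcone : 5 * ‖b + l • x - b‖ ^ 2 / δ₀ ≤ ⟪e, b + l • x - b⟫ := by
    rw [add_sub_cancel_left, norm_smul, Real.norm_of_nonneg hl.le, real_inner_smul_right,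
      div_le_iff₀ hδ₀]
    calc 5 * (l * ‖x‖) ^ 2 = 5 * l * (l * ‖x‖ ^ 2) := by ring
      _ ≤ τ * δ₀ * (l * ‖x‖ ^ 2) := by gcongr
      _ = l * (τ * ‖x‖ ^ 2) * δ₀ := by ring
      _ ≤ l * ⟪e, x⟫ * δ₀ := by gcongr
  obtain ⟨hmem, hdist⟩ := h.isInwardNormal.half_inner_le_infDist hδ₀ hΩ h.mem_frontier
    (by rw [add_sub_cancel_left, real_inner_smul_right]; positivity) hcone
  rw [add_sub_cancel_left, real_inner_smul_right] at hdist
  refine ⟨hmem, ?_⟩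
  have hgx := h.norm_gradient_le _ hmem
  have hd₁ := (infDist_add_smul_le h.mem_frontier hl.le x).trans hx₁
  set d := infDist (b + l • x) (frontier Ω)
  have hd₀ : 0 < d := (by positivity : 0 < l * ⟪e, x⟫ / 2).trans_le hdist
  have hone : 1 ≤ d ^ (-β) :=
    Real.one_le_rpow_of_pos_of_le_one_of_nonpos hd₀ hd₁ (neg_nonpos.2 hβ₀)
  have hdpow : d ^ (-β) ≤ 2 * (l ^ (-β) * ⟪e, x⟫ ^ (-β)) := by
    refine (Real.rpow_le_rpow_of_nonpos (by positivity) hdist (neg_nonpos.2 hβ₀)).trans ?_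
    rw [Real.div_rpow (by positivity) zero_le_two, Real.mul_rpow hl.le hex.le, div_eq_mul_inv,
      ← Real.rpow_neg zero_le_two, neg_neg, mul_comm]
    gcongr
    simpa using Real.rpow_le_rpow_of_exponent_le one_le_two hβ₁
  rw [norm_smul, Real.norm_of_nonneg (by positivity)]
  calc l ^ β * ‖g (b + l • x)‖ ≤ l ^ β * (C₀ * (2 * d ^ (-β))) := by
        gcongr
        exact hgx.trans (by gcongr; linarith)
    _ ≤ l ^ β * (C₀ * (2 * (2 * (l ^ (-β) * ⟪e, x⟫ ^ (-β))))) := by gcongr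
    _ = 4 * C₀ * ⟪e, x⟫ ^ (-β) * (l ^ β * l ^ (-β)) := by ring
    _ = 4 * C₀ * ⟪e, x⟫ ^ (-β) := by
        rw [← Real.rpow_add hl, add_neg_cancel, Real.rpow_zero, mul_one]

lemma abs_rescaled_apply_le (h : IsBoundaryLayer Ω p β C₀ M δ₀ ρ κ b e v g) (hβ₀ : 0 ≤ β)
    (hβ₁ : β < 1) (hC₀ : 0 ≤ C₀) (hΩ : HasNormalFoliation Ω δ₀) (hl : 0 < l) (hlκ : κ * l ≤ τ)
    (hx : b + l • x ∈ closure Ω) (hxρ : l * ‖x‖ < ρ) (hxδ : l * ‖x‖ < δ₀) (hx₁ : l * ‖x‖ ≤ 1) :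
    -(τ * ‖x‖ ^ 2) ≤ ⟪e, x⟫ ∧ |l ^ (β - 1) * v (b + l • x)| ≤
      2 * C₀ / (1 - β) * (|⟪e, x⟫| + τ * ‖x‖ ^ 2) ^ (1 - β) := by
  have : 0 < 1 - β := sub_pos.2 hβ₁
  have hflat : κ * (l * ‖x‖) ^ 2 ≤ l * (τ * ‖x‖ ^ 2) := by
    calc κ * (l * ‖x‖) ^ 2 = l * (κ * l * ‖x‖ ^ 2) := by ring
      _ ≤ l * (τ * ‖x‖ ^ 2) := by gcongr
  have hnorm : ‖b + l • x - b‖ = l * ‖x‖ := by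
    rw [add_sub_cancel_left, norm_smul, Real.norm_of_nonneg hl.le]
  obtain ⟨hinner, hdist⟩ := h.isFlatAt _ hx (hnorm ▸ hxρ)
  rw [hnorm, add_sub_cancel_left, real_inner_smul_right] at hinner hdist
  rw [abs_mul, abs_of_pos hl] at hdist
  have hd := infDist_add_smul_le h.mem_frontier hl.le x
  have hv := h.abs_apply_le hβ₀ hβ₁ hC₀ hΩ hx (hd.trans_lt hxδ) (hd.trans hx₁)
  have hle : infDist (b + l • x) (frontier Ω) ≤ l * (|⟪e, x⟫| + τ * ‖x‖ ^ 2) := by linarith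
  have hnonneg : 0 ≤ |⟪e, x⟫| + τ * ‖x‖ ^ 2 :=
    nonneg_of_mul_nonneg_right (infDist_nonneg.trans hle) hl
  refine ⟨le_of_mul_le_mul_left (by linarith) hl, ?_⟩
  rw [abs_mul, abs_of_pos (by positivity)]
  calc l ^ (β - 1) * |v (b + l • x)|
      ≤ l ^ (β - 1) * (2 * C₀ / (1 - β) * (l * (|⟪e, x⟫| + τ * ‖x‖ ^ 2)) ^ (1 - β)) := by
        gcongr
        exact hv.trans (by gcongr; exact infDist_nonneg)
    _ = 2 * C₀ / (1 - β) * (|⟪e, x⟫| + τ * ‖x‖ ^ 2) ^ (1 - β) * (l ^ (β - 1) * l ^ (1 - β)) := by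
        rw [Real.mul_rpow hl.le hnonneg]; ring
    _ = 2 * C₀ / (1 - β) * (|⟪e, x⟫| + τ * ‖x‖ ^ 2) ^ (1 - β) := by
        rw [← Real.rpow_add hl, show β - 1 + (1 - β) = 0 by ring, Real.rpow_zero, mul_one]

lemma exists_rescaledSolution (h : IsBoundaryLayer Ω p β C₀ M δ₀ ρ κ b e v g)
    (hβ₀ : 0 ≤ β) (hβ₁ : β < 1) (hβp : β * p = 1 + β) (hC₀ : 0 ≤ C₀) (hδ₀ : 0 < δ₀)
    (hΩo : IsOpen Ω) (hΩ : HasNormalFoliation Ω δ₀) (hτ : 0 < τ) (hl : 0 < l)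
    (hlρ : l < τ * ρ) (hlδ : 5 * l ≤ τ * δ₀) (hlκ : κ * l ≤ τ) (hlM : M * l ≤ τ) (hl₁ : l ≤ 1)
    (hlτ : l ≤ τ) :
    ∃ S : RescaledSolution E p β (4 * C₀ + 2 * C₀ / (1 - β)) τ, S.e = e ∧
      S.w = (fun x => l ^ (β - 1) * v (b + l • x)) ∧ S.g = fun x => l ^ β • g (b + l • x) := by
  have hC : 0 ≤ 2 * C₀ / (1 - β) := div_nonneg (by positivity) (sub_pos.2 hβ₁).le
  have hcont : Continuous fun x : E => b + l • x := by fun_prop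
  have hscale : ∀ {x : E}, τ * ‖x‖ ≤ 1 → τ * (l * ‖x‖) ≤ l := fun hx => by nlinarith
  have hsmall₁ : ∀ {x : E}, τ * ‖x‖ ≤ 1 → l * ‖x‖ ≤ 1 := fun hx =>
    le_of_mul_le_mul_left (by linarith [hscale hx]) hτ
  have hsmall : ∀ {x : E} {r : ℝ}, τ * ‖x‖ ≤ 1 → l < τ * r → l * ‖x‖ < r := fun hx hr =>
    lt_of_mul_lt_mul_left ((hscale hx).trans_lt hr) hτ.le
  have hpow₁ : l ^ (β - 1) * l = l ^ β := by rw [← Real.rpow_add_one hl.ne', sub_add_cancel]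
  have hpow₂ : l ^ β * l = l ^ (1 + β) := by rw [← Real.rpow_add_one hl.ne', add_comm]
  choose! A hA hpde using h.hasHessianAt
  refine ⟨{
    e := e
    D := {x | b + l • x ∈ Ω}
    w := fun x => l ^ (β - 1) * v (b + l • x)
    g := fun x => l ^ β • g (b + l • x)
    H := fun x => l ^ (1 + β) • A (b + l • x)
    norm_e := h.isInwardNormal.norm_eq_one
    isOpen := hΩo.preimage hcont
    continuousOn := (h.continuousOn.comp hcont.continuousOn
      (hcont.closure_preimage_subset Ω)).const_mul _
    eq_zero := fun x hx => by rw [h.eq_zero _ (hcont.frontier_preimage_subset Ω hx), mul_zero]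
    hasHessianAt := fun x hx => by
      simpa only [smul_smul, ← mul_assoc, hpow₁, hpow₂] using
        (hA _ hx).comp_add_smul.const_mul (l ^ (β - 1))
    pde := fun x hx => ?_
    interior := fun x hx hxe => ?_
    bound := fun x hx hx₁ => ?_ }, rfl, rfl, rfl⟩
  · rw [map_smul, norm_smul, Real.norm_of_nonneg (by positivity), Real.mul_rpow (by positivity)
      (norm_nonneg _), ← Real.rpow_mul hl.le, hβp, smul_eq_mul, ← mul_add, abs_mul,
      abs_of_pos (by positivity)]
    have hlβ : l ^ (1 + β) ≤ l := by
      simpa using Real.rpow_le_rpow_of_exponent_ge hl hl₁ (by linarith : 1 ≤ 1 + β)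
    have := hpde _ hx
    nlinarith [abs_nonneg (clmTrace (A (b + l • x)) + ‖g (b + l • x)‖ ^ p)]
  · refine (h.norm_rescaled_gradient_le hδ₀ hΩo hβ₀ hβ₁.le hC₀ hl hlδ hxe (hsmall₁ hx)).imp_right
      fun hle => hle.trans ?_
    have : 0 ≤ ⟪e, x⟫ := (by positivity : 0 ≤ τ * ‖x‖ ^ 2).trans hxe.le
    gcongr
    exact le_add_of_nonneg_right hC
  · refine (h.abs_rescaled_apply_le hβ₀ hβ₁ hC₀ hΩ hl hlκ (hcont.closure_preimage_subset Ω hx)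
      (hsmall hx₁ hlρ) (hsmall hx₁ (by linarith)) (hsmall₁ hx₁)).imp_right fun hle => hle.trans ?_
    gcongr
    exact le_add_of_nonneg_left (by positivity)

lemma eventually_of_rescaledSolution {Q : E → (E → ℝ) → (E → E) → Prop} (hβ₀ : 0 ≤ β)
    (hβ₁ : β < 1) (hβp : β * p = 1 + β) (hC₀ : 0 ≤ C₀) (hδ₀ : 0 < δ₀) (hρ : 0 < ρ)
    (hΩo : IsOpen Ω) (hΩ : HasNormalFoliation Ω δ₀)
    (hQ : ∀ᶠ τ in 𝓝[>] (0 : ℝ),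
      ∀ S : RescaledSolution E p β (4 * C₀ + 2 * C₀ / (1 - β)) τ, Q S.e S.w S.g) :
    ∀ᶠ l in 𝓝[>] (0 : ℝ), ∀ b e v g, IsBoundaryLayer Ω p β C₀ M δ₀ ρ κ b e v g →
      Q e (fun x => l ^ (β - 1) * v (b + l • x)) fun x => l ^ β • g (b + l • x) := by
  obtain ⟨τ, hQ, hτ⟩ := (hQ.and self_mem_nhdsWithin).exists
  replace hτ : 0 < τ := hτ
  filter_upwards [self_mem_nhdsWithin, Ioo_mem_nhdsGT (mul_pos hτ hρ), Ioo_mem_nhdsGT hτ,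
    eventually_mul_lt 5 (mul_pos hτ hδ₀), eventually_mul_lt κ hτ, eventually_mul_lt M hτ,
    Ioo_mem_nhdsGT one_pos] with l hl hlρ hlτ hlδ hlκ hlM hl₁ b e v g h
  obtain ⟨S, rfl, hw, hg⟩ := h.exists_rescaledSolution hβ₀ hβ₁ hβp hC₀ hδ₀ hΩo hΩ hτ hl hlρ.2
    hlδ.le hlκ.le hlM.le hl₁.2.le hlτ.2.le
  exact hw ▸ hg ▸ hQ S

end IsBoundaryLayer

end BoundaryLayer

section SlopeThreshold

variable {E : Type*} [NormedAddCommGroup E] [InnerProductSpace ℝ E]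

/-- The slope `q` separates two regimes of `v` along the normal ray `b + ℝ₊ e` at the scale `l`:
a value below `q * l ^ (1 - β)` at distance `l` stays below the fraction `θ` of this profile and
keeps the gradient bounded nearer to `b`, equality makes the normal slope at least comparable to
`l ^ (-β)` nearer to `b`, and a value above the profile at the larger distance `R * l` makes the
normal slope at distance `l` comparable to `l ^ (-β)`. -/
structure IsSlopeThreshold (β q θ K R l : ℝ) (b e : E) (v : E → ℝ) (g : E → E) : Prop where
  apply_le : v (b + l • e) ≤ q * l ^ (1 - β) →
    ∀ d ∈ Ioc 0 (l / 2), v (b + d • e) ≤ θ * q * d ^ (1 - β)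
  norm_gradient_le : v (b + l • e) ≤ q * l ^ (1 - β) →
    ∀ d ∈ Ioc 0 (l / 4), ‖g (b + d • e)‖ ≤ K * l ^ (-β)
  le_inner_of_eq : v (b + l • e) = q * l ^ (1 - β) →
    ∀ d ∈ Ioc 0 (l / 4), 3 / 4 * q * l ^ (-β) ≤ ⟪g (b + d • e), e⟫
  le_inner_of_le : q * (R * l) ^ (1 - β) ≤ v (b + (R * l) • e) →
    1 / R * l ^ (-β) ≤ ⟪g (b + l • e), e⟫

lemma IsSlopeThreshold.of_rescaled {β q θ K R l : ℝ} {b e : E} {v : E → ℝ} {g : E → E}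
    (hl : 0 < l) (hR : 0 ≤ R) (h : IsSlopeThreshold β q θ K R 1 0 e
      (fun x => l ^ (β - 1) * v (b + l • x)) fun x => l ^ β • g (b + l • x)) :
    IsSlopeThreshold β q θ K R l b e v g := by
  obtain ⟨happly, hnorm, heq, hle⟩ := h
  simp only [zero_add, one_smul, mul_one, Real.one_rpow, smul_smul, norm_smul,
    real_inner_smul_left, norm_inv, Real.norm_of_nonneg (Real.rpow_nonneg hl.le (-β)),
    show l ^ (β - 1) = (l ^ (1 - β))⁻¹ by rw [← Real.rpow_neg hl.le, neg_sub],
    show l ^ β = (l ^ (-β))⁻¹ by rw [← Real.rpow_neg hl.le, neg_neg],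
    inv_mul_le_iff₀ (Real.rpow_pos_of_pos hl (1 - β)),
    le_inv_mul_iff₀ (Real.rpow_pos_of_pos hl (1 - β)),
    inv_mul_le_iff₀ (Real.rpow_pos_of_pos hl (-β)),
    le_inv_mul_iff₀ (Real.rpow_pos_of_pos hl (-β)),
    inv_mul_eq_iff_eq_mul₀ (Real.rpow_pos_of_pos hl (1 - β)).ne'] at happly hnorm heq hle
  have hmem {d r : ℝ} (hd : d ∈ Ioc 0 (l / r)) : d / l ∈ Ioc 0 (1 / r) :=
    ⟨div_pos hd.1 hl, by rw [div_le_iff₀ hl, one_div_mul_eq_div]; exact hd.2⟩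
  refine ⟨fun hv d hd => ?_, fun hv d hd => ?_, fun hv d hd => ?_, fun hv => ?_⟩
  · refine (mul_div_cancel₀ d hl.ne' ▸ happly (by linarith) (d / l) (hmem hd)).trans_eq ?_
    rw [Real.div_rpow hd.1.le hl.le]
    field_simp
  · have := hnorm (by linarith) (d / l) (hmem hd)
    rwa [mul_div_cancel₀ _ hl.ne', mul_comm] at this
  · have := heq (by linarith) (d / l) (hmem hd)
    rwa [mul_div_cancel₀ _ hl.ne', mul_comm] at this
  · rw [Real.mul_rpow hR hl.le] at hv
    have := hle (by rw [mul_comm l R]; linarith)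
    rwa [mul_comm] at this

lemma exists_slope_parameters {p β : ℝ} (hp : 1 < p) (hβ : 0 < β) (A B : ℝ) :
    ∃ η > 0, η ≤ 1 ∧ A * η ≤ 1 ∧ B * η ≤ 1 ∧ (1 + 2 * η) * (1 / 2) ^ β < 1 ∧
      ∃ q > 0, (4 * q) ^ p ≤ η * q / 4 := by
  have hhalf : 0 < 1 - (1 / 2 : ℝ) ^ β :=
    sub_pos.2 (Real.rpow_lt_one (by norm_num) (by norm_num) hβ)
  obtain ⟨η, ⟨hA, hB, hθ⟩, hη, hη₁⟩ := (((eventually_mul_lt A one_pos).and <|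
    (eventually_mul_lt B one_pos).and <| eventually_mul_lt (2 * (1 / 2) ^ β) hhalf).and
    (Ioo_mem_nhdsGT one_pos)).exists
  obtain ⟨q, hqη, hq⟩ := ((eventually_mul_rpow_lt (sub_pos.2 hp) (4 ^ p)
    (div_pos hη four_pos)).and self_mem_nhdsWithin).exists
  refine ⟨η, hη, hη₁.le, hA.le, hB.le, by linarith, q, hq, ?_⟩
  have hq : 0 < q := hq
  calc (4 * q) ^ p = 4 ^ p * q ^ (p - 1) * q := by
        rw [Real.mul_rpow (by norm_num) hq.le, mul_assoc, ← Real.rpow_add_one hq.ne',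
          sub_add_cancel]
    _ ≤ η * q / 4 := by nlinarith

variable [FiniteDimensional ℝ E] {p β C C₀ M δ₀ ρ κ : ℝ} {Ω : Set E}

lemma exists_eventually_isSlopeThreshold (hp : 1 < p) (hβ₀ : 0 < β) (hβ₁ : β < 1)
    (hβp : β * (p - 1) = 1) (hC : 0 ≤ C) :
    ∃ q > 0, ∃ θ < 1, ∃ K, ∃ R ≥ 8, ∀ᶠ τ in 𝓝[>] (0 : ℝ), ∀ S : RescaledSolution E p β C τ,
      IsSlopeThreshold β q θ K R 1 0 S.e S.w S.g := by
  set N : ℝ := 2 * Module.finrank ℝ E + 5 with hN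
  obtain ⟨η, hη, hη₁, hηN, hηC, hθ, q, hq, hqη⟩ :=
    exists_slope_parameters hp hβ₀ (16 * N) (64 * p * C ^ (p - 1) * N ^ 2)
  obtain ⟨K, hK⟩ := RescaledSolution.exists_eventually_norm_gradient_le (E := E) hp.le hβ₀ hβ₁ hβp
    hC hq hη hη₁ hqη
  obtain ⟨R, hR, hRlarge⟩ := RescaledSolution.exists_eventually_le_inner_gradient (E := E) hp.le
    hβ₀ hβ₁ hβp hC hq
  refine ⟨q, hq, _, hθ, K, R, hR, ?_⟩
  filter_upwards [hK, hRlarge,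
    RescaledSolution.eventually_apply_smul_le (E := E) hp.le hβ₀ hβ₁ hC hq hη hη₁ hqη,
    RescaledSolution.eventually_norm_gradient_sub_le (E := E) hp.le hβ₀ hβ₁ hβp hC hq hη hqη hN
      hηN hηC] with τ hK hR hprofile hcritical S
  refine ⟨?_, ?_, ?_, ?_⟩ <;>
    simp only [zero_add, one_smul, mul_one, Real.one_rpow]
  · intro hv d hd
    simpa only [mul_assoc] using hprofile S hv d hd
  · exact hK S
  · intro hv d hd
    have hsub := abs_real_inner_le_norm_of_norm_eq_one S.norm_e (S.g (d • S.e) - q • S.e)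
    rw [inner_sub_right, real_inner_smul_right, real_inner_self_of_norm_eq_one S.norm_e,
      real_inner_comm, abs_le] at hsub
    linarith [hcritical S hv d hd]
  · exact hR S

lemma exists_eventually_isSlopeThreshold_of_isBoundaryLayer (hp : 1 < p) (hβ₀ : 0 < β)
    (hβ₁ : β < 1) (hβp : β * (p - 1) = 1) (hC₀ : 0 ≤ C₀) (hδ₀ : 0 < δ₀) (hρ : 0 < ρ)
    (hΩo : IsOpen Ω) (hΩ : HasNormalFoliation Ω δ₀) :
    ∃ q > 0, ∃ θ < 1, ∃ K, ∃ R ≥ 8, ∀ᶠ l in 𝓝[>] (0 : ℝ), ∀ b e v g,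
      IsBoundaryLayer Ω p β C₀ M δ₀ ρ κ b e v g → IsSlopeThreshold β q θ K R l b e v g := by
  have hC : 0 ≤ 4 * C₀ + 2 * C₀ / (1 - β) :=
    add_nonneg (by positivity) (div_nonneg (by positivity) (sub_pos.2 hβ₁).le)
  obtain ⟨q, hq, θ, hθ, K, R, hR, h⟩ :=
    exists_eventually_isSlopeThreshold (E := E) hp hβ₀ hβ₁ hβp hC
  refine ⟨q, hq, θ, hθ, K, R, hR, ?_⟩
  filter_upwards [self_mem_nhdsWithin, IsBoundaryLayer.eventually_of_rescaledSolution (M := M)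
    (κ := κ) (Q := IsSlopeThreshold β q θ K R 1 0) hβ₀.le hβ₁ (by linarith) hC₀ hδ₀ hρ hΩo hΩ h]
    with l hl h b e v g hlayer
  exact (h b e v g hlayer).of_rescaled hl (by linarith)

end SlopeThreshold

section Blowup

variable {E ι : Type*} [NormedAddCommGroup E] [InnerProductSpace ℝ E]

lemma min_le_inner_of_isSlopeThreshold {β q θ K R r d L : ℝ} {b e : E} {v : E → ℝ} {g : E → E}
    (hβ₀ : 0 ≤ β) (hβ₁ : β < 1) (hq : 0 < q) (hθ : θ < 1) (hR : 8 ≤ R)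
    (h : ∀ l ∈ Ioo 0 r, IsSlopeThreshold β q θ K R l b e v g)
    (hv : ContinuousOn (fun s : ℝ => v (b + s • e)) (Ioo 0 r)) (hd : 0 < d) (hRd : R * d < r)
    (hdL : 4 * d ≤ L) (hL : L < r) (hLv : θ * q * (L / 2) ^ (1 - β) < v (b + (L / 2) • e)) :
    min (1 / R * d ^ (-β)) (3 / 4 * q * L ^ (-β)) ≤ ⟪g (b + d • e), e⟫ := by
  have hL₀ : 0 < L := by linarith
  have hdR : 8 * d ≤ R * d := by gcongr
  rcases le_or_gt (q * (4 * d) ^ (1 - β)) (v (b + (4 * d) • e)) with hlarge | hsmall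
  · refine min_le_of_left_le ((h d ⟨hd, by linarith⟩).le_inner_of_le ?_)
    by_contra! hlt
    have hle := (h (R * d) ⟨by linarith, hRd⟩).apply_le hlt.le (4 * d) ⟨by linarith, by linarith⟩
    have : θ * q * (4 * d) ^ (1 - β) < 1 * q * (4 * d) ^ (1 - β) := by gcongr
    linarith
  · have hlarge : q * L ^ (1 - β) ≤ v (b + L • e) := by
      by_contra! hlt
      exact hLv.not_ge ((h L ⟨hL₀, hL⟩).apply_le hlt.le (L / 2) ⟨half_pos hL₀, le_rfl⟩)
    have hsub : Icc (4 * d) L ⊆ Ioo 0 r := Icc_subset_Ioo (by linarith) hL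
    have hcont : ContinuousOn (fun l : ℝ => v (b + l • e) - q * l ^ (1 - β)) (Icc (4 * d) L) :=
      (hv.mono hsub).sub
        (continuous_const.mul (Real.continuous_rpow_const (sub_pos.2 hβ₁).le)).continuousOn
    obtain ⟨l, hl, hzero⟩ := intermediate_value_Icc hdL hcont
      (⟨by linarith, by linarith⟩ : (0 : ℝ) ∈ Icc _ _)
    have hl₀ : 0 < l := by linarith [hl.1]
    refine min_le_of_right_le (le_trans ?_
      ((h l (hsub hl)).le_inner_of_eq (sub_eq_zero.1 hzero) d ⟨hd, by linarith [hl.1]⟩))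
    have := Real.rpow_le_rpow_of_nonpos hl₀ hl.2 (neg_nonpos.2 hβ₀)
    gcongr

variable [FiniteDimensional ℝ E] {p β C₀ M δ₀ ρ κ : ℝ} {Ω : Set E} {F : Filter ι} {b e : ι → E}
  {d : ι → ℝ} {v : ι → E → ℝ} {g : ι → E → E} {V : ℝ → ℝ}

theorem tendsto_inner_gradient_atTop (hp : 1 < p) (hβ₀ : 0 < β)
    (hβ₁ : β < 1) (hβp : β * (p - 1) = 1) (hC₀ : 0 ≤ C₀) (hδ₀ : 0 < δ₀) (hρ : 0 < ρ)
    (hΩo : IsOpen Ω) (hΩ : HasNormalFoliation Ω δ₀)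
    (hlayer : ∀ᶠ i in F, IsBoundaryLayer Ω p β C₀ M δ₀ ρ κ (b i) (e i) (v i) (g i))
    (hd : Tendsto d F (𝓝[>] 0))
    (hV : ∀ l ∈ Ioo 0 δ₀, Tendsto (fun i => v i (b i + l • e i)) F (𝓝 (V l)))
    (hblowup : ∀ A, ∃ᶠ i in F, A ≤ ‖g i (b i + d i • e i)‖) :
    Tendsto (fun i => ⟪g i (b i + d i • e i), e i⟫) F atTop := by
  obtain ⟨q, hq, θ, hθ, K, R, hR, hscale⟩ := exists_eventually_isSlopeThreshold_of_isBoundaryLayer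
    (M := M) (κ := κ) hp hβ₀ hβ₁ hβp hC₀ hδ₀ hρ hΩo hΩ
  obtain ⟨r, hr₀, hr⟩ := mem_nhdsGT_iff_exists_Ioo_subset.1
    (hscale.and (Ioo_mem_nhdsGT hδ₀))
  have hthreshold : ∀ᶠ i in F, ∀ l ∈ Ioo 0 r,
      IsSlopeThreshold β q θ K R l (b i) (e i) (v i) (g i) :=
    hlayer.mono fun i hi l hl => (hr hl).1 _ _ _ _ hi
  have hsmall {c : ℝ} (hc : 0 < c) : ∀ᶠ i in F, d i ∈ Ioo 0 c := hd.eventually (Ioo_mem_nhdsGT hc)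
  have hprofile : ∀ l ∈ Ioo 0 r, q * l ^ (1 - β) ≤ V l := by
    intro l hl
    by_contra! hlt
    obtain ⟨i, hgi, hi, hdi, hvi⟩ := ((hblowup (K * l ^ (-β) + 1)).and_eventually
      (hthreshold.and ((hsmall (div_pos hl.1 four_pos)).and
        ((hV l (hr hl).2).eventually_lt_const hlt)))).exists
    linarith [(hi l hl).norm_gradient_le hvi.le (d i) ⟨hdi.1, hdi.2.le⟩]
  have hatTop {c : ℝ} (hc : 0 < c) : Tendsto (fun t : ℝ => c * t ^ (-β)) (𝓝[>] 0) atTop :=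
    (tendsto_rpow_neg_nhdsGT_zero (neg_lt_zero.2 hβ₀)).const_mul_atTop hc
  refine tendsto_atTop.2 fun A => ?_
  obtain ⟨L, hLA, hL₀, hLr⟩ := (((hatTop
    (by positivity : 0 < 3 / 4 * q)).eventually_ge_atTop A).and (Ioo_mem_nhdsGT hr₀)).exists
  have hlt : θ * q * (L / 2) ^ (1 - β) < V (L / 2) := by
    refine lt_of_lt_of_le ?_ (hprofile (L / 2) ⟨half_pos hL₀, by linarith⟩)
    nlinarith [mul_pos hq (Real.rpow_pos_of_pos (half_pos hL₀) (1 - β))]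
  filter_upwards [hlayer, hthreshold, hsmall (div_pos hL₀ four_pos),
    hsmall (div_pos hr₀ (by linarith : 0 < R)),
    (hV (L / 2) ⟨half_pos hL₀, by linarith [(hr ⟨hL₀, hLr⟩).2.2]⟩).eventually_const_lt hlt,
    hd.eventually ((hatTop
      (by positivity : 0 < 1 / R)).eventually_ge_atTop A)] with i hi hthr hdL hdR hvi hAd
  have hcont : ContinuousOn (fun s : ℝ => v i (b i + s • e i)) (Ioo 0 r) :=
    hi.continuousOn.comp (by fun_prop) fun s hs =>
      subset_closure (hi.isInwardNormal.mem s (hr hs).2)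
  refine (le_min hAd hLA).trans (min_le_inner_of_isSlopeThreshold hβ₀.le hβ₁ hq hθ hR hthr hcont
    hdL.1 ?_ (by linarith [hdL.2]) hLr hvi)
  rw [mul_comm]
  exact (lt_div_iff₀ (by linarith)).1 hdR.2

end Blowup

section GradientBlowup

lemma tendsto_of_dist_eq_infDist {E : Type*} [PseudoMetricSpace E] {s D : Set E} {P : E → E} {a : E}
    (ha : a ∈ s) (hP : ∀ x ∈ D, P x ∈ s ∧ dist x (P x) = infDist x s) :
    Tendsto P (𝓝[D] a) (𝓝[s] a) := by
  have htwo : Tendsto (fun x => 2 * dist x a) (𝓝[D] a) (𝓝 0) := by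
    have : Continuous fun x => 2 * dist x a := by fun_prop
    simpa using (this.tendsto a).mono_left nhdsWithin_le_nhds
  refine tendsto_nhdsWithin_iff.2 ⟨tendsto_iff_dist_tendsto_zero.2 (squeeze_zero'
    (.of_forall fun _ => dist_nonneg) (eventually_nhdsWithin_of_forall fun x hx => ?_) htwo),
    eventually_nhdsWithin_of_forall fun x hx => (hP x hx).1⟩
  linarith [dist_triangle_left (P x) a x, (hP x hx).2, infDist_le_dist_of_mem (x := x) ha]

lemma tendsto_infDist_nhdsGT_zero {E : Type*} [PseudoMetricSpace E] {s D : Set E} {a : E}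
    (ha : a ∈ s) (hs : IsClosed s) (hD : Disjoint D s) :
    Tendsto (infDist · s) (𝓝[D] a) (𝓝[>] 0) := by
  refine tendsto_nhdsWithin_iff.2 ⟨?_, eventually_nhdsWithin_of_forall fun x hx =>
    (hs.notMem_iff_infDist_pos ⟨a, ha⟩).1 (disjoint_left.1 hD hx)⟩
  simpa [infDist_zero_of_mem ha] using
    ((continuous_infDist_pt s).tendsto a).mono_left nhdsWithin_le_nhds

lemma eventually_nhdsWithin_prod_nhdsLT {E : Type*} [PseudoMetricSpace E] {D : Set E} {a : E}
    {T : ℝ} {Q : E → ℝ → Prop} : (∀ᶠ q in 𝓝[D] a ×ˢ 𝓝[<] T, Q q.1 q.2) ↔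
      ∃ η > 0, ∀ x ∈ D, dist x a < η → ∀ t ∈ Ioo (T - η) T, Q x t := by
  refine ((nhdsWithin_basis_ball (x := a) (s := D)).prod (nhdsLT_basis T)).eventually_iff.trans
    ⟨?_, ?_⟩
  · rintro ⟨⟨η, s⟩, ⟨hη, hs⟩, h⟩
    refine ⟨min η (T - s), lt_min hη (sub_pos.2 hs), fun x hx hxa t ht => @h (x, t) ⟨⟨?_, hx⟩, ?_⟩⟩
    · exact hxa.trans_le (min_le_left _ _)
    · exact ⟨by linarith [ht.1, min_le_right η (T - s)], ht.2⟩
  · rintro ⟨η, hη, h⟩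
    exact ⟨(η, T - η), ⟨hη, sub_lt_self T hη⟩, fun q hq => h q.1 hq.1.2 hq.1.1 q.2 hq.2⟩

lemma frequently_nhdsWithin_prod_nhdsLT {E : Type*} [PseudoMetricSpace E] {D : Set E} {a : E}
    {T : ℝ} {Q : E → ℝ → Prop} : (∃ᶠ q in 𝓝[D] a ×ˢ 𝓝[<] T, Q q.1 q.2) ↔
      ∀ η > 0, ∃ x ∈ D, dist x a < η ∧ ∃ t ∈ Ioo (T - η) T, Q x t := by
  rw [Filter.Frequently, eventually_nhdsWithin_prod_nhdsLT (Q := fun x t => ¬ Q x t)]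
  push Not
  rfl

lemma nhdsWithin_sep_infDist_lt {E : Type*} [PseudoMetricSpace E] {D s : Set E} {a : E} {r : ℝ}
    (hr : 0 < r) (ha : a ∈ s) : 𝓝[{x ∈ D | infDist x s < r}] a = 𝓝[D] a :=
  nhdsWithin_inter_of_mem' (mem_nhdsWithin_of_mem_nhds
    ((continuous_infDist_pt s).continuousAt.eventually_lt_const
      ((infDist_zero_of_mem ha).trans_lt hr)))

variable {E : Type*} [NormedAddCommGroup E] [InnerProductSpace ℝ E] {Ω : Set E} {δ₀ : ℝ}
  {a : E} {ν : E → E}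

lemma tendsto_apply_add_smul {D : Set E} {P : E → E} {u : E → ℝ → ℝ} {T₀ T l : ℝ}
    (hT : T₀ < T) (hu : ContinuousOn (fun q : E × ℝ => u q.1 q.2) (closure Ω ×ˢ Icc T₀ T))
    (hP : Tendsto P (𝓝[D] a) (𝓝[frontier Ω] a)) (hν : ContinuousWithinAt ν (frontier Ω) a)
    (hl : ∀ b ∈ frontier Ω, b + l • ν b ∈ closure Ω) (ha : a ∈ frontier Ω) :
    Tendsto (fun q : E × ℝ => u (P q.1 + l • ν (P q.1)) q.2) (𝓝[D] a ×ˢ 𝓝[<] T)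
      (𝓝 (u (a + l • ν a) T)) := by
  have hu_lim := hu (a + l • ν a, T) ⟨hl a ha, hT.le, le_rfl⟩
  rw [ContinuousWithinAt, nhdsWithin_prod_eq] at hu_lim
  have hpoint : Tendsto (fun b => b + l • ν b) (𝓝[frontier Ω] a) (𝓝[closure Ω] (a + l • ν a)) :=
    tendsto_nhdsWithin_iff.2 ⟨(tendsto_id.mono_left nhdsWithin_le_nhds).add (hν.const_smul l),
      eventually_nhdsWithin_of_forall hl⟩
  have htime : 𝓝[<] T ≤ 𝓝[Icc T₀ T] T :=
    le_inf inf_le_left (le_principal_iff.2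
      (mem_of_superset (Ioo_mem_nhdsLT hT) Ioo_subset_Icc_self))
  exact hu_lim.comp ((hpoint.comp hP).prodMap (tendsto_id.mono_right htime))

variable [CompleteSpace E]

lemma exists_eventually_isFlatAt {f : E → ℝ} {U : Set E} (hδ₀ : 0 < δ₀) (ha : a ∈ frontier Ω)
    (hν : ∀ b ∈ frontier Ω, IsInwardNormal Ω δ₀ b (ν b)) (hU : U ∈ 𝓝 a) (hf : ContDiffOn ℝ 2 f U)
    (hf₀ : fderiv ℝ f a ≠ 0) (hfΩ : U ∩ Ω = U ∩ {y | f y < 0})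
    (hf_frontier : U ∩ frontier Ω = U ∩ {y | f y = 0}) :
    ContinuousWithinAt ν (frontier Ω) a ∧
      ∃ ρ > 0, ∃ κ, ∀ᶠ b in 𝓝[frontier Ω] a, IsFlatAt Ω b (ν b) ρ κ := by
  have hzero : ∀ᶠ x in 𝓝 a, x ∈ frontier Ω → f x = 0 := by
    filter_upwards [hU] with x hxU hx
    exact (hf_frontier.subset ⟨hxU, hx⟩).2
  have hneg : ∀ᶠ x in 𝓝 a, x ∈ closure Ω → f x ≤ 0 := by
    filter_upwards [hU, hzero] with x hxU hx₀ hx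
    rw [closure_eq_self_union_frontier] at hx
    exact hx.elim (fun hx => (hfΩ.subset ⟨hxU, hx⟩).2.le) fun hx => (hx₀ hx).le
  obtain ⟨ρ, hρ, κ, -, hflat⟩ := exists_isFlatAt hδ₀ ha hν (hf.contDiffAt hU) hf₀ hneg hzero
  have hnear : ∀ᶠ b in 𝓝[frontier Ω] a, b ∈ frontier Ω ∧ dist b a < ρ :=
    eventually_mem_nhdsWithin.and (nhdsWithin_le_nhds (ball_mem_nhds a hρ))
  refine ⟨tendsto_iff_norm_sub_tendsto_zero.2 ?_, ρ, hρ, κ,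
    hnear.mono fun b hb => (hflat b hb.1 hb.2).2⟩
  refine squeeze_zero' (.of_forall fun _ => norm_nonneg _)
    (hnear.mono fun b hb => (hflat b hb.1 hb.2).1) ?_
  have : Continuous fun b => κ * ‖b - a‖ := by fun_prop
  simpa using (this.tendsto a).mono_left nhdsWithin_le_nhds

lemma isBoundaryLayer_slice {p β C₀ M ρ κ T₀ T t : ℝ} {b e : E} {u : E → ℝ → ℝ} {G : E → ℝ → E}
    {H : E → ℝ → E →L[ℝ] E} (hΩo : IsOpen Ω) (hb : b ∈ frontier Ω)
    (he : IsInwardNormal Ω δ₀ b e) (hflat : IsFlatAt Ω b e ρ κ) (ht : t ∈ Ioo T₀ T)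
    (hu : ContinuousOn (fun q : E × ℝ => u q.1 q.2) (closure Ω ×ˢ Icc T₀ T))
    (hu₀ : ∀ t ∈ Ioo T₀ T, ∀ x ∈ frontier Ω, u x t = 0)
    (hG : ∀ t ∈ Ioo T₀ T, ∀ x ∈ Ω, HasGradientAt (u · t) (G x t) x)
    (hH : ∀ t ∈ Ioo T₀ T, ∀ x ∈ Ω, HasFDerivAt (G · t) (H x t) x)
    (hPDE : ∀ t ∈ Ioo T₀ T, ∀ x ∈ Ω, |clmTrace (H x t) + ‖G x t‖ ^ p| ≤ M)
    (hC₀ : ∀ t ∈ Ioo T₀ T, ∀ x ∈ Ω, ‖G x t‖ ≤ C₀ * (infDist x (frontier Ω) ^ (-β) + 1)) :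
    IsBoundaryLayer Ω p β C₀ M δ₀ ρ κ b e (u · t) (G · t) where
  mem_frontier := hb
  isInwardNormal := he
  isFlatAt := hflat
  continuousOn := by
    have hpair : Continuous fun x : E => (x, t) := by fun_prop
    exact hu.comp hpair.continuousOn fun x hx => ⟨hx, Ioo_subset_Icc_self ht⟩
  eq_zero := hu₀ t ht
  hasHessianAt := fun x hx => ⟨H x t,
    ⟨eventually_of_mem (hΩo.mem_nhds hx) (hG t ht), hH t ht x hx⟩, hPDE t ht x hx⟩
  norm_gradient_le := hC₀ t ht

end GradientBlowup

theorem stmt9_general {E : Type*} [NormedAddCommGroup E] [InnerProductSpace ℝ E]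
    [FiniteDimensional ℝ E] {p β : ℝ} (hp : 2 < p) (hβ : β = 1 / (p - 1))
    {Ω Ωδ : Set E} (hΩo : IsOpen Ω) {δ₀ : ℝ} (hδ₀ : 0 < δ₀)
    (hΩδ : Ωδ = {x ∈ Ω | infDist x (frontier Ω) < δ₀}) {P ν : E → E}
    (hP : ∀ x ∈ Ωδ, P x ∈ frontier Ω ∧ dist x (P x) = infDist x (frontier Ω))
    (hν : ∀ b ∈ frontier Ω, IsInwardNormal Ω δ₀ b (ν b))
    (hνP : ∀ x ∈ Ωδ, ν x = ν (P x) ∧ HasGradientAt (infDist · (frontier Ω)) (ν x) x)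
    {T₀ T : ℝ} (hT : T₀ < T) {u : E → ℝ → ℝ} {G : E → ℝ → E} {H : E → ℝ → E →L[ℝ] E}
    (hu : ContinuousOn (fun q : E × ℝ => u q.1 q.2) (closure Ω ×ˢ Icc T₀ T))
    (hu₀ : ∀ t ∈ Ioo T₀ T, ∀ x ∈ frontier Ω, u x t = 0)
    (hG : ∀ t ∈ Ioo T₀ T, ∀ x ∈ Ω, HasGradientAt (u · t) (G x t) x)
    (hH : ∀ t ∈ Ioo T₀ T, ∀ x ∈ Ω, HasFDerivAt (G · t) (H x t) x)
    {M : ℝ} (hPDE : ∀ t ∈ Ioo T₀ T, ∀ x ∈ Ω, |clmTrace (H x t) + ‖G x t‖ ^ p| ≤ M) {C₀ : ℝ}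
    (hC₀ : ∀ t ∈ Ioo T₀ T, ∀ x ∈ Ω, ‖G x t‖ ≤ C₀ * (infDist x (frontier Ω) ^ (-β) + 1))
    {a : E} (ha : a ∈ frontier Ω) {f : E → ℝ} {U : Set E} (hU : U ∈ 𝓝 a)
    (hf : ContDiffOn ℝ 2 f U) (hf₀ : fderiv ℝ f a ≠ 0) (hfΩ : U ∩ Ω = U ∩ {y | f y < 0})
    (hf_frontier : U ∩ frontier Ω = U ∩ {y | f y = 0})
    (hGBU : ∀ K : ℝ, ∀ η > 0, ∃ x ∈ Ω, dist x a < η ∧ ∃ t ∈ Ioo (T - η) T, K ≤ ‖G x t‖) :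
    ∀ K : ℝ, ∃ η > 0, ∀ x ∈ Ωδ, dist x a < η → ∀ t ∈ Ioo (T - η) T, K ≤ ⟪G x t, ν x⟫ := by
  have hp₁ : 0 < p - 1 := by linarith
  have hβp : β * (p - 1) = 1 := by rw [hβ, one_div, inv_mul_cancel₀ hp₁.ne']
  have hβ₀ : 0 < β := hβ ▸ one_div_pos.2 hp₁
  have hβ₁ : β < 1 := by rw [hβ, div_lt_one hp₁]; linarith
  have hC₀_nonneg : 0 ≤ C₀ := by
    obtain ⟨x, hx, -, t, ht, -⟩ := hGBU 0 (T - T₀) (sub_pos.2 hT)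
    rw [sub_sub_cancel] at ht
    exact nonneg_of_mul_nonneg_left ((norm_nonneg _).trans (hC₀ t ht x hx))
      (add_pos_of_nonneg_of_pos (Real.rpow_nonneg infDist_nonneg _) one_pos)
  have hfoot : ∀ x ∈ Ωδ, P x + infDist x (frontier Ω) • ν (P x) = x := fun x hx =>
    (eq_add_infDist_smul_of_hasGradientAt ((hνP x hx).1 ▸ (hνP x hx).2) (hP x hx).1 (hP x hx).2
      (hν _ (hP x hx).1).norm_eq_one).symm
  have hfoliation : HasNormalFoliation Ω δ₀ := fun x hx hxδ =>
    have hxΩδ : x ∈ Ωδ := hΩδ ▸ ⟨hx, hxδ⟩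
    ⟨P x, (hP x hxΩδ).1, ν (P x), hν _ (hP x hxΩδ).1, (hfoot x hxΩδ).symm⟩
  have hd := tendsto_infDist_nhdsGT_zero ha isClosed_frontier
    (hΩδ ▸ (disjoint_frontier_iff_isOpen.2 hΩo).symm.mono_left (sep_subset _ _) :
      Disjoint Ωδ (frontier Ω))
  have hPlim := tendsto_of_dist_eq_infDist ha hP
  obtain ⟨hνa, ρ, hρ, κ, hflat⟩ := exists_eventually_isFlatAt hδ₀ ha hν hU hf hf₀ hfΩ hf_frontier
  have hnear : ∀ᶠ q : E × ℝ in 𝓝[Ωδ] a ×ˢ 𝓝[<] T, q.1 ∈ Ωδ ∧ q.2 ∈ Ioo T₀ T :=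
    prod_mem_prod self_mem_nhdsWithin (Ioo_mem_nhdsLT hT)
  have hlayer : ∀ᶠ q : E × ℝ in 𝓝[Ωδ] a ×ˢ 𝓝[<] T,
      IsBoundaryLayer Ω p β C₀ M δ₀ ρ κ (P q.1) (ν (P q.1)) (u · q.2) (G · q.2) := by
    filter_upwards [hnear, (hPlim.comp tendsto_fst).eventually hflat] with ⟨x, t⟩ ⟨hx, ht⟩ hflat
    exact isBoundaryLayer_slice hΩo (hP x hx).1 (hν _ (hP x hx).1) hflat ht hu hu₀ hG hH hPDE hC₀
  have hblowup : ∀ A, ∃ᶠ q : E × ℝ in 𝓝[Ωδ] a ×ˢ 𝓝[<] T,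
      A ≤ ‖G (P q.1 + infDist q.1 (frontier Ω) • ν (P q.1)) q.2‖ := fun A => by
    have hlarge := frequently_nhdsWithin_prod_nhdsLT.2 (hGBU A)
    rw [← nhdsWithin_sep_infDist_lt hδ₀ ha, ← hΩδ] at hlarge
    exact (hlarge.and_eventually hnear).mono fun q ⟨hA, hq, _⟩ => (hfoot q.1 hq).symm ▸ hA
  have htendsto := tendsto_inner_gradient_atTop (by linarith) hβ₀ hβ₁ hβp hC₀_nonneg hδ₀ hρ hΩo
    hfoliation hlayer (hd.comp tendsto_fst) (fun l hl => tendsto_apply_add_smul hT hu hPlim hνa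
      (fun b hb => (hν b hb).add_smul_mem_closure hb ⟨hl.1.le, hl.2⟩) ha) hblowup
  intro K
  refine eventually_nhdsWithin_prod_nhdsLT.1 ?_
  filter_upwards [hnear, htendsto.eventually_ge_atTop K] with ⟨x, t⟩ ⟨hx, _⟩ hK
  rwa [Function.comp_apply, hfoot x hx, ← (hνP x hx).1] at hK

theorem stmt9 {n : ℕ} (hn : 1 ≤ n)
    -- the exponents and constants
    (p β cp dp : ℝ) (hp : 2 < p) (hβ : β = 1 / (p - 1))
    (hcp : cp = β ^ β / (1 - β)) (hdp : dp = β ^ β)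
    -- the bounded domain Ω with C² boundary
    (Ω : Set (EuclideanSpace ℝ (Fin n))) (hΩo : IsOpen Ω) (hΩb : Bornology.IsBounded Ω) (hΩc2 : IsC2Boundary Ω)
    -- the distance to the boundary
    (δ : EuclideanSpace ℝ (Fin n) → ℝ) (hδ : ∀ x, δ x = infDist x (frontier Ω))
    -- δ₀ and the boundary neighborhood Ωδ = {x ∈ Ω : δ(x) < δ₀}
    (δ₀ : ℝ) (hδ₀ : 0 < δ₀)
    (Ωδ : Set (EuclideanSpace ℝ (Fin n))) (hΩδ : Ωδ = {x ∈ Ω | δ x < δ₀})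
    -- δ is C² on Ωδ
    (hδC2 : ContDiffOn ℝ 2 δ Ωδ)
    -- every x ∈ Ωδ has a unique nearest boundary point P x
    (P : EuclideanSpace ℝ (Fin n) → EuclideanSpace ℝ (Fin n))
    (hP : ∀ x ∈ Ωδ, P x ∈ frontier Ω ∧ dist x (P x) = δ x ∧
      ∀ b ∈ frontier Ω, dist x b = δ x → b = P x)
    -- interior sphere condition of radius δ₀ at every boundary point
    (hsph : ∀ b ∈ frontier Ω, ∃ y, ball y δ₀ ⊆ Ω ∧ dist y b = δ₀)
    -- the inward unit normal field ν
    (ν : EuclideanSpace ℝ (Fin n) → EuclideanSpace ℝ (Fin n))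
    (hν1 : ∀ b ∈ frontier Ω, ‖ν b‖ = 1 ∧
      ∀ s ∈ Ioo (0 : ℝ) δ₀, b + s • ν b ∈ Ω ∧ δ (b + s • ν b) = s)
    (hν2 : ∀ x ∈ Ωδ, ν x = ν (P x) ∧ HasGradientAt δ (ν x) x)
    -- the solution u on [0,T], with spatial gradient G, spatial Hessian H and
    -- time derivative u'
    (T : ℝ) (hT : 0 < T)
    (u : EuclideanSpace ℝ (Fin n) → ℝ → ℝ)
    (G : EuclideanSpace ℝ (Fin n) → ℝ → EuclideanSpace ℝ (Fin n))
    (H : EuclideanSpace ℝ (Fin n) → ℝ → (EuclideanSpace ℝ (Fin n) →L[ℝ] EuclideanSpace ℝ (Fin n)))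
    (u' : EuclideanSpace ℝ (Fin n) → ℝ → ℝ)
    -- u is continuous on Ω̄ × [0,T] and vanishes on ∂Ω × [0,T]
    (hu_cont : ContinuousOn (fun q : EuclideanSpace ℝ (Fin n) × ℝ => u q.1 q.2) (closure Ω ×ˢ Icc 0 T))
    (hu_bd : ∀ b ∈ frontier Ω, ∀ t ∈ Icc (0 : ℝ) T, u b t = 0)
    -- u is continuously differentiable in x on Ω̄ × [0,T), with spatial gradient G
    (hG : ∀ t ∈ Ico (0 : ℝ) T, ∀ x ∈ closure Ω,
      HasGradientWithinAt (fun y => u y t) (G x t) (closure Ω) x)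
    (hG_cont : ContinuousOn (fun q : EuclideanSpace ℝ (Fin n) × ℝ => G q.1 q.2) (closure Ω ×ˢ Ico 0 T))
    -- on Ω × (0,T], u has spatial gradient G, spatial Hessian H and time derivative u',
    -- all continuous there
    (hG2 : ∀ t ∈ Ioc (0 : ℝ) T, ∀ x ∈ Ω, HasGradientAt (fun y => u y t) (G x t) x)
    (hH : ∀ t ∈ Ioc (0 : ℝ) T, ∀ x ∈ Ω, HasFDerivAt (fun y => G y t) (H x t) x)
    (hu' : ∀ t ∈ Ioc (0 : ℝ) T, ∀ x ∈ Ω, HasDerivAt (fun s => u x s) (u' x t) t)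
    (hreg : ContinuousOn (fun q : EuclideanSpace ℝ (Fin n) × ℝ =>
      (u q.1 q.2, G q.1 q.2, H q.1 q.2, u' q.1 q.2)) (Ω ×ˢ Ioc 0 T))
    -- the PDE uₜ - Δu = |∇u|^p on Ω × (0,T]
    (hPDE : ∀ t ∈ Ioc (0 : ℝ) T, ∀ x ∈ Ω,
      u' x t - ∑ i : Fin n, ⟪H x t (EuclideanSpace.single i (1 : ℝ)),
        EuclideanSpace.single i (1 : ℝ)⟫ = ‖G x t‖ ^ p)
    -- a priori bounds: |uₜ| ≤ M on Ω × [T/2,T] and the Bernstein estimate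
    (M : ℝ) (hM : ∀ x ∈ Ω, ∀ t ∈ Icc (T / 2) T, |u' x t| ≤ M)
    (C₀ : ℝ) (hC₀ : ∀ x ∈ Ω, ∀ t ∈ Ico (0 : ℝ) T, ‖G x t‖ ≤ C₀ * ((δ x) ^ (-β) + 1))
    -- a ∈ ∂Ω is a gradient blow-up point:
    -- limsup of |∇u(x,t)| as t → T⁻, x → a equals ∞
    (a : EuclideanSpace ℝ (Fin n)) (ha : a ∈ frontier Ω)
    (hGBU : ∀ K : ℝ, ∀ η > 0, ∃ x ∈ Ω, ∃ t ∈ Ioo (T - η) T,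
      0 < t ∧ dist x a < η ∧ K ≤ ‖G x t‖)
    :
    ∀ K > 0, ∃ η > 0, ∀ x ∈ Ωδ, dist x a < η →
      ∀ t ∈ Ioo (T - η) T, K ≤ ⟪G x t, ν x⟫ := by
  obtain rfl : δ = (infDist · (frontier Ω)) := funext hδ
  obtain ⟨f, U, hU, hf, hf₀, hfΩ, hf_frontier⟩ := hΩc2 a ha
  have hpos : ∀ t ∈ Ioo (T / 2) T, 0 < t := fun t ht => (half_pos hT).trans ht.1
  refine fun K _ => stmt9_general hp hβ hΩo hδ₀ hΩδ (fun x hx => ⟨(hP x hx).1, (hP x hx).2.1⟩)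
    (fun b hb => ⟨(hν1 b hb).1, fun s hs => ((hν1 b hb).2 s hs).1,
      fun s hs => ((hν1 b hb).2 s hs).2⟩) hν2 (half_lt_self hT)
    (hu_cont.mono (prod_mono_right (Icc_subset_Icc_left (half_pos hT).le)))
    (fun t ht b hb => hu_bd b hb t ⟨(hpos t ht).le, ht.2.le⟩)
    (fun t ht => hG2 t ⟨hpos t ht, ht.2.le⟩) (fun t ht => hH t ⟨hpos t ht, ht.2.le⟩)
    (M := M) (fun t ht x hx => ?_) (fun t ht x hx => hC₀ x hx t ⟨(hpos t ht).le, ht.2⟩) ha hU hf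
    (hf₀ a (mem_of_mem_nhds hU)) hfΩ hf_frontier (fun A η hη => ?_) K
  · rw [← hPDE t ⟨hpos t ht, ht.2.le⟩ x hx,
      clmTrace_eq_sum_inner (EuclideanSpace.basisFun (Fin n) ℝ)]
    simpa using hM x hx t (Ioo_subset_Icc_self ht)
  · obtain ⟨x, hx, t, ht, -, hxa, hA⟩ := hGBU A η hη
    exact ⟨x, hx, hxa, t, ht, hA⟩
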